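/- The Riemann Hypothesis holds if and only if, for every compact set K contained in the open strip D := {s ∈ ℂ : 1/2 < Re(s) < 1} having connected complement in ℂ and for every ε > 0, one has liminf_{T→∞} (1/T)·μ{τ ∈ [0,T] : sup_{s∈K} |ζ(s+iτ) − ζ(s)| < ε} > 0. -/

import Mathlib

open MeasureTheory Filter Complex
open scoped ENNReal

/-- The open strip `D = {s : 1/2 < Re s < 1}`. -/
def strip : Set ℂ := {s : ℂ | 1/2 < s.re ∧ s.re < 1}

/-- Lower density of a set of real numbers:
`liminf_{T→∞} (1/T)·μ(S ∩ [0,T])`. -/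
noncomputable def lowerDens (S : Set ℝ) : ℝ :=
  liminf (fun T : ℝ => (volume (S ∩ Set.Icc 0 T)).toReal / T) atTop

/-- `sup_{s ∈ K} |f s|`, valued in `ℝ≥0∞`. -/
noncomputable def supNorm (K : Set ℂ) (f : ℂ → ℂ) : ℝ≥0∞ :=
  ⨆ s ∈ K, (‖f s‖₊ : ℝ≥0∞)

lemma exists_zero_of_not_RH (h : ¬ RiemannHypothesis) : ∃ ρ ∈ strip, riemannZeta ρ = 0 := by
  unfold RiemannHypothesis at h
  push Not at h
  obtain ⟨s, hs, htriv, h1, hre⟩ := h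
  have hlt1 : s.re < 1 := by
    by_contra hc
    exact riemannZeta_ne_zero_of_one_le_re (not_lt.mp hc) hs
  rcases lt_or_gt_of_ne hre with hl | hg
  · set u := 1 - s with hu
    have hure : 1/2 < u.re := by simp [hu]; linarith
    have hs0 : s ≠ 0 := by
      rintro rfl
      rw [riemannZeta_zero] at hs
      norm_num at hs
    have hu1 : u ≠ 1 := by
      intro hc; apply hs0; rw [hu] at hc
      linear_combination -hc
    have hun : ∀ n : ℕ, u ≠ -n := by
      intro n hc
      rw [hc] at hure
      simp at hure
      have : (0:ℝ) ≤ n := by positivity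
      linarith
    have key := riemannZeta_one_sub hun hu1
    have e : 1 - u = s := by rw [hu]; ring
    rw [e, hs] at key
    have hG : Gamma u ≠ 0 := Complex.Gamma_ne_zero hun
    have hpow : (2 * (Real.pi:ℂ)) ^ (-u) ≠ 0 := by
      rw [Complex.cpow_def_of_ne_zero]
      · exact Complex.exp_ne_zero _
      · have := Real.pi_ne_zero
        simp [this]
    have hz : cos (Real.pi * u / 2) = 0 ∨ riemannZeta u = 0 := by
      have := key.symm
      simp only [mul_eq_zero] at this
      rcases this with (((h|h)|h)|h)|h
      · norm_num at h
      · exact absurd h hpow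
      · exact absurd h hG
      · exact Or.inl h
      · exact Or.inr h
    rcases hz with hz | hz
    · exfalso
      rw [Complex.cos_eq_zero_iff] at hz
      obtain ⟨k, hk⟩ := hz
      have hpi : (Real.pi:ℂ) ≠ 0 := by exact_mod_cast Real.pi_ne_zero
      have huk : u = 2 * k + 1 := by
        field_simp at hk
        linear_combination hk
      have hk0 : 0 ≤ k := by
        by_contra hc
        have : k ≤ -1 := by omega
        have h2 : (k:ℝ) ≤ -1 := by exact_mod_cast this
        rw [huk] at hure
        simp at hure
        linarith
      have hk1 : k ≠ 0 := by
        rintro rfl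
        apply hu1; rw [huk]; simp
      obtain ⟨m, hm⟩ : ∃ m : ℕ, k = m + 1 := ⟨(k-1).toNat, by omega⟩
      apply htriv m
      rw [← e, huk, hm]
      push_cast; ring
    · refine ⟨u, ⟨hure, ?_⟩, hz⟩
      by_contra hc
      exact riemannZeta_ne_zero_of_one_le_re (not_lt.mp hc) hz
  · exact ⟨s, ⟨hg, hlt1⟩, hs⟩

lemma zeta_ne_zero_of_RH (h : RiemannHypothesis) {z : ℂ} (hz : 1/2 < z.re) (h1 : z ≠ 1) :
    riemannZeta z ≠ 0 := by
  intro h0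
  have := h z h0 (by
    rintro ⟨n, rfl⟩
    simp at hz
    have : (0:ℝ) ≤ n := by positivity
    linarith) h1
  linarith

/-- (s-1)ζ(s) as an entire function -/
noncomputable def zs : ℂ → ℂ := Function.update (fun z => (z - 1) * riemannZeta z) 1 1

lemma zs_of_ne {z : ℂ} (h : z ≠ 1) : zs z = (z - 1) * riemannZeta z := by
  simp [zs, Function.update_of_ne h]

lemma zs_diff : Differentiable ℂ zs := by
  have hc : ContinuousAt zs 1 := by
    unfold zs
    rw [continuousAt_update_same]
    exact riemannZeta_residue_one
  have hd : DifferentiableOn ℂ zs {1}ᶜ := by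
    intro z hz
    have hz : z ≠ 1 := hz
    have : DifferentiableAt ℂ (fun z => (z - 1) * riemannZeta z) z :=
      (differentiableAt_id.sub_const 1).mul (differentiableAt_riemannZeta hz)
    refine (this.congr_of_eventuallyEq ?_).differentiableWithinAt
    filter_upwards [isOpen_ne.mem_nhds hz] with y hy using zs_of_ne hy
  have := (Complex.differentiableOn_compl_singleton_and_continuousAt_iff
    (s := Set.univ) (c := 1) (f := zs) univ_mem).mp ⟨by rwa [← Set.compl_eq_univ_sdiff], hc⟩
  exact differentiableOn_univ.mp this

lemma zs_ne_zero_of_RH (h : RiemannHypothesis) {z : ℂ} (hz : 1/2 < z.re) : zs z ≠ 0 := by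
  by_cases h1 : z = 1
  · subst h1; simp [zs]
  · rw [zs_of_ne h1]
    exact mul_ne_zero (sub_ne_zero.mpr h1) (zeta_ne_zero_of_RH h hz h1)

/-- iterated differences of x^{-s} -/
noncomputable def dl : ℕ → ℂ → ℝ → ℂ
  | 0, s, x => (x:ℂ)^(-s)
  | k+1, s, x => dl k s x - dl k s (x+1)

lemma dl_hasDerivAt (k : ℕ) : ∀ (s : ℂ) (x : ℝ), 0 < x →
    HasDerivAt (dl k s) (-s * dl k (s+1) x) x := by
  induction k with
  | zero =>
    intro s x hx
    by_cases hs : s = 0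
    · subst hs
      have : dl 0 0 = fun _ => (1:ℂ) := by
        funext y; simp [dl]
      rw [this]; simpa using hasDerivAt_const x (1:ℂ)
    · have h := hasDerivAt_ofReal_cpow_const hx.ne' (r := -s) (neg_ne_zero.mpr hs)
      refine HasDerivAt.congr_deriv (f := dl 0 s) h ?_
      simp only [dl]; congr 2; ring
  | succ k ih =>
    intro s x hx
    have h1 := ih s x hx
    have h2 := (ih s (x+1) (by linarith)).comp_add_const x 1
    have := h1.sub h2
    refine (this.congr_deriv ?_)
    simp only [dl]; ring

lemma dl_diff_s (k : ℕ) : ∀ (x : ℝ), 0 < x → Differentiable ℂ (fun s => dl k s x) := by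
  induction k with
  | zero =>
    intro x hx
    simp only [dl]
    have : (x:ℂ) ≠ 0 := by exact_mod_cast hx.ne'
    intro s
    exact (differentiableAt_id.neg).const_cpow (Or.inl this)
  | succ k ih =>
    intro x hx
    simp only [dl]
    exact (ih x hx).sub (ih (x+1) (by linarith))

lemma dl_bound_triv (k : ℕ) : ∀ (s : ℂ) (x : ℝ), 0 < x → 0 ≤ s.re →
    ‖dl k s x‖ ≤ 2^k * x^(-s.re) := by
  induction k with
  | zero =>
    intro s x hx hs
    simp only [dl]
    rw [Complex.norm_cpow_eq_rpow_re_of_pos hx]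
    simp
  | succ k ih =>
    intro s x hx hs
    simp only [dl]
    have h1 := ih s x hx hs
    have h2 := ih s (x+1) (by linarith) hs
    have h3 : (x+1)^(-s.re) ≤ x^(-s.re) :=
      Real.rpow_le_rpow_of_nonpos hx (by linarith) (by linarith)
    calc _ ≤ ‖dl k s x‖ + ‖dl k s (x+1)‖ := norm_sub_le _ _
      _ ≤ 2^k * x^(-s.re) + 2^k * x^(-s.re) := by gcongr; exact h2.trans (by gcongr)
      _ = _ := by ring

lemma dl_bound (k : ℕ) : ∀ (s : ℂ) (x : ℝ), 0 < x → 0 ≤ s.re →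
    ‖dl k s x‖ ≤ (‖s‖ + k)^k * x^(-s.re - k) := by
  induction k with
  | zero =>
    intro s x hx hs
    simp only [dl]
    rw [Complex.norm_cpow_eq_rpow_re_of_pos hx]
    simp
  | succ k ih =>
    intro s x hx hs
    simp only [dl]
    have hb : ∀ y ∈ Set.Icc x (x+1), ‖-s * dl k (s+1) y‖ ≤
        (‖s‖ + (k+1:ℕ))^(k+1) * x^(-s.re - (k+1:ℕ)) := by
      intro y hy
      have hy0 : 0 < y := lt_of_lt_of_le hx hy.1
      have h := ih (s+1) y hy0 (by simp; linarith)
      rw [norm_mul, norm_neg]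
      have h3 : y^(-(s+1).re - k) ≤ x^(-s.re - (k+1:ℕ)) := by
        have : -(s+1).re - k = -s.re - (k+1:ℕ) := by simp; ring
        rw [this]
        apply Real.rpow_le_rpow_of_nonpos hx hy.1
        push_cast
        have : (0:ℝ) ≤ k := by positivity
        linarith
      have h4 : ‖s+1‖ + k ≤ ‖s‖ + (k+1:ℕ) := by
        have := norm_add_le s 1
        simp at this ⊢; linarith
      calc ‖s‖ * ‖dl k (s+1) y‖ ≤ (‖s‖ + (k+1:ℕ)) * ((‖s‖ + (k+1:ℕ))^k * x^(-s.re - (k+1:ℕ))) := by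
            gcongr
            · have : (0:ℝ) ≤ (k+1:ℕ) := by positivity
              linarith
            · exact h.trans (by gcongr)
        _ = _ := by ring
    have := (convex_Icc x (x+1)).norm_image_sub_le_of_norm_hasDerivWithin_le (f := dl k s)
      (f' := fun y => -s * dl k (s+1) y)
      (fun y hy => (dl_hasDerivAt k s y (lt_of_lt_of_le hx hy.1)).hasDerivWithinAt) hb
      (x := x+1) (y := x) (by constructor <;> linarith) (by constructor <;> linarith)
    simpa using this

lemma alt_step {f : ℕ → ℂ} (hf : Summable f) :
    ∑' n, (-1:ℂ)^n * f n = f 0 / 2 + (1/2) * ∑' n, (-1:ℂ)^n * (f n - f (n+1)) := by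
  have hs : Summable (fun n => (-1:ℂ)^n * f n) := by
    apply Summable.of_norm
    simpa using hf.norm
  have hs1 : Summable (fun n => (-1:ℂ)^n * f (n+1)) := by
    apply Summable.of_norm
    simpa using ((summable_nat_add_iff 1).mpr hf.norm)
  have e : ∑' n, (-1:ℂ)^n * (f n - f (n+1)) =
      ∑' n, (-1:ℂ)^n * f n - ∑' n, (-1:ℂ)^n * f (n+1) := by
    rw [← hs.tsum_sub hs1]; congr 1; funext n; ring
  have e2 : ∑' n, (-1:ℂ)^n * f n = f 0 - ∑' n, (-1:ℂ)^n * f (n+1) := by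
    rw [hs.tsum_eq_zero_add, ← sub_eq_zero]
    have : (fun b : ℕ => (-1:ℂ)^(b+1) * f (b+1)) = fun b => -((-1:ℂ)^b * f (b+1)) := by
      funext b; ring
    rw [this, tsum_neg]; ring
  rw [e]
  linear_combination (1/2) * e2

lemma dl_summable {s : ℂ} (hs : 1 < s.re) (k : ℕ) {x : ℝ} (hx : 0 < x) :
    Summable (fun n : ℕ => dl k s (x + n)) := by
  induction k generalizing x with
  | zero =>
    simp only [dl]
    apply Summable.of_norm
    have h0 : Summable (fun n : ℕ => ((n:ℝ) + x)^(-s.re)) := by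
      have := (Real.summable_one_div_nat_add_rpow x s.re).mpr hs
      refine this.congr ?_
      intro n
      have : (0:ℝ) < n + x := by positivity
      rw [abs_of_pos this, Real.rpow_neg this.le, one_div]
    refine h0.congr ?_
    intro n
    have : (0:ℝ) < x + n := by positivity
    rw [Complex.norm_cpow_eq_rpow_re_of_pos this, neg_re, add_comm]
  | succ k ih =>
    simp only [dl]
    refine (ih hx).sub ?_
    have := ih (x := x + 1) (by linarith)
    refine this.congr ?_
    intro n; congr 1; ring

lemma alt_iter {s : ℂ} (hs : 1 < s.re) (k : ℕ) {x : ℝ} (hx : 0 < x) :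
    ∑' n : ℕ, (-1:ℂ)^n * ((x + n : ℝ):ℂ)^(-s) =
      ∑ j ∈ Finset.range k, (1/2:ℂ)^(j+1) * dl j s x
        + (1/2:ℂ)^k * ∑' n : ℕ, (-1:ℂ)^n * dl k s (x + n) := by
  induction k with
  | zero => simp [dl]
  | succ k ih =>
    rw [ih, alt_step (dl_summable hs k hx), Finset.sum_range_succ]
    have : ∀ n : ℕ, dl k s (x + n) - dl k s (x + (n+1:ℕ)) = dl (k+1) s (x + n) := by
      intro n; simp only [dl]; congr 2; push_cast; ring
    simp only [this]
    simp only [Nat.cast_zero, add_zero]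
    ring

lemma summable_zterm {s : ℂ} (hs : 1 < s.re) : Summable (fun n : ℕ => ((n+1:ℝ):ℂ)^(-s)) := by
  have := dl_summable hs 0 one_pos
  simp only [dl] at this
  refine this.congr ?_
  intro n; congr 2; ring

lemma eta_tsum {s : ℂ} (hs : 1 < s.re) :
    (1 - 2 * (2:ℂ)^(-s)) * riemannZeta s = ∑' n : ℕ, (-1:ℂ)^n * ((n+1:ℝ):ℂ)^(-s) := by
  have hsum := summable_zterm hs
  have hz : riemannZeta s = ∑' n : ℕ, ((n+1:ℝ):ℂ)^(-s) := by
    rw [zeta_eq_tsum_one_div_nat_add_one_cpow hs]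
    congr 1; funext n
    rw [Complex.cpow_neg, one_div]; push_cast; rfl
  set a : ℕ → ℂ := fun n => ((n+1:ℝ):ℂ)^(-s) with ha
  have hse : Summable (fun k => a (2*k)) := hsum.comp_injective (fun x y h => by simpa using h)
  have hso : Summable (fun k => a (2*k+1)) := hsum.comp_injective (fun x y h => by simpa using h)
  have h1 := tsum_even_add_odd hse hso
  have hodd : ∀ k, a (2*k+1) = (2:ℂ)^(-s) * a k := by
    intro k
    simp only [ha]
    have : ((((2*k+1:ℕ):ℝ)+1:ℝ):ℂ) = ((2:ℝ):ℂ) * ((k+1:ℝ):ℂ) := by push_cast; ring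
    rw [this, Complex.mul_cpow_ofReal_nonneg (by norm_num) (by positivity)]
    norm_num
  have h2 : ∑' k, a (2*k+1) = (2:ℂ)^(-s) * ∑' k, a k := by
    simp only [hodd]; rw [tsum_mul_left]
  have h3 := tsum_even_add_odd (f := fun n => (-1:ℂ)^n * a n)
    (by simpa [pow_mul] using hse) (by simpa [pow_mul, pow_succ] using hso.neg)
  have h4 : ∑' k, (-1:ℂ)^(2*k) * a (2*k) = ∑' k, a (2*k) := by simp [pow_mul]
  have h5 : ∑' k, (-1:ℂ)^(2*k+1) * a (2*k+1) = -∑' k, a (2*k+1) := by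
    rw [← tsum_neg]; simp [pow_mul, pow_succ]
  rw [hz, ← h3, h4, h5]
  linear_combination 2 * h2 - h1

/-- the continued alternating expression -/
noncomputable def etaR (k M : ℕ) (s : ℂ) : ℂ :=
  ∑ j ∈ Finset.range k, (1/2:ℂ)^(j+1) * dl j s (M+1)
        + (1/2:ℂ)^k * ∑' n : ℕ, (-1:ℂ)^n * dl k s (M + 1 + n)

lemma term_bound (m M n : ℕ) {s : ℂ} (hs : 0 ≤ s.re) :
    ‖dl (m+2) s (M + 1 + n)‖ ≤ (‖s‖ + (m+2:ℕ))^(m+2) * ((M+1:ℝ)^m)⁻¹ * (1 / ((n:ℝ)+1)^2) := by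
  have hx : (0:ℝ) < M + 1 + n := by positivity
  refine (dl_bound (m+2) s _ hx hs).trans ?_
  have h1 : (M + 1 + n : ℝ)^(-s.re - (m+2:ℕ)) ≤ ((M+1:ℝ)^m)⁻¹ * (1 / ((n:ℝ)+1)^2) := by
    calc (M + 1 + n : ℝ)^(-s.re - (m+2:ℕ)) ≤ (M + 1 + n : ℝ)^(-((m+2:ℕ):ℝ)) := by
          apply Real.rpow_le_rpow_of_exponent_le
          · have : (0:ℝ) ≤ M := by positivity
            have : (0:ℝ) ≤ n := by positivity
            linarith
          · linarith
      _ = ((M + 1 + n : ℝ)^m)⁻¹ * ((M + 1 + n : ℝ)^2)⁻¹ := by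
          rw [Real.rpow_neg hx.le, Real.rpow_natCast, pow_add, mul_inv]
      _ ≤ _ := by
          rw [one_div]
          have : (0:ℝ) ≤ M := by positivity
          have : (0:ℝ) ≤ n := by positivity
          have hA : (M+1:ℝ)^m ≤ (M + 1 + n : ℝ)^m := pow_le_pow_left₀ (by positivity) (by linarith) _
          have hB : ((n:ℝ)+1)^2 ≤ (M + 1 + n : ℝ)^2 := pow_le_pow_left₀ (by positivity) (by linarith) _
          gcongr
  rw [mul_assoc]
  gcongr

lemma summable_sq : Summable (fun n : ℕ => 1 / ((n:ℝ)+1)^2) := by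
  have := (summable_nat_add_iff 1).mpr (Real.summable_one_div_nat_pow.mpr (one_lt_two))
  simpa using this

lemma tsum_sq_le : ∑' n : ℕ, 1 / ((n:ℝ)+1)^2 ≤ 2 := by
  have h := (hasSum_zeta_two)
  have h2 := (hasSum_nat_add_iff' 1).mpr h
  simp only [Nat.cast_add, Nat.cast_one] at h2
  rw [h2.tsum_eq]
  have := Real.pi_lt_d2
  have := Real.pi_pos
  simp
  nlinarith

lemma etaR_diff (m M : ℕ) : DifferentiableOn ℂ (etaR (m+2) M) {s | 0 < s.re} := by
  have hopen : IsOpen {s : ℂ | 0 < s.re} := isOpen_lt continuous_const continuous_re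
  have hM : (0:ℝ) < M + 1 := by positivity
  have hts : DifferentiableOn ℂ (fun s => ∑' n : ℕ, (-1:ℂ)^n * dl (m+2) s (M + 1 + n))
      {s | 0 < s.re} := by
    intro s hs
    have hU : IsOpen ({s : ℂ | 0 < s.re} ∩ Metric.ball 0 (‖s‖+1)) := hopen.inter Metric.isOpen_ball
    have := differentiableOn_tsum_of_summable_norm (U := {s : ℂ | 0 < s.re} ∩ Metric.ball 0 (‖s‖+1))
      (F := fun (n : ℕ) s => (-1:ℂ)^n * dl (m+2) s (M + 1 + n))
      (u := fun n : ℕ => ((‖s‖+1) + (m+2:ℕ))^(m+2) * ((M+1:ℝ)^m)⁻¹ * (1 / ((n:ℝ)+1)^2))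
      (summable_sq.mul_left _) (fun n => by
        have : Differentiable ℂ (fun s => dl (m+2) s (M + 1 + n)) :=
          dl_diff_s (m+2) _ (by positivity)
        exact (this.const_mul _).differentiableOn) hU (fun n w hw => by
          have h := term_bound m M n (s := w) (le_of_lt hw.1)
          have hw2 : ‖w‖ ≤ ‖s‖+1 := by
            have := hw.2; rw [mem_ball_zero_iff] at this; exact this.le
          rw [norm_mul, norm_pow, norm_neg, norm_one, one_pow, one_mul]
          refine h.trans ?_
          gcongr)
    exact (this.differentiableAt (hU.mem_nhds ⟨hs, by simp⟩)).differentiableWithinAt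
  unfold etaR
  refine DifferentiableOn.add ?_ (hts.const_mul _)
  refine DifferentiableOn.fun_sum ?_
  intro j _
  exact ((dl_diff_s j _ hM).const_mul _).differentiableOn

lemma eta_eq (m M : ℕ) {s : ℂ} (hs : 0 < s.re) (h1 : s ≠ 1) :
    (1 - 2 * (2:ℂ)^(-s)) * riemannZeta s =
      ∑ n ∈ Finset.range M, (-1:ℂ)^n * ((n+1:ℝ):ℂ)^(-s) + (-1)^M * etaR (m+2) M s := by
  set G : ℂ → ℂ := fun s => ∑ n ∈ Finset.range M, (-1:ℂ)^n * ((n+1:ℝ):ℂ)^(-s)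
    + (-1)^M * etaR (m+2) M s with hG
  have hopen : IsOpen {s : ℂ | 0 < s.re} := isOpen_lt continuous_const continuous_re
  have hd : DifferentiableOn ℂ G {s : ℂ | 0 < s.re} := by
    refine DifferentiableOn.add ?_ ((etaR_diff m M).const_mul _)
    refine DifferentiableOn.fun_sum ?_
    intro n _
    refine DifferentiableOn.const_mul ?_ _
    have := dl_diff_s 0 ((n:ℝ)+1) (by positivity)
    simp only [dl] at this
    exact this.differentiableOn
  have key : Set.EqOn (fun s => (1 - 2 * (2:ℂ)^(-s)) * zs s) (fun s => (s-1) * G s)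
      {s : ℂ | 0 < s.re} := by
    have hA : AnalyticOnNhd ℂ (fun s => (1 - 2 * (2:ℂ)^(-s)) * zs s) {s : ℂ | 0 < s.re} := by
      apply DifferentiableOn.analyticOnNhd _ hopen
      have : Differentiable ℂ (fun s : ℂ => (2:ℂ)^(-s)) := by
        intro s
        exact (differentiableAt_id.neg).const_cpow (Or.inl (by norm_num))
      exact (((this.const_mul 2).const_sub 1).mul zs_diff).differentiableOn
    have hB : AnalyticOnNhd ℂ (fun s => (s-1) * G s) {s : ℂ | 0 < s.re} := by
      apply DifferentiableOn.analyticOnNhd _ hopen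
      exact ((differentiable_id.sub_const 1).differentiableOn).mul hd
    refine hA.eqOn_of_preconnected_of_eventuallyEq hB
      (convex_halfSpace_re_gt 0).isPreconnected (z₀ := 2) (by simp) ?_
    have hn : {s : ℂ | 1 < s.re} ∈ nhds (2:ℂ) :=
      (isOpen_lt continuous_const continuous_re).mem_nhds (by simp)
    filter_upwards [hn] with z hz
    have hz : 1 < z.re := hz
    have hz1 : z ≠ 1 := by rintro rfl; simp at hz
    rw [zs_of_ne hz1, mul_left_comm, eta_tsum hz]
    congr 1
    have hsum : Summable (fun n : ℕ => (-1:ℂ)^n * ((n+1:ℝ):ℂ)^(-z)) := by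
      apply Summable.of_norm
      simpa using (summable_zterm hz).norm
    rw [← hsum.sum_add_tsum_nat_add M]
    simp only [hG, etaR]
    have hx : (0:ℝ) < M + 1 := by positivity
    rw [← alt_iter hz (m+2) hx, ← tsum_mul_left]
    congr 1
    congr 1; funext n
    have : (((n + M : ℕ):ℝ) + 1) = (M:ℝ) + 1 + n := by push_cast; ring
    rw [this, pow_add]; ring
  have := key hs
  simp only [zs_of_ne h1] at this
  have hne : s - 1 ≠ 0 := sub_ne_zero.mpr h1
  apply mul_left_cancel₀ hne
  rw [← this]; ring

lemma eta_approx (m M : ℕ) {s : ℂ} (hs : 0 < s.re) (h1 : s ≠ 1) :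
    ‖(1 - 2 * (2:ℂ)^(-s)) * riemannZeta s -
      ∑ n ∈ Finset.range M, (-1:ℂ)^n * ((n+1:ℝ):ℂ)^(-s)‖ ≤
      (m+2:ℕ) * (M+1:ℝ)^(-s.re) + 2 * (‖s‖ + (m+2:ℕ))^(m+2) * ((M+1:ℝ)^m)⁻¹ := by
  rw [eta_eq m M hs h1, add_sub_cancel_left, norm_mul, norm_pow, norm_neg, norm_one, one_pow,
    one_mul]
  unfold etaR
  refine (norm_add_le _ _).trans (add_le_add ?_ ?_)
  · refine (norm_sum_le _ _).trans ?_
    have : ∀ j ∈ Finset.range (m+2), ‖(1/2:ℂ)^(j+1) * dl j s (M+1)‖ ≤ (M+1:ℝ)^(-s.re) := by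
      intro j _
      have hb := dl_bound_triv j s (M+1) (by positivity) hs.le
      rw [norm_mul, norm_pow]
      have h0 : (0:ℝ) ≤ (M+1:ℝ)^(-s.re) := by positivity
      have e : ‖(1/2:ℂ)‖ = 1/2 := by simp
      rw [e]
      calc (1/2:ℝ)^(j+1) * ‖dl j s (M+1)‖ ≤ (1/2:ℝ)^(j+1) * (2^j * (M+1:ℝ)^(-s.re)) := by gcongr
        _ = (1/2) * ((1/2)^j * 2^j) * (M+1:ℝ)^(-s.re) := by ring
        _ = (1/2) * (M+1:ℝ)^(-s.re) := by rw [← mul_pow]; norm_num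
        _ ≤ _ := by linarith
    refine (Finset.sum_le_sum this).trans ?_
    simp
  · rw [norm_mul, norm_pow]
    have e : ‖(1/2:ℂ)‖ = 1/2 := by simp
    rw [e]
    have hb : ‖∑' n : ℕ, (-1:ℂ)^n * dl (m+2) s (M + 1 + n)‖ ≤
        (‖s‖ + (m+2:ℕ))^(m+2) * ((M+1:ℝ)^m)⁻¹ * 2 := by
      have hs2 := summable_sq.mul_left ((‖s‖ + (m+2:ℕ))^(m+2) * ((M+1:ℝ)^m)⁻¹)
      refine (tsum_of_norm_bounded hs2.hasSum ?_).trans ?_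
      · intro n
        rw [norm_mul, norm_pow, norm_neg, norm_one, one_pow, one_mul]
        exact term_bound m M n hs.le
      · rw [tsum_mul_left]
        gcongr
        exact tsum_sq_le
    have h2 : (1/2:ℝ)^(m+2) ≤ 1 := pow_le_one₀ (by norm_num) (by norm_num)
    calc _ ≤ 1 * ((‖s‖ + (m+2:ℕ))^(m+2) * ((M+1:ℝ)^m)⁻¹ * 2) := by gcongr
      _ = _ := by ring

lemma ms_general {ι : Type*} (F : Finset ι) (l : ι → ℝ) (hl : Set.InjOn l F) (c : ι → ℂ)
    (T : ℝ) :
    |(∫ τ in (0:ℝ)..T, ‖∑ i ∈ F, c i * cexp (-(l i * τ) * I)‖^2) - T * ∑ i ∈ F, ‖c i‖^2| ≤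
      ∑ i ∈ F, ∑ j ∈ F, ‖c i‖ * ‖c j‖ * (2 * |l i - l j|⁻¹) := by
  classical
  have e1 : ((∫ τ in (0:ℝ)..T, ‖∑ i ∈ F, c i * cexp (-(l i * τ) * I)‖^2 : ℝ) : ℂ) =
      ∑ i ∈ F, ∑ j ∈ F, c i * (starRingEnd ℂ) (c j) *
        ∫ τ in (0:ℝ)..T, cexp (((l j - l i) * I) * τ) := by
    rw [← intervalIntegral.integral_ofReal]
    have : ∀ τ : ℝ, ((‖∑ i ∈ F, c i * cexp (-(l i * τ) * I)‖^2 : ℝ) : ℂ) =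
        ∑ i ∈ F, ∑ j ∈ F, c i * (starRingEnd ℂ) (c j) * cexp (((l j - l i) * I) * τ) := by
      intro τ
      push_cast
      rw [← Complex.mul_conj', map_sum, Finset.sum_mul_sum]
      refine Finset.sum_congr rfl fun i _ => Finset.sum_congr rfl fun j _ => ?_
      rw [map_mul, ← Complex.exp_conj]
      have : cexp ((((l j : ℂ) - l i) * I) * τ) = cexp (-(l i * τ) * I) *
          cexp ((starRingEnd ℂ) (-(l j * τ) * I)) := by
        rw [← Complex.exp_add]; congr 1
        simp; ring
      rw [this]; ring
    simp only [this]
    rw [intervalIntegral.integral_finsetSum]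
    · refine Finset.sum_congr rfl fun i _ => ?_
      rw [intervalIntegral.integral_finsetSum]
      · refine Finset.sum_congr rfl fun j _ => ?_
        rw [intervalIntegral.integral_const_mul]
      · intro j _
        apply Continuous.intervalIntegrable; fun_prop
    · intro j _
      apply Continuous.intervalIntegrable; fun_prop
  have e2 : ((T * ∑ i ∈ F, ‖c i‖^2 : ℝ) : ℂ) =
      ∑ i ∈ F, ∑ j ∈ F, if i = j then c i * (starRingEnd ℂ) (c j) * T else 0 := by
    push_cast
    rw [Finset.mul_sum]
    refine Finset.sum_congr rfl fun i hi => ?_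
    rw [Finset.sum_ite_eq]
    simp [hi, Complex.mul_conj', mul_comm]
  have e3 : |(∫ τ in (0:ℝ)..T, ‖∑ i ∈ F, c i * cexp (-(l i * τ) * I)‖^2) - T * ∑ i ∈ F, ‖c i‖^2|
      = ‖((∫ τ in (0:ℝ)..T, ‖∑ i ∈ F, c i * cexp (-(l i * τ) * I)‖^2 : ℝ) : ℂ) -
        ((T * ∑ i ∈ F, ‖c i‖^2 : ℝ) : ℂ)‖ := by
    rw [← Complex.ofReal_sub, Complex.norm_real, Real.norm_eq_abs]
  rw [e3, e1, e2, ← Finset.sum_sub_distrib]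
  refine (norm_sum_le _ _).trans (Finset.sum_le_sum fun i hi => ?_)
  rw [← Finset.sum_sub_distrib]
  refine (norm_sum_le _ _).trans (Finset.sum_le_sum fun j hj => ?_)
  by_cases hij : i = j
  · subst hij; simp
  · rw [if_neg hij, sub_zero, norm_mul, norm_mul, RCLike.norm_conj]
    gcongr
    have hne : l i ≠ l j := fun h => hij (hl hi hj h)
    have hc : ((l j - l i : ℂ) * I) ≠ 0 := by
      refine mul_ne_zero ?_ I_ne_zero
      rw [sub_ne_zero]; exact_mod_cast hne.symm
    rw [integral_exp_mul_complex hc, norm_div]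
    have hn : ‖((l j - l i : ℂ) * I)‖ = |l i - l j| := by
      rw [norm_mul, norm_I, mul_one, ← Complex.ofReal_sub, Complex.norm_real, Real.norm_eq_abs,
        abs_sub_comm]
    rw [hn, div_eq_mul_inv]
    gcongr
    refine (norm_sub_le _ _).trans ?_
    have : ∀ x : ℝ, ‖cexp ((l j - l i : ℂ) * I * x)‖ = 1 := by
      intro x
      have : ((l j - l i : ℂ) * I * x) = (((l j - l i) * x : ℝ) : ℂ) * I := by push_cast; ring
      rw [this, Complex.norm_exp_ofReal_mul_I]
    rw [this, this]; norm_num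

/-- asymptotic mean square for fixed polynomial -/
lemma ms_limit {ι : Type*} (F : Finset ι) (l : ι → ℝ) (hl : Set.InjOn l F) (B : ℝ)
    {ε : ℝ} (hε : 0 < ε) : ∃ T0 > 0, ∀ T ≥ T0, ∀ c : ι → ℂ, (∀ i ∈ F, ‖c i‖ ≤ B) →
    |(∫ τ in (0:ℝ)..T, ‖∑ i ∈ F, c i * cexp (-(l i * τ) * I)‖^2) - T * ∑ i ∈ F, ‖c i‖^2| ≤
      ε * T := by
  set A := ∑ i ∈ F, ∑ j ∈ F, B * B * (2 * |l i - l j|⁻¹) with hA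
  have hA0 : 0 ≤ A := by
    refine Finset.sum_nonneg fun i _ => Finset.sum_nonneg fun j _ => ?_
    have := mul_self_nonneg B
    positivity
  refine ⟨A / ε + 1, by positivity, fun T hT c hc => ?_⟩
  refine (ms_general F l hl c T).trans ?_
  calc _ ≤ A := by
        refine Finset.sum_le_sum fun i hi => Finset.sum_le_sum fun j hj => ?_
        have := hc i hi
        have := hc j hj
        have : 0 ≤ B := (norm_nonneg _).trans (hc i hi)
        gcongr
    _ = ε * (A / ε) := by field_simp
    _ ≤ ε * T := by gcongr; linarith

/-- harmonic sum -/
noncomputable def Hm (N : ℕ) : ℝ := ∑ k ∈ Finset.range N, ((k:ℝ))⁻¹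

lemma Hm_nonneg (N : ℕ) : 0 ≤ Hm N := Finset.sum_nonneg fun _ _ => by positivity

lemma Hm_mono : Monotone Hm := by
  intro a b h
  exact Finset.sum_le_sum_of_subset_of_nonneg (by simpa using h) fun _ _ _ => by positivity

lemma Hm_le (N : ℕ) (hN : 1 ≤ N) : Hm N ≤ 1 + Real.log N := by
  have h := harmonic_le_one_add_log N
  refine le_trans ?_ h
  unfold harmonic Hm
  push_cast
  obtain ⟨m, rfl⟩ : ∃ m, N = m + 1 := ⟨N - 1, by omega⟩
  rw [Finset.sum_range_succ', Finset.sum_range_succ]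
  simp
  positivity

lemma sum_rpow_le {β : ℝ} (hβ : β ≤ 1) {N : ℕ} :
    ∑ n ∈ Finset.Ico 1 N, (n:ℝ)^(-β) ≤ (N:ℝ)^(1-β) * Hm N := by
  unfold Hm
  rw [Finset.mul_sum]
  refine le_trans (Finset.sum_le_sum (g := fun n : ℕ => (N:ℝ)^(1-β) * (n:ℝ)⁻¹) ?_) ?_
  · intro n hn
    rw [Finset.mem_Ico] at hn
    have hn0 : (0:ℝ) < n := by exact_mod_cast hn.1
    have hnN : (n:ℝ) ≤ N := by exact_mod_cast hn.2.le
    have : (n:ℝ)^(-β) = (n:ℝ)^(1-β) * (n:ℝ)⁻¹ := by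
      rw [← Real.rpow_neg_one, ← Real.rpow_add hn0]; congr 1; ring
    rw [this]
    gcongr
  · refine Finset.sum_le_sum_of_subset_of_nonneg ?_ fun _ _ _ => by positivity
    intro n hn
    simp at hn ⊢; exact hn.2

lemma sum_inv_dist_le {n N : ℕ} (hn : n < N) :
    ∑ m ∈ Finset.Ico 1 N, |(n:ℝ) - m|⁻¹ ≤ 2 * Hm N := by
  have h1 : ∑ m ∈ Finset.Ico 1 N, |(n:ℝ) - m|⁻¹ ≤ ∑ m ∈ Finset.range N, |(n:ℝ) - m|⁻¹ := by
    refine Finset.sum_le_sum_of_subset_of_nonneg ?_ fun _ _ _ => by positivity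
    intro n hn
    simp at hn ⊢; exact hn.2
  refine h1.trans ?_
  rw [← Finset.sum_range_add_sum_Ico _ (Nat.le_of_lt hn), two_mul]
  refine add_le_add ?_ ?_
  · have : ∑ m ∈ Finset.range n, |(n:ℝ) - m|⁻¹ = ∑ m ∈ Finset.range n, ((m:ℝ)+1)⁻¹ := by
      rw [← Finset.sum_range_reflect]
      refine Finset.sum_congr rfl fun j hj => ?_
      rw [Finset.mem_range] at hj
      have : ((n - 1 - j : ℕ) : ℝ) = n - 1 - j := by
        rw [Nat.cast_sub (by omega), Nat.cast_sub (by omega)]; simp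
      rw [this]
      congr 1
      rw [abs_of_pos] <;> [ring; skip]
      have : (0:ℝ) ≤ j := by positivity
      linarith
    rw [this]
    have h2 : ∑ m ∈ Finset.range n, ((m:ℝ)+1)⁻¹ = Hm (n+1) := by
      unfold Hm
      rw [Finset.sum_range_succ']; simp
    rw [h2]
    exact Hm_mono hn
  · rw [Finset.sum_Ico_eq_sum_range]
    have : ∑ k ∈ Finset.range (N - n), |(n:ℝ) - (n + k : ℕ)|⁻¹ = Hm (N - n) := by
      unfold Hm
      refine Finset.sum_congr rfl fun j _ => ?_
      push_cast
      rw [sub_add_cancel_left, abs_neg, abs_of_nonneg (by positivity)]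
    rw [this]
    exact Hm_mono (Nat.sub_le _ _)

lemma pair_bound {a : ℝ} (ha : 1/2 < a) (ha1 : a < 1) {m n : ℕ} (hm : 1 ≤ m) (hn : 1 ≤ n) :
    (n:ℝ)^(-a) * (m:ℝ)^(-a) * (2 * |Real.log n - Real.log m|⁻¹) ≤
      2 * ((n:ℝ)^(-a) * (m:ℝ)^(-a)) + 2 * ((n:ℝ)^(-(2*a-1)) * |(n:ℝ) - m|⁻¹) := by
  -- core inequality for x < y
  have core : ∀ x y : ℝ, 0 < x → x < y → x^(-a) * y^(-a) * |Real.log y - Real.log x|⁻¹ ≤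
      x^(-a) * y^(-a) + y^(-(2*a-1)) * |y - x|⁻¹ := by
    intro x y hx hxy
    have hy : 0 < y := hx.trans hxy
    have hlog : (y - x) / y ≤ Real.log y - Real.log x := by
      have := Real.log_le_sub_one_of_pos (show 0 < x / y by positivity)
      rw [Real.log_div hx.ne' hy.ne'] at this
      have e : (y-x)/y = 1 - x/y := by field_simp
      rw [e]; linarith
    have hpos : 0 < (y-x)/y := div_pos (by linarith) hy
    have h1 : |Real.log y - Real.log x|⁻¹ ≤ 1 + x * (y-x)⁻¹ := by
      rw [abs_of_pos (hpos.trans_le hlog)]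
      calc _ ≤ ((y-x)/y)⁻¹ := by gcongr
        _ = _ := by
          have : y - x ≠ 0 := by linarith
          field_simp; ring
    have hyx : 0 < y - x := by linarith
    calc _ ≤ x^(-a) * y^(-a) * (1 + x * (y-x)⁻¹) := by gcongr
      _ = x^(-a) * y^(-a) + (x^(-a) * x) * y^(-a) * (y-x)⁻¹ := by ring
      _ ≤ x^(-a) * y^(-a) + y^(-(2*a-1)) * (y-x)⁻¹ := by
        gcongr
        have e1 : x^(-a) * x = x^(1-a) := by
          conv_lhs => rw [← Real.rpow_one x]
          rw [← Real.rpow_mul hx.le, one_mul, ← Real.rpow_add hx]; congr 1; ring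
        have e2 : y^(-(2*a-1)) = y^(1-a) * y^(-a) := by
          rw [← Real.rpow_add hy]; congr 1; ring
        rw [e1, e2]
        gcongr
      _ = _ := by rw [abs_of_pos hyx]
  have hm0 : (0:ℝ) < m := by exact_mod_cast hm
  have hn0 : (0:ℝ) < n := by exact_mod_cast hn
  rcases lt_trichotomy (m:ℝ) n with h | h | h
  · have := core m n hm0 h
    nlinarith [this]
  · rw [h]; simp; positivity
  · have := core n m hn0 h
    have h2 : (m:ℝ)^(-(2*a-1)) ≤ (n:ℝ)^(-(2*a-1)) :=
      Real.rpow_le_rpow_of_nonpos hn0 h.le (by linarith)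
    have h3 : (m:ℝ)^(-(2*a-1)) * |(m:ℝ) - n|⁻¹ ≤ (n:ℝ)^(-(2*a-1)) * |(m:ℝ) - n|⁻¹ := by gcongr
    rw [abs_sub_comm (Real.log n), abs_sub_comm (n:ℝ)]
    nlinarith [this, h3]

lemma off_bound {a : ℝ} (ha : 1/2 < a) (ha1 : a < 1) {N : ℕ} (F : Finset ℕ)
    (hF : F ⊆ Finset.Ico 1 N) (c : ℕ → ℂ) (hc : ∀ n ∈ F, ‖c n‖ ≤ (n:ℝ)^(-a)) :
    ∑ i ∈ F, ∑ j ∈ F, ‖c i‖ * ‖c j‖ * (2 * |Real.log i - Real.log j|⁻¹) ≤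
      6 * (N:ℝ)^(2-2*a) * (Hm N)^2 := by
  have step1 : ∑ i ∈ F, ∑ j ∈ F, ‖c i‖ * ‖c j‖ * (2 * |Real.log i - Real.log j|⁻¹) ≤
      ∑ i ∈ Finset.Ico 1 N, ∑ j ∈ Finset.Ico 1 N,
        (2 * ((i:ℝ)^(-a) * (j:ℝ)^(-a)) + 2 * ((i:ℝ)^(-(2*a-1)) * |(i:ℝ) - j|⁻¹)) := by
    refine le_trans (Finset.sum_le_sum (g := fun i : ℕ => ∑ j ∈ Finset.Ico 1 N,
        (2 * ((i:ℝ)^(-a) * (j:ℝ)^(-a)) + 2 * ((i:ℝ)^(-(2*a-1)) * |(i:ℝ) - j|⁻¹))) ?_) ?_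
    · intro i hi
      refine le_trans (Finset.sum_le_sum (g := fun j : ℕ =>
        (2 * ((i:ℝ)^(-a) * (j:ℝ)^(-a)) + 2 * ((i:ℝ)^(-(2*a-1)) * |(i:ℝ) - j|⁻¹))) ?_) ?_
      · intro j hj
        have h1 := hc i hi
        have h2 := hc j hj
        have hi' := Finset.mem_Ico.mp (hF hi)
        have hj' := Finset.mem_Ico.mp (hF hj)
        refine le_trans ?_ (pair_bound ha ha1 hj'.1 hi'.1)
        gcongr
      · exact Finset.sum_le_sum_of_subset_of_nonneg hF fun _ _ _ => by positivity
    · exact Finset.sum_le_sum_of_subset_of_nonneg hF fun _ _ _ => by positivity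
  refine step1.trans ?_
  simp only [Finset.sum_add_distrib, ← Finset.mul_sum]
  have hH := Hm_nonneg N
  have hN : (N:ℝ)^(2-2*a) = (N:ℝ)^(1-a) * (N:ℝ)^(1-a) := by
    rcases Nat.eq_zero_or_pos N with h | h
    · subst h
      simp
      rw [Real.zero_rpow (by linarith), Real.zero_rpow (by linarith)]; simp
    · rw [← Real.rpow_add (by exact_mod_cast h)]; congr 1; ring
  have hA : ∑ i ∈ Finset.Ico 1 N, (i:ℝ)^(-a) * ∑ j ∈ Finset.Ico 1 N, (j:ℝ)^(-a) ≤
      (N:ℝ)^(2-2*a) * (Hm N)^2 := by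
    rw [← Finset.sum_mul]
    have h := sum_rpow_le (β := a) ha1.le (N := N)
    have h0 : 0 ≤ ∑ n ∈ Finset.Ico 1 N, (n:ℝ)^(-a) := Finset.sum_nonneg fun _ _ => by positivity
    calc _ ≤ ((N:ℝ)^(1-a) * Hm N) * ((N:ℝ)^(1-a) * Hm N) := by gcongr
      _ = _ := by rw [hN]; ring
  have hB : ∑ i ∈ Finset.Ico 1 N, (i:ℝ)^(-(2*a-1)) * ∑ j ∈ Finset.Ico 1 N, |(i:ℝ) - j|⁻¹ ≤
      2 * ((N:ℝ)^(2-2*a) * (Hm N)^2) := by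
    calc _ ≤ ∑ i ∈ Finset.Ico 1 N, (i:ℝ)^(-(2*a-1)) * (2 * Hm N) := by
          refine Finset.sum_le_sum fun i hi => ?_
          have := sum_inv_dist_le (Finset.mem_Ico.mp hi).2
          gcongr
      _ = (∑ i ∈ Finset.Ico 1 N, (i:ℝ)^(-(2*a-1))) * (2 * Hm N) := by rw [Finset.sum_mul]
      _ ≤ ((N:ℝ)^(1-(2*a-1)) * Hm N) * (2 * Hm N) := by
          gcongr
          exact sum_rpow_le (by linarith)
      _ = _ := by
          have : 1 - (2*a-1) = 2 - 2*a := by ring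
          rw [this]; ring
  nlinarith [hA, hB]

lemma tail_small {a : ℝ} (ha : 1/2 < a) {δ : ℝ} (hδ : 0 < δ) : ∃ N0 : ℕ, 1 ≤ N0 ∧
    ∀ F : Finset ℕ, (∀ n ∈ F, N0 ≤ n) → ∑ n ∈ F, (n:ℝ)^(-(2*a)) ≤ δ := by
  have hs : Summable (fun n : ℕ => (n:ℝ)^(-(2*a))) := Real.summable_nat_rpow.mpr (by linarith)
  obtain ⟨s, hs⟩ := summable_iff_vanishing_norm.mp hs δ hδ
  refine ⟨s.sup id + 1, by omega, fun F hF => ?_⟩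
  have := hs F (by
    rw [Finset.disjoint_left]
    intro n hn hn'
    have h1 := hF n hn
    have h2 : n ≤ s.sup id := Finset.le_sup (f := id) hn'
    omega)
  exact (le_abs_self _).trans this.le

/-- Mean-square bound. -/
def MS (S : Set ℂ) (g : ℂ → ℂ) (δ : ℝ) : Prop :=
  ∃ T0 > 0, ∀ T ≥ T0, ∀ s ∈ S, ∫ τ in (0:ℝ)..T, ‖g (s + τ * I)‖^2 ≤ δ * T

/-- continuity on vertical lines -/
def VC (S : Set ℂ) (g : ℂ → ℂ) : Prop := ∀ s ∈ S, Continuous fun τ : ℝ => g (s + τ * I)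

lemma VC.add {S g h} (hg : VC S g) (hh : VC S h) : VC S (fun s => g s + h s) :=
  fun s hs => (hg s hs).add (hh s hs)
lemma VC.sub {S g h} (hg : VC S g) (hh : VC S h) : VC S (fun s => g s - h s) :=
  fun s hs => (hg s hs).sub (hh s hs)
lemma VC.mul {S g h} (hg : VC S g) (hh : VC S h) : VC S (fun s => g s * h s) :=
  fun s hs => (hg s hs).mul (hh s hs)
lemma VC.of_cont {S g} (hg : Continuous g) : VC S g := fun s _ => hg.comp (by fun_prop)

lemma VC.pow {S} {n : ℕ} (hn : 1 ≤ n) : VC S (fun s => (n:ℂ)^(-s)) := by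
  apply VC.of_cont
  have : (n:ℂ) ≠ 0 := by exact_mod_cast (by omega)
  exact continuous_iff_continuousAt.mpr fun s => (continuousAt_const_cpow this).comp continuous_neg.continuousAt

lemma VC.sum {S} {ι} (F : Finset ι) (g : ι → ℂ → ℂ) (h : ∀ i ∈ F, VC S (g i)) :
    VC S (fun s => ∑ i ∈ F, g i s) := fun s hs => continuous_finsetSum _ fun i hi => h i hi s hs

lemma VC.poly {S} (F : Finset ℕ) (hF : ∀ n ∈ F, 1 ≤ n) (c : ℕ → ℂ) :
    VC S (fun s => ∑ n ∈ F, c n * (n:ℂ)^(-s)) :=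
  VC.sum _ _ fun n hn => (VC.of_cont continuous_const).mul (VC.pow (hF n hn))

lemma MS.mono {S g δ δ'} (h : MS S g δ) (hd : δ ≤ δ') : MS S g δ' := by
  obtain ⟨T0, h0, h⟩ := h
  exact ⟨T0, h0, fun T hT s hs => (h T hT s hs).trans (by
    have : 0 < T := lt_of_lt_of_le h0 hT
    gcongr)⟩

lemma VC.ii {S g} (hg : VC S g) {s} (hs : s ∈ S) (a b : ℝ) :
    IntervalIntegrable (fun τ : ℝ => ‖g (s + τ * I)‖^2) volume a b := by
  apply Continuous.intervalIntegrable
  exact ((hg s hs).norm).pow 2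

lemma MS.add {S g h δ δ'} (hg : VC S g) (hh : VC S h) (h1 : MS S g δ) (h2 : MS S h δ') :
    MS S (fun s => g s + h s) (2*δ+2*δ') := by
  obtain ⟨T0, h0, h1⟩ := h1
  obtain ⟨T0', h0', h2⟩ := h2
  refine ⟨max T0 T0', lt_max_of_lt_left h0, fun T hT s hs => ?_⟩
  have hT1 := h1 T ((le_max_left _ _).trans hT) s hs
  have hT2 := h2 T ((le_max_right _ _).trans hT) s hs
  have hT0 : 0 ≤ T := (h0.trans_le ((le_max_left _ _).trans hT)).le
  have := intervalIntegral.integral_mono_on hT0 ((hg.add hh).ii hs 0 T)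
    (((hg.ii hs 0 T).const_mul 2).add ((hh.ii hs 0 T).const_mul 2)) (fun τ _ => by
      have h1 := norm_add_le (g (s + τ * I)) (h (s + τ * I))
      have h2 := norm_nonneg (g (s + τ * I) + h (s + τ * I))
      have h3 := sq_nonneg (‖g (s + τ * I)‖ - ‖h (s + τ * I)‖)
      show _ ≤ 2 * ‖g (s + τ * I)‖^2 + 2 * ‖h (s + τ * I)‖^2
      nlinarith)
  refine this.trans ?_
  rw [intervalIntegral.integral_add ((hg.ii hs 0 T).const_mul 2) ((hh.ii hs 0 T).const_mul 2),
    intervalIntegral.integral_const_mul, intervalIntegral.integral_const_mul]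
  linarith

lemma MS.dom {S g h δ} {B : ℝ} (hg : VC S g) (hh : VC S h)
    (hb : ∀ s ∈ S, ∀ τ : ℝ, ‖h (s + τ * I)‖ ≤ B * ‖g (s + τ * I)‖) (h1 : MS S g δ) :
    MS S h (B^2 * δ) := by
  obtain ⟨T0, h0, h1⟩ := h1
  refine ⟨T0, h0, fun T hT s hs => ?_⟩
  have hT0 : 0 ≤ T := (h0.trans_le hT).le
  have := intervalIntegral.integral_mono_on hT0 (hh.ii hs 0 T)
    ((hg.ii hs 0 T).const_mul (B^2)) (fun τ _ => by
      have := hb s hs τ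
      have h2 := norm_nonneg (h (s + τ * I))
      rw [← mul_pow]
      gcongr)
  refine this.trans ?_
  rw [intervalIntegral.integral_const_mul, mul_assoc]
  have := h1 T hT s hs
  gcongr

lemma cpow_line {n : ℕ} (hn : 1 ≤ n) (s : ℂ) (τ : ℝ) :
    (n:ℂ)^(-(s + τ * I)) = (n:ℂ)^(-s) * cexp (-(Real.log n * τ) * I) := by
  have h0 : (n:ℂ) ≠ 0 := by exact_mod_cast (by omega)
  rw [neg_add, Complex.cpow_add _ _ h0]
  congr 1
  rw [Complex.cpow_def_of_ne_zero h0, ← Complex.natCast_log]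
  congr 1; ring

lemma norm_npow {n : ℕ} (hn : 1 ≤ n) (s : ℂ) : ‖(n:ℂ)^(-s)‖ = (n:ℝ)^(-s.re) := by
  rw [Complex.norm_natCast_cpow_of_pos (by omega)]; simp

lemma log_inj : Set.InjOn (fun n : ℕ => Real.log n) {n | 1 ≤ n} := by
  intro a ha b hb h
  have := Real.log_injOn_pos (show (a:ℝ) ∈ Set.Ioi 0 from by simpa using Nat.lt_of_lt_of_le Nat.zero_lt_one ha)
    (show (b:ℝ) ∈ Set.Ioi 0 from by simpa using Nat.lt_of_lt_of_le Nat.zero_lt_one hb) h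
  exact_mod_cast this

lemma MS.poly {S : Set ℂ} {a : ℝ} (ha : 0 ≤ a) (hS : ∀ s ∈ S, a ≤ s.re) (F : Finset ℕ)
    (hF : ∀ n ∈ F, 1 ≤ n) (c : ℕ → ℂ) {ε : ℝ} (hε : 0 < ε) :
    MS S (fun s => ∑ n ∈ F, c n * (n:ℂ)^(-s)) (∑ n ∈ F, ‖c n‖^2 * (n:ℝ)^(-(2*a)) + ε) := by
  obtain ⟨T0, h0, h⟩ := ms_limit F (fun n : ℕ => Real.log n) (log_inj.mono fun n hn => hF n hn)
    (∑ n ∈ F, ‖c n‖) hε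
  refine ⟨T0, h0, fun T hT s hs => ?_⟩
  have hb : ∀ n ∈ F, ‖(n:ℂ)^(-s)‖ ≤ (n:ℝ)^(-a) := fun n hn => by
    rw [norm_npow (hF n hn)]
    have : (1:ℝ) ≤ n := by exact_mod_cast hF n hn
    exact Real.rpow_le_rpow_of_exponent_le this (by linarith [hS s hs])
  have h1 := h T hT (fun n => c n * (n:ℂ)^(-s)) (fun n hn => by
    rw [norm_mul]
    have h2 : ‖(n:ℂ)^(-s)‖ ≤ 1 := (hb n hn).trans (by
      have : (1:ℝ) ≤ n := by exact_mod_cast hF n hn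
      exact Real.rpow_le_one_of_one_le_of_nonpos this (by linarith))
    have h3 := Finset.single_le_sum (f := fun n => ‖c n‖) (fun i _ => norm_nonneg _) hn
    have h4 := norm_nonneg (c n)
    nlinarith)
  have e : ∀ τ : ℝ, ∑ n ∈ F, c n * (n:ℂ)^(-(s + τ * I)) =
      ∑ n ∈ F, c n * (n:ℂ)^(-s) * cexp (-(Real.log n * τ) * I) := fun τ =>
    Finset.sum_congr rfl fun n hn => by rw [cpow_line (hF n hn)]; ring
  simp only [e]
  have h2 := (abs_le.mp h1).2
  have h3 : ∑ n ∈ F, ‖c n * (n:ℂ)^(-s)‖^2 ≤ ∑ n ∈ F, ‖c n‖^2 * (n:ℝ)^(-(2*a)) :=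
    Finset.sum_le_sum fun n hn => by
      rw [norm_mul, mul_pow]
      gcongr
      have : (n:ℝ)^(-(2*a)) = ((n:ℝ)^(-a))^2 := by
        rw [← Real.rpow_natCast, ← Real.rpow_mul (by positivity)]; congr 1; push_cast; ring
      rw [this]
      have := hb n hn
      gcongr
  have hT0 : 0 ≤ T := (h0.trans_le hT).le
  have h4 := mul_le_mul_of_nonneg_left h3 hT0
  linarith

/-- mean-square approximable by Dirichlet polynomials -/
def MSA (S : Set ℂ) (G : ℂ → ℂ) (c : ℕ → ℂ) : Prop :=
  ∀ δ > 0, ∃ N0 : ℕ, ∀ N ≥ N0, MS S (fun s => G s - ∑ n ∈ Finset.Ico 1 N, c n * (n:ℂ)^(-s)) δ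

/-- the shifted coefficients -/
def shiftc (p : ℕ) (α : ℂ) (c : ℕ → ℂ) (n : ℕ) : ℂ := c n - if p ∣ n then α * c (n / p) else 0

lemma shift_id {p : ℕ} (hp : 1 < p) (α : ℂ) (c : ℕ → ℂ) (N : ℕ) (s : ℂ) :
    ∑ n ∈ Finset.Ico 1 N, shiftc p α c n * (n:ℂ)^(-s) =
      (1 - α * (p:ℂ)^(-s)) * ∑ n ∈ Finset.Ico 1 N, c n * (n:ℂ)^(-s) +
      ∑ n ∈ (Finset.Ico N (p * N)).filter (fun n => p ∣ n), (α * c (n / p)) * (n:ℂ)^(-s) := by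
  have hsub : ∑ n ∈ (Finset.Ico 1 (p*N)).filter (fun n => p ∣ n), (α * c (n / p)) * (n:ℂ)^(-s) =
      α * (p:ℂ)^(-s) * ∑ n ∈ Finset.Ico 1 N, c n * (n:ℂ)^(-s) := by
    rw [Finset.mul_sum]
    symm
    refine Finset.sum_bij (fun n _ => p * n) ?_ ?_ ?_ ?_
    · intro n hn
      simp only [Finset.mem_filter, Finset.mem_Ico] at hn ⊢
      refine ⟨⟨Nat.mul_pos (by omega) hn.1, Nat.mul_lt_mul_of_pos_left hn.2 (by omega)⟩, dvd_mul_right _ _⟩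
    · intro n _ m _ h
      exact Nat.eq_of_mul_eq_mul_left (by omega) h
    · intro n hn
      simp only [Finset.mem_filter, Finset.mem_Ico] at hn
      obtain ⟨⟨h1, h2⟩, k, rfl⟩ := hn
      refine ⟨k, ?_, rfl⟩
      rw [Finset.mem_Ico]
      refine ⟨Nat.pos_of_ne_zero ?_, lt_of_mul_lt_mul_left h2 (by omega)⟩
      rintro rfl; simp at h1
    · intro n hn
      rw [Nat.mul_div_cancel_left _ (by omega)]
      push_cast
      rw [Complex.natCast_mul_natCast_cpow]; ring
  rcases Nat.eq_zero_or_pos N with h0 | h0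
  · subst h0; simp
  have hsplit : ∑ n ∈ (Finset.Ico 1 (p*N)).filter (fun n => p ∣ n), (α * c (n / p)) * (n:ℂ)^(-s) =
      ∑ n ∈ (Finset.Ico 1 N).filter (fun n => p ∣ n), (α * c (n / p)) * (n:ℂ)^(-s) +
      ∑ n ∈ (Finset.Ico N (p*N)).filter (fun n => p ∣ n), (α * c (n / p)) * (n:ℂ)^(-s) := by
    rw [Finset.sum_filter, Finset.sum_filter, Finset.sum_filter,
      Finset.sum_Ico_consecutive _ h0 (Nat.le_mul_of_pos_left _ (by omega))]
  have h1 : ∑ n ∈ Finset.Ico 1 N, shiftc p α c n * (n:ℂ)^(-s) =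
     ∑ n ∈ Finset.Ico 1 N, c n * (n:ℂ)^(-s) -
      ∑ n ∈ (Finset.Ico 1 N).filter (fun n => p ∣ n), (α * c (n / p)) * (n:ℂ)^(-s) := by
    rw [Finset.sum_filter, ← Finset.sum_sub_distrib]
    refine Finset.sum_congr rfl fun n _ => ?_
    unfold shiftc
    split_ifs <;> ring
  rw [h1]
  linear_combination hsplit - hsub

lemma norm_ppow_le {p : ℕ} (hp : 1 < p) {s : ℂ} (hs : 0 ≤ s.re) : ‖(p:ℂ)^(-s)‖ ≤ 1 := by
  rw [norm_npow hp.le]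
  exact Real.rpow_le_one_of_one_le_of_nonpos (by exact_mod_cast hp.le) (by linarith)

/-- the extra boundary piece is small -/
lemma extra_small {S : Set ℂ} {a : ℝ} (ha : 1/2 < a) (hS : ∀ s ∈ S, a ≤ s.re) {p : ℕ}
    (α : ℂ) (c : ℕ → ℂ) {B : ℝ} (hc : ∀ n, ‖c n‖ ≤ B) {δ : ℝ} (hδ : 0 < δ) :
    ∃ N0 : ℕ, 1 ≤ N0 ∧ ∀ N ≥ N0, MS S (fun s =>
      ∑ n ∈ (Finset.Ico N (p * N)).filter (fun n => p ∣ n), (α * c (n / p)) * (n:ℂ)^(-s)) δ := by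
  have hB : 0 ≤ B := (norm_nonneg _).trans (hc 0)
  obtain ⟨N0, h1, h⟩ := tail_small ha (show 0 < δ / (2 * ((‖α‖ * B)^2 + 1)) by positivity)
  refine ⟨N0, h1, fun N hN => ?_⟩
  refine (MS.poly (by linarith) hS _ (fun n hn => ?_) (fun n => α * c (n/p)) (half_pos hδ)).mono ?_
  · simp only [Finset.mem_filter, Finset.mem_Ico] at hn; omega
  · have h2 := h ((Finset.Ico N (p * N)).filter (fun n => p ∣ n)) (fun n hn => by
      simp only [Finset.mem_filter, Finset.mem_Ico] at hn; omega)
    have : ∑ n ∈ (Finset.Ico N (p * N)).filter (fun n => p ∣ n),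
        ‖α * c (n/p)‖^2 * (n:ℝ)^(-(2*a)) ≤ ((‖α‖ * B)^2 + 1) *
        ∑ n ∈ (Finset.Ico N (p * N)).filter (fun n => p ∣ n), (n:ℝ)^(-(2*a)) := by
      rw [Finset.mul_sum]
      refine Finset.sum_le_sum fun n _ => ?_
      gcongr
      rw [norm_mul]
      have : (‖α‖ * ‖c (n/p)‖)^2 ≤ (‖α‖ * B)^2 := by
        have := hc (n/p)
        gcongr
      linarith
    have h3 : ((‖α‖ * B)^2 + 1) * (δ / (2 * ((‖α‖ * B)^2 + 1))) = δ / 2 := by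
      field_simp
    have h4 := mul_le_mul_of_nonneg_left h2 (show 0 ≤ (‖α‖ * B)^2 + 1 by positivity)
    linarith

lemma MSA.shift {S : Set ℂ} {a : ℝ} (ha : 1/2 < a) (hS : ∀ s ∈ S, a ≤ s.re) {p : ℕ} (hp : 1 < p)
    (α : ℂ) (c : ℕ → ℂ) {B : ℝ} (hc : ∀ n, ‖c n‖ ≤ B) {G : ℂ → ℂ} (hG : VC S G)
    (h : MSA S G c) : MSA S (fun s => (1 - α * (p:ℂ)^(-s)) * G s) (shiftc p α c) := by
  intro δ hδ
  obtain ⟨N0, h0⟩ := h (δ / (4 * ((1 + ‖α‖)^2))) (by positivity)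
  obtain ⟨N1, h1, h1'⟩ := extra_small (p := p) ha hS α c hc (show 0 < δ/4 by positivity)
  refine ⟨max N0 N1, fun N hN => ?_⟩
  have hx := h0 N ((le_max_left _ _).trans hN)
  have hy := h1' N ((le_max_right _ _).trans hN)
  have hN1 : 1 ≤ N := h1.trans ((le_max_right _ _).trans hN)
  have v1 : VC S (fun s => G s - ∑ n ∈ Finset.Ico 1 N, c n * (n:ℂ)^(-s)) :=
    hG.sub (VC.poly _ (fun n hn => (Finset.mem_Ico.mp hn).1) c)
  have v2 : VC S (fun s => (1 - α * (p:ℂ)^(-s)) * (G s - ∑ n ∈ Finset.Ico 1 N, c n * (n:ℂ)^(-s))) :=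
    ((VC.of_cont continuous_const).sub ((VC.of_cont continuous_const).mul (VC.pow hp.le))).mul v1
  have v3 : VC S (fun s =>
      ∑ n ∈ (Finset.Ico N (p * N)).filter (fun n => p ∣ n), (α * c (n / p)) * (n:ℂ)^(-s)) :=
    VC.poly _ (fun n hn => by simp only [Finset.mem_filter, Finset.mem_Ico] at hn; omega) _
  have hx' := MS.dom (B := 1 + ‖α‖) v1 v2 (fun s hs τ => by
    rw [norm_mul]
    gcongr
    refine (norm_sub_le _ _).trans ?_
    rw [norm_one, norm_mul]
    have := norm_ppow_le hp (s := s + τ * I) (by simpa using (by linarith [hS s hs]))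
    nlinarith [norm_nonneg α]) hx
  have v4 := (VC.of_cont (S := S) (continuous_const (y := (-1:ℂ)))).mul v3
  have hy' := MS.dom (B := 1) v3 v4 (fun s hs τ => by simp) hy
  have := (MS.add v2 v4 hx' hy').mono (δ' := δ) (by
    have : (1 + ‖α‖)^2 * (δ / (4 * ((1 + ‖α‖)^2))) = δ / 4 := by field_simp
    rw [this]; linarith)
  convert this using 2 with s
  rw [shift_id hp]; ring

lemma MSA.unshift {S : Set ℂ} {a : ℝ} (ha : 1/2 < a) (hS : ∀ s ∈ S, a ≤ s.re) {p : ℕ} (hp : 1 < p)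
    (α : ℂ) (c : ℕ → ℂ) {B : ℝ} (hc : ∀ n, ‖c n‖ ≤ B) {G : ℂ → ℂ} (hG : VC S G)
    {κ : ℝ} (hκ : 0 < κ) (hk : ∀ s ∈ S, ∀ τ : ℝ, κ ≤ ‖1 - α * (p:ℂ)^(-(s + τ * I))‖)
    (h : MSA S (fun s => (1 - α * (p:ℂ)^(-s)) * G s) (shiftc p α c)) : MSA S G c := by
  intro δ hδ
  obtain ⟨N0, h0⟩ := h (δ * κ^2/4) (by positivity)
  obtain ⟨N1, h1, h1'⟩ := extra_small (p := p) ha hS α c hc (show 0 < δ * κ^2/4 by positivity)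
  refine ⟨max N0 N1, fun N hN => ?_⟩
  have hx := h0 N ((le_max_left _ _).trans hN)
  have hy := h1' N ((le_max_right _ _).trans hN)
  have hN1 : 1 ≤ N := h1.trans ((le_max_right _ _).trans hN)
  have v1 : VC S (fun s => G s - ∑ n ∈ Finset.Ico 1 N, c n * (n:ℂ)^(-s)) :=
    hG.sub (VC.poly _ (fun n hn => (Finset.mem_Ico.mp hn).1) c)
  have v2 : VC S (fun s => (1 - α * (p:ℂ)^(-s)) * G s -
      ∑ n ∈ Finset.Ico 1 N, shiftc p α c n * (n:ℂ)^(-s)) :=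
    (((VC.of_cont continuous_const).sub ((VC.of_cont continuous_const).mul (VC.pow hp.le))).mul
      hG).sub (VC.poly _ (fun n hn => (Finset.mem_Ico.mp hn).1) _)
  have v3 : VC S (fun s =>
      ∑ n ∈ (Finset.Ico N (p * N)).filter (fun n => p ∣ n), (α * c (n / p)) * (n:ℂ)^(-s)) :=
    VC.poly _ (fun n hn => by simp only [Finset.mem_filter, Finset.mem_Ico] at hn; omega) _
  have hxy := MS.add v2 v3 hx hy
  have := MS.dom (B := κ⁻¹) (v2.add v3) v1 (fun s hs τ => by
    rw [shift_id hp]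
    have e : ∀ x y z w : ℂ, x * y - (x * z + w) + w = x * (y - z) := fun x y z w => by ring
    rw [e, norm_mul]
    have h1 := hk s hs τ
    rw [← mul_assoc]
    refine le_mul_of_one_le_left (norm_nonneg _) ?_
    rw [inv_mul_eq_div, one_le_div hκ]; exact h1) hxy
  refine this.mono (le_of_eq ?_)
  field_simp; ring

lemma shift_two (n : ℕ) : shiftc 2 2 (fun _ => 1) (n+1) = (-1)^n := by
  unfold shiftc
  rcases Nat.even_or_odd n with h | h
  · rw [if_neg, h.neg_one_pow]; · simp
    rw [← even_iff_two_dvd, Nat.even_add_one]; simpa using h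
  · rw [if_pos, h.neg_one_pow]; · norm_num
    rw [← even_iff_two_dvd, Nat.even_add_one]; simpa using h

lemma shift_two_norm (n : ℕ) : ‖shiftc 2 2 (fun _ => 1) n‖ ≤ 1 := by
  rcases n with _ | n
  · simp [shiftc]; norm_num
  · rw [shift_two]; simp

lemma eta_approx' (m M : ℕ) {s : ℂ} (hs : 0 < s.re) (h1 : s ≠ 1) :
    ‖(1 - 2*((2:ℕ):ℂ)^(-s))*riemannZeta s -
      ∑ n ∈ Finset.Ico 1 (M+1), shiftc 2 2 (fun _ => 1) n * (n:ℂ)^(-s)‖ ≤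
      (m+2:ℕ)*(M+1:ℝ)^(-s.re) + 2*(‖s‖+(m+2:ℕ))^(m+2)*((M+1:ℝ)^m)⁻¹ := by
  have := eta_approx m M hs h1
  rw [Finset.sum_Ico_eq_sum_range]
  have e : ∑ k ∈ Finset.range (M + 1 - 1), shiftc 2 2 (fun _ => 1) (1 + k) * ((1 + k : ℕ):ℂ)^(-s) =
      ∑ n ∈ Finset.range M, (-1:ℂ)^n*((n+1:ℝ):ℂ)^(-s) := by
    refine Finset.sum_congr rfl fun n _ => ?_
    rw [add_comm 1 n, shift_two]; push_cast; rfl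
  rw [e]
  exact_mod_cast this

/-- elementary asymptotics used in the mean value theorem -/
lemma asym {κ : ℝ} (hκ : 0 < κ) (hκ1 : κ < 1/2) {δ : ℝ} (hδ : 0 < δ) {R : ℝ} (hR0 : 0 ≤ R) :
    ∃ m : ℕ, ∃ T0 ≥ (1:ℝ), ∀ T ≥ T0, ∃ M : ℕ, 
      (m+2:ℕ)*(M+1:ℝ)^(-(1/2+κ)) + 2*(R+T+(m+2:ℕ))^(m+2)*((M+1:ℝ)^m)⁻¹ ≤ δ ∧
      6 * ((M+1:ℕ):ℝ)^(1-2*κ) * (Hm (M+1))^2 ≤ δ * T ∧ T ≤ (M:ℝ)+1 := by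
  obtain ⟨m, hm⟩ := exists_nat_ge (3/κ)
  have hm' : 3 ≤ κ * m := by rw [div_le_iff₀ hκ] at hm; linarith
  refine ⟨m, ?_⟩
  set C := 6 * (1+2/κ)^2 * 3
  have t1 : Tendsto (fun T : ℝ => (m+2:ℕ)*T^(-(1/2:ℝ)) + 2*2^(m+2)*T^(-(1:ℝ))) atTop (nhds 0) := by
    have a1 := (tendsto_rpow_neg_atTop (show (0:ℝ) < 1/2 by norm_num)).const_mul (((m+2:ℕ):ℝ))
    have a2 := (tendsto_rpow_neg_atTop (show (0:ℝ) < 1 by norm_num)).const_mul ((2*2^(m+2):ℝ))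
    simpa using a1.add a2
  have t2 : Tendsto (fun T : ℝ => C*T^(-(κ^2))) atTop (nhds 0) := by
    simpa using (tendsto_rpow_neg_atTop (show (0:ℝ) < κ^2 by positivity)).const_mul C
  have ev := ((t1.eventually_le_const hδ).and (t2.eventually_le_const hδ)).and
    (eventually_ge_atTop (R + (m+2:ℕ)))
  obtain ⟨T1, hT1⟩ := eventually_atTop.mp ev
  refine ⟨max T1 1, le_max_right _ _, fun T hT => ?_⟩
  obtain ⟨⟨e1, e2⟩, e3⟩ := hT1 T ((le_max_left _ _).trans hT)
  have hT1 : 1 ≤ T := (le_max_right _ _).trans hT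
  have hT0 : 0 < T := by linarith
  set M := ⌈T^(1+κ)⌉₊
  have hM : T^(1+κ) ≤ M := Nat.le_ceil _
  have hpow1 : 1 ≤ T^(1+κ) := Real.one_le_rpow hT1 (by linarith)
  have hM2 : (M:ℝ) + 1 ≤ 3 * T^(1+κ) := by
    have := (Nat.ceil_lt_add_one (show 0 ≤ T^(1+κ) by positivity)).le
    linarith
  have hMT : T^(1+κ) ≤ (M:ℝ)+1 := by linarith
  have hMT' : T ≤ (M:ℝ) + 1 := by
    refine le_trans ?_ hMT
    conv_lhs => rw [← Real.rpow_one T]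
    exact Real.rpow_le_rpow_of_exponent_le hT1 (by linarith)
  refine ⟨M, le_trans (add_le_add ?_ ?_) e1, ?_, hMT'⟩
  · gcongr ?_ * ?_
    calc ((M:ℝ)+1)^(-(1/2+κ)) ≤ T^(-(1/2+κ)) := Real.rpow_le_rpow_of_nonpos hT0 hMT' (by linarith)
      _ ≤ _ := Real.rpow_le_rpow_of_exponent_le hT1 (by linarith)
  · have hR : 0 ≤ R + T + (m+2:ℕ) := by positivity
    have h1 : (R+T+(m+2:ℕ))^(m+2) ≤ (2*T)^(m+2) := by
      gcongr
      linarith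
    have h2 : ((M+1:ℝ)^m)⁻¹ ≤ (T^((m:ℝ)+3))⁻¹ := by
      gcongr
      calc T^((m:ℝ)+3) ≤ T^((1+κ)*m) := Real.rpow_le_rpow_of_exponent_le hT1 (by linarith)
        _ = (T^(1+κ))^m := by rw [Real.rpow_mul hT0.le, Real.rpow_natCast]
        _ ≤ _ := by gcongr
    calc _ ≤ 2 * (2*T)^(m+2) * (T^((m:ℝ)+3))⁻¹ := by gcongr
      _ = 2*2^(m+2) * (T^((m:ℝ)+2) * (T^((m:ℝ)+3))⁻¹) := by
        have : T^((m:ℝ)+2) = T^(m+2) := by rw [← Real.rpow_natCast]; push_cast; rfl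
        rw [mul_pow, this]; ring
      _ = _ := by
        rw [← Real.rpow_neg hT0.le, ← Real.rpow_add hT0]; congr 2; ring
  · have hN1 : (1:ℝ) ≤ ((M+1:ℕ):ℝ) := by push_cast; linarith [hpow1.trans hMT]
    have hN0 : (0:ℝ) < ((M+1:ℕ):ℝ) := by linarith
    have hH : Hm (M+1) ≤ (1+2/κ) * ((M+1:ℕ):ℝ)^(κ/2) := by
      refine (Hm_le _ (by omega)).trans ?_
      have h1 := Real.log_le_rpow_div hN0.le (show 0 < κ/2 by positivity)
      have h2 := Real.one_le_rpow hN1 (show 0 ≤ κ/2 by positivity)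
      have h3 : ((M+1:ℕ):ℝ)^(κ/2) / (κ/2) = 2/κ * ((M+1:ℕ):ℝ)^(κ/2) := by field_simp
      nlinarith
    have hH2 : (Hm (M+1))^2 ≤ (1+2/κ)^2 * ((M+1:ℕ):ℝ)^κ := by
      have h0 := Hm_nonneg (M+1)
      calc _ ≤ ((1+2/κ) * ((M+1:ℕ):ℝ)^(κ/2))^2 := by gcongr
        _ = _ := by
          rw [mul_pow, ← Real.rpow_natCast, ← Real.rpow_natCast (((M+1:ℕ):ℝ)^(κ/2)),
            ← Real.rpow_mul hN0.le]; congr 2; push_cast; ring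
    have h5 : ((M+1:ℕ):ℝ)^(1-κ) ≤ 3 * T^(1-κ^2) := by
      calc ((M+1:ℕ):ℝ)^(1-κ) ≤ (3 * T^(1+κ))^(1-κ) := by
            push_cast
            apply Real.rpow_le_rpow (by positivity) hM2 (by linarith)
        _ = 3^(1-κ) * T^(1-κ^2) := by
            rw [Real.mul_rpow (by norm_num) (by positivity), ← Real.rpow_mul hT0.le]
            congr 2; ring
        _ ≤ _ := by
            gcongr
            conv_rhs => rw [← Real.rpow_one 3]
            exact Real.rpow_le_rpow_of_exponent_le (by norm_num) (by linarith)
    calc _ ≤ 6 * ((M+1:ℕ):ℝ)^(1-2*κ) * ((1+2/κ)^2 * ((M+1:ℕ):ℝ)^κ) := by gcongr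
      _ = 6 * (1+2/κ)^2 * ((M+1:ℕ):ℝ)^(1-κ) := by
        have : ((M+1:ℕ):ℝ)^(1-κ) = ((M+1:ℕ):ℝ)^(1-2*κ) * ((M+1:ℕ):ℝ)^κ := by
          rw [← Real.rpow_add hN0]; congr 1; ring
        rw [this]; ring
      _ ≤ 6 * (1+2/κ)^2 * (3 * T^(1-κ^2)) := by gcongr
      _ = C * T^(-(κ^2)) * T := by
        have : T^(1-κ^2) = T^(-(κ^2)) * T := by
          conv_rhs => rw [← Real.rpow_one T]
          rw [← Real.rpow_mul hT0.le, one_mul, ← Real.rpow_add hT0]; congr 1; ring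
        rw [this]; ring
      _ ≤ _ := by gcongr

/-- the test region -/
def Sreg (a b R : ℝ) : Set ℂ := {s | a ≤ s.re ∧ s.re ≤ b ∧ ‖s‖ ≤ R}

lemma VC.zeta {a b R : ℝ} (hb : b < 1) : VC (Sreg a b R) riemannZeta := by
  intro s hs
  refine continuous_iff_continuousAt.mpr fun τ => ?_
  have : s + τ * I ≠ 1 := by
    intro h
    have := congrArg Complex.re h
    simp at this
    linarith [hs.2.1]
  exact (differentiableAt_riemannZeta this).continuousAt.comp (f := fun τ : ℝ => s + τ * I)
    (by fun_prop)

lemma ms_eta {a b R : ℝ} (ha : 1/2 < a) (hb : b < 1) (hab : a ≤ b) (hR : 0 ≤ R) :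
    MSA (Sreg a b R) (fun s => (1 - 2 * ((2:ℕ):ℂ)^(-s)) * riemannZeta s)
      (shiftc 2 2 (fun _ => 1)) := by
  intro δ hδ
  set c := shiftc 2 2 (fun _ => 1) with hc
  obtain ⟨N0, hN0, htail⟩ := tail_small ha (show 0 < δ/8 by positivity)
  refine ⟨N0, fun N hN => ?_⟩
  set δ1 := min (δ/8) 1
  have hδ1 : 0 < δ1 := lt_min (by positivity) one_pos
  have hδ8 : δ1 ≤ δ/8 := min_le_left _ _
  have hδ11 : δ1 ≤ 1 := min_le_right _ _
  obtain ⟨m, T0, hT0, hT⟩ := asym (κ := a - 1/2) (by linarith) (by linarith) hδ1 hR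
  refine ⟨max T0 N, lt_max_of_lt_left (by linarith), fun T hTT s hs => ?_⟩
  have hTN : (N:ℝ) ≤ T := (le_max_right _ _).trans hTT
  have hT1 : 1 ≤ T := hT0.trans ((le_max_left _ _).trans hTT)
  have hT0' : 0 ≤ T := by linarith
  obtain ⟨M, hM1, hM2, hM3⟩ := hT T ((le_max_left _ _).trans hTT)
  have hNM : N ≤ M + 1 := by exact_mod_cast hTN.trans hM3
  have hN1 : 1 ≤ N := hN0.trans hN
  set G : ℂ → ℂ := fun s => (1 - 2 * ((2:ℕ):ℂ)^(-s)) * riemannZeta s with hG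
  have vG : VC (Sreg a b R) G :=
    ((VC.of_cont continuous_const).sub ((VC.of_cont continuous_const).mul (VC.pow (by norm_num)))).mul
      (VC.zeta hb)
  set P : ℂ → ℂ := fun s => ∑ n ∈ Finset.Ico N (M+1), c n * (n:ℂ)^(-s) with hP
  have vP : VC (Sreg a b R) P := VC.poly _ (fun n hn => hN1.trans (Finset.mem_Ico.mp hn).1) c
  have vD : VC (Sreg a b R) (fun s => G s - ∑ n ∈ Finset.Ico 1 N, c n * (n:ℂ)^(-s)) :=
    vG.sub (VC.poly _ (fun n hn => (Finset.mem_Ico.mp hn).1) c)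
  -- first piece
  have hfirst : ∀ τ ∈ Set.Icc 0 T, ‖G (s + τ * I) - ∑ n ∈ Finset.Ico 1 (M+1), c n * (n:ℂ)^(-(s + τ * I))‖^2 ≤ δ1 := by
    intro τ hτ
    have hre : (s + τ * I).re = s.re := by simp
    have h1 := eta_approx' m M (s := s + τ * I) (by rw [hre]; linarith [hs.1]) (by
      intro h
      have := congrArg Complex.re h
      rw [hre] at this; simp at this; linarith [hs.2.1])
    have h2 : ‖s + τ * I‖ ≤ R + T := by
      refine (norm_add_le _ _).trans (add_le_add hs.2.2 ?_)
      simp [abs_of_nonneg hτ.1, hτ.2]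
    have h3 : ‖G (s + τ * I) - ∑ n ∈ Finset.Ico 1 (M+1), c n * (n:ℂ)^(-(s + τ * I))‖ ≤ δ1 := by
      refine h1.trans (le_trans ?_ hM1)
      rw [hre]
      gcongr
      · linarith [show (0:ℝ) ≤ M by positivity]
      · linarith [hs.1]
    have h0 := norm_nonneg (G (s + τ * I) - ∑ n ∈ Finset.Ico 1 (M+1), c n * (n:ℂ)^(-(s + τ * I)))
    nlinarith
  -- second piece
  have hcn : ∀ n ∈ Finset.Ico N (M+1), ‖c n * (n:ℂ)^(-s)‖ ≤ (n:ℝ)^(-a) := by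
    intro n hn
    have hn1 : 1 ≤ n := hN1.trans (Finset.mem_Ico.mp hn).1
    rw [norm_mul, norm_npow hn1]
    have h1 : ‖c n‖ ≤ 1 := shift_two_norm n
    have h2 : (n:ℝ)^(-s.re) ≤ (n:ℝ)^(-a) :=
      Real.rpow_le_rpow_of_exponent_le (by exact_mod_cast hn1) (by linarith [hs.1])
    have h3 : 0 ≤ (n:ℝ)^(-s.re) := by positivity
    nlinarith
  have hsecond : ∫ τ in (0:ℝ)..T, ‖P (s + τ * I)‖^2 ≤ δ/8 * T + δ/8 * T := by
    have h1 := ms_general (Finset.Ico N (M+1)) (fun n : ℕ => Real.log n)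
      (log_inj.mono fun n hn => hN1.trans (Finset.mem_Ico.mp hn).1) (fun n => c n * (n:ℂ)^(-s)) T
    have h2 := off_bound ha (by linarith) (N := M+1) (Finset.Ico N (M+1))
      (Finset.Ico_subset_Ico_left hN1) (fun n => c n * (n:ℂ)^(-s)) hcn
    have e : ∀ τ : ℝ, P (s + τ * I) =
      ∑ n ∈ Finset.Ico N (M+1), c n * (n:ℂ)^(-s) * cexp (-(Real.log n * τ) * I) := fun τ =>
      Finset.sum_congr rfl fun n hn => by
        rw [cpow_line (hN1.trans (Finset.mem_Ico.mp hn).1)]; ring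
    simp only [e]
    have h3 : ∑ n ∈ Finset.Ico N (M+1), ‖c n * (n:ℂ)^(-s)‖^2 ≤ δ/8 := by
      refine le_trans (Finset.sum_le_sum fun n hn => ?_) (htail (Finset.Ico N (M+1))
        (fun n hn => hN.trans (Finset.mem_Ico.mp hn).1))
      have : (n:ℝ)^(-(2*a)) = ((n:ℝ)^(-a))^2 := by
        rw [← Real.rpow_natCast, ← Real.rpow_mul (by positivity)]; congr 1; push_cast; ring
      rw [this]
      have := hcn n hn
      gcongr
    have h4 := (abs_le.mp h1).2
    have h5 : 2 - 2*a = 1 - 2*(a-1/2) := by ring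
    rw [h5] at h2
    have h6 := mul_le_mul_of_nonneg_left h3 hT0'
    have h7 := mul_le_mul_of_nonneg_right hδ8 hT0'
    linarith
  have hmono := intervalIntegral.integral_mono_on hT0' (vD.ii hs 0 T)
    ((continuous_const (y := 2*δ1)).intervalIntegrable 0 T |>.add ((vP.ii hs 0 T).const_mul 2))
    (fun τ hτ => by
      have h1 := hfirst τ hτ
      have e : G (s + τ * I) - ∑ n ∈ Finset.Ico 1 N, c n * (n:ℂ)^(-(s + τ * I)) =
        (G (s + τ * I) - ∑ n ∈ Finset.Ico 1 (M+1), c n * (n:ℂ)^(-(s + τ * I))) + P (s + τ * I) := by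
        rw [hP, ← Finset.sum_Ico_consecutive _ hN1 hNM]; ring
      rw [e]
      set x := G (s + τ * I) - ∑ n ∈ Finset.Ico 1 (M+1), c n * (n:ℂ)^(-(s + τ * I))
      have h2 := norm_add_le x (P (s + τ * I))
      have h3 := norm_nonneg (x + P (s + τ * I))
      have h4 := sq_nonneg (‖x‖ - ‖P (s + τ * I)‖)
      show _ ≤ 2 * δ1 + 2 * ‖P (s + τ * I)‖^2
      nlinarith)
  refine hmono.trans ?_
  rw [intervalIntegral.integral_add (by simp) ((vP.ii hs 0 T).const_mul 2),
    intervalIntegral.integral_const, intervalIntegral.integral_const_mul]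
  simp only [sub_zero, smul_eq_mul]
  have h7 := mul_le_mul_of_nonneg_right hδ8 hT0'
  nlinarith

lemma ms_zeta {a b R : ℝ} (ha : 1/2 < a) (hb : b < 1) (hab : a ≤ b) (hR : 0 ≤ R) :
    MSA (Sreg a b R) riemannZeta (fun _ => 1) := by
  refine MSA.unshift (p := 2) (α := 2) ha (fun s hs => hs.1) (by norm_num) (fun _ => 1)
    (B := 1) (by simp) (VC.zeta hb) (κ := 2^(1-b) - 1) ?_ ?_ (ms_eta ha hb hab hR)
  · have := Real.one_lt_rpow (show (1:ℝ) < 2 by norm_num) (show 0 < 1 - b by linarith)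
    linarith
  · intro s hs τ
    have h1 : ‖2 * ((2:ℕ):ℂ)^(-(s + τ * I))‖ = 2^(1-s.re) := by
      rw [norm_mul, norm_npow (by norm_num)]
      simp
      rw [sub_eq_add_neg, Real.rpow_add (by norm_num), Real.rpow_one]
    have h2 := norm_sub_norm_le (2 * ((2:ℕ):ℂ)^(-(s + τ * I))) 1
    rw [norm_sub_rev, h1, norm_one] at h2
    refine le_trans ?_ h2
    have := Real.rpow_le_rpow_of_exponent_le (show (1:ℝ) ≤ 2 by norm_num)
      (show 1 - b ≤ 1 - s.re by linarith [hs.2.1])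
    linarith

open Classical in
/-- indicator of integers without prime factor below `P` -/
noncomputable def cr (P n : ℕ) : ℂ := if ∀ p, p.Prime → p ∣ n → P ≤ p then 1 else 0

/-- partial inverse Euler product -/
noncomputable def MP (P : ℕ) (s : ℂ) : ℂ := ∏ p ∈ P.primesBelow, (1 - (p:ℂ)^(-s))

lemma cr_norm (P n : ℕ) : ‖cr P n‖ ≤ 1 := by unfold cr; split_ifs <;> simp

lemma cr_succ_prime {k : ℕ} (hk : k.Prime) {n : ℕ} : shiftc k 1 (cr k) n = cr (k+1) n := by
  unfold shiftc cr
  by_cases h1 : ∀ p, p.Prime → p ∣ n → k ≤ p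
  · rw [if_pos h1]
    by_cases h2 : k ∣ n
    · rw [if_pos h2, if_pos, if_neg]
      · simp
      · intro h; have := h k hk h2; omega
      · intro p hp hd
        exact h1 p hp (hd.trans (Nat.div_dvd_of_dvd h2))
    · rw [if_neg h2, if_pos, sub_zero]
      intro p hp hd
      have := h1 p hp hd
      rcases this.lt_or_eq with h | h
      · omega
      · subst h; exact absurd hd h2
  · have h3 : ¬ ∀ p, p.Prime → p ∣ n → k + 1 ≤ p :=
      fun h => h1 fun p hp hd => by have := h p hp hd; omega
    rw [if_neg h1, if_neg h3]
    by_cases h2 : k ∣ n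
    · rw [if_pos h2, if_neg]
      · simp
      · push Not at h1
        obtain ⟨p, hp, hd, hlt⟩ := h1
        intro h
        refine absurd (h p hp ?_) (by omega)
        obtain ⟨m, rfl⟩ := h2
        rw [Nat.mul_div_cancel_left _ hk.pos]
        rcases (Nat.Prime.dvd_mul hp).mp hd with h | h
        · rw [Nat.prime_dvd_prime_iff_eq hp hk] at h; omega
        · exact h
    · rw [if_neg h2]; simp

lemma cr_succ_not {k : ℕ} (hk : ¬ k.Prime) {n : ℕ} : cr (k+1) n = cr k n := by
  unfold cr
  congr 1
  apply propext
  refine ⟨fun h p hp hd => by have := h p hp hd; omega, fun h p hp hd => ?_⟩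
  have := h p hp hd
  rcases this.lt_or_eq with h | h
  · omega
  · subst h; exact absurd hp hk

lemma VC.MP {S : Set ℂ} (P : ℕ) : VC S (MP P) := by
  intro s hs
  unfold _root_.MP
  refine continuous_finsetProd _ fun p hp => ?_
  exact (continuous_const).sub (VC.pow (S := S) (Nat.prime_of_mem_primesBelow hp).one_le s hs)

lemma msa_sieve {a b R : ℝ} (ha : 1/2 < a) (hb : b < 1) (hab : a ≤ b) (hR : 0 ≤ R) (P : ℕ) :
    MSA (Sreg a b R) (fun s => MP P s * riemannZeta s) (cr P) := by
  induction P with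
  | zero =>
    have : cr 0 = fun _ => 1 := by ext n; simp [cr]
    rw [this]
    simpa [MP] using ms_zeta ha hb hab hR
  | succ k ih =>
    by_cases hk : k.Prime
    · have := MSA.shift ha (fun s hs => hs.1) hk.one_lt 1 (cr k) (cr_norm k)
        ((VC.MP k).mul (VC.zeta hb)) ih
      have e1 : shiftc k 1 (cr k) = cr (k+1) := funext fun n => cr_succ_prime hk
      have e2 : ∀ s, MP (k+1) s = (1 - (k:ℂ)^(-s)) * MP k s := by
        intro s
        unfold MP
        rw [Nat.primesBelow_succ, if_pos hk, Finset.prod_insert]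
        simp [Nat.primesBelow]
      rw [e1] at this
      simpa [e2, mul_assoc] using this
    · have e1 : cr (k+1) = cr k := funext fun n => cr_succ_not hk
      have e2 : ∀ s, MP (k+1) s = MP k s := by
        intro s
        unfold MP
        rw [Nat.primesBelow_succ, if_neg hk]
      simpa [e1, e2] using ih

/-- Dirichlet polynomials supported on `P`-smooth numbers, with given mean square. -/
def SP (P : ℕ) (Q : ℝ → ℂ) (w : ℝ) : Prop :=
  ∃ (ι : Type) (A : Finset ι) (f : ι → ℕ) (q : ι → ℂ), Set.InjOn f A ∧
    (∀ i ∈ A, f i ∈ P.smoothNumbers) ∧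
    (∀ τ, Q τ = ∑ i ∈ A, q i * cexp (-(Real.log (f i) * τ) * I)) ∧ ∑ i ∈ A, ‖q i‖^2 = w

lemma SP.one : SP P (fun _ => 1) 1 :=
  ⟨Unit, {()}, fun _ => 1, fun _ => 1, by simp, by simp [Nat.mem_smoothNumbers], by simp, by simp⟩

lemma SP.cont {P Q w} (h : SP P Q w) : Continuous Q := by
  obtain ⟨ι, A, f, q, _, _, h, _⟩ := h
  rw [funext h]
  fun_prop

lemma smooth_pos {P n : ℕ} (h : n ∈ P.smoothNumbers) : 0 < (n:ℝ) := by
  exact_mod_cast Nat.pos_of_ne_zero (Nat.ne_zero_of_mem_smoothNumbers h)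

lemma SP.mean {P Q w} (h : SP P Q w) {ε : ℝ} (hε : 0 < ε) : ∃ T0 > 0, ∀ T ≥ T0,
    |(∫ τ in (0:ℝ)..T, ‖Q τ‖^2) - T * w| ≤ ε * T := by
  obtain ⟨ι, A, f, q, hf, hs, h, rfl⟩ := h
  obtain ⟨T0, h0, hT⟩ := ms_limit A (fun i => Real.log (f i)) (fun i hi j hj e => by
    have := Real.log_injOn_pos (smooth_pos (hs i hi)) (smooth_pos (hs j hj)) e
    exact hf hi hj (by exact_mod_cast this)) (∑ i ∈ A, ‖q i‖) hε
  refine ⟨T0, h0, fun T hT' => ?_⟩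
  simp only [h]
  exact hT T hT' q fun i hi => Finset.single_le_sum (f := fun i => ‖q i‖) (fun i _ => norm_nonneg _) hi

lemma SP.step {k : ℕ} (hk : k.Prime) {Q w} (h : SP k Q w) (ω : ℂ) (hω : ‖ω‖ = 1) (L : ℕ) :
    SP (k+1) (fun τ => Q τ * ((1 + ω * cexp (-(Real.log k * τ) * I)) / 2)^L)
      (w * (L.centralBinom / 4^L)) := by
  obtain ⟨ι, A, f, q, hf, hs, h, rfl⟩ := h
  refine ⟨ι × ℕ, A ×ˢ Finset.range (L+1), fun x => f x.1 * k^x.2,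
    fun x => q x.1 * (ω^x.2 * L.choose x.2 / 2^L), ?_, ?_, ?_, ?_⟩
  · rintro ⟨i, a⟩ hi ⟨j, b⟩ hj e
    simp only [Finset.coe_product, Set.mem_prod, Finset.mem_coe] at hi hj e
    have c1 := Nat.Prime.smoothNumbers_coprime hk (hs i hi.1)
    have c2 := Nat.Prime.smoothNumbers_coprime hk (hs j hj.1)
    have d1 : f i ∣ f j := (Nat.Coprime.pow_right b c1.symm).dvd_of_dvd_mul_right
      (e ▸ dvd_mul_right _ _)
    have d2 : f j ∣ f i := (Nat.Coprime.pow_right a c2.symm).dvd_of_dvd_mul_right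
      (e ▸ dvd_mul_right _ _)
    have e1 := Nat.dvd_antisymm d1 d2
    have e2 := hf hi.1 hj.1 e1
    subst e2
    have : k^a = k^b := Nat.eq_of_mul_eq_mul_left
      (Nat.pos_of_ne_zero (Nat.ne_zero_of_mem_smoothNumbers (hs i hi.1))) e
    rw [Nat.pow_right_injective hk.two_le this]
  · rintro ⟨i, a⟩ hi
    have := Nat.pow_mul_mem_smoothNumbers hk.ne_zero a (hs i (Finset.mem_product.mp hi).1)
    rwa [mul_comm] at this
  · intro τ
    beta_reduce
    rw [h, div_pow, add_pow, Finset.sum_div, Finset.sum_mul_sum, Finset.sum_product,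
      ]
    refine Finset.sum_congr rfl fun i hi => ?_
    rw [← Finset.sum_range_reflect]
    refine Finset.sum_congr rfl fun j hj => ?_
    rw [Finset.mem_range] at hj
    have hlog : Real.log ((f i * k^j : ℕ):ℝ) = Real.log (f i) + j * Real.log k := by
      push_cast
      rw [Real.log_mul (smooth_pos (hs i hi)).ne' (by
        have : (k:ℝ) ≠ 0 := by exact_mod_cast hk.ne_zero
        positivity), Real.log_pow]
    have hj' : L + 1 - 1 - j = L - j := by omega
    have hj'' : L - (L - j) = j := by omega
    simp only [hlog, hj', hj'', one_pow, one_mul]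
    rw [mul_pow, ← Complex.exp_nat_mul, Nat.choose_symm (by omega)]
    have : cexp (-(((Real.log (f i) + j * Real.log k : ℝ) : ℂ) * τ) * I) =
      cexp (-((Real.log (f i)) * τ) * I) * cexp (j * (-((Real.log k) * τ) * I)) := by
      rw [← Complex.exp_add]; congr 1; push_cast; ring
    rw [this]; ring
  · rw [Finset.sum_product]
    simp only [norm_mul, mul_pow, ← Finset.mul_sum]
    rw [← Finset.sum_mul]
    congr 1
    have : ∀ j, ‖ω^j * (L.choose j) / 2^L‖^2 = ((L.choose j ^ 2 : ℕ) : ℝ) / 4^L := by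
      intro j
      rw [norm_div, norm_mul, norm_pow, hω]
      simp [div_pow, ← pow_mul]
      rw [mul_comm L 2, pow_mul]; norm_num
    simp only [this]
    rw [← Finset.sum_div, ← Nat.cast_sum, Nat.sum_range_choose_sq]
    rfl

lemma SP.skip {P Q w} (h : SP P Q w) : SP (P+1) Q w := by
  obtain ⟨ι, A, f, q, hf, hs, h, hw⟩ := h
  exact ⟨ι, A, f, q, hf, fun i hi => Nat.smoothNumbers_mono (by omega) (hs i hi), h, hw⟩

/-- the weight -/
noncomputable def Qw (P : ℕ) (ω : ℕ → ℂ) (L : ℕ → ℕ) (τ : ℝ) : ℂ :=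
  ∏ p ∈ P.primesBelow, ((1 + ω p * cexp (-(Real.log p * τ) * I)) / 2)^(L p)

lemma Qw_SP (P : ℕ) (ω : ℕ → ℂ) (hω : ∀ p, ‖ω p‖ = 1) (L : ℕ → ℕ) :
    SP P (Qw P ω L) (∏ p ∈ P.primesBelow, ((L p).centralBinom / 4^(L p) : ℝ)) := by
  induction P with
  | zero =>
    have : Qw 0 ω L = fun _ => 1 := by ext; simp [Qw]
    rw [this]; simpa using SP.one
  | succ k ih =>
    by_cases hk : k.Prime
    · have := SP.step hk ih (ω k) (hω k) (L k)
      have hn : k ∉ k.primesBelow := by simp [Nat.primesBelow]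
      have e : Qw (k+1) ω L = fun τ => Qw k ω L τ * ((1 + ω k * cexp (-(Real.log k * τ) * I)) / 2)^(L k) := by
        ext τ
        unfold Qw
        rw [Nat.primesBelow_succ, if_pos hk, Finset.prod_insert hn, mul_comm]
      rw [e, Nat.primesBelow_succ, if_pos hk, Finset.prod_insert hn, mul_comm]
      exact this
    · have e : Qw (k+1) ω L = Qw k ω L := by
        ext τ
        unfold Qw
        rw [Nat.primesBelow_succ, if_neg hk]
      rw [e, Nat.primesBelow_succ, if_neg hk]
      exact ih.skip

lemma norm_expI (x y : ℝ) : ‖cexp (-(x * y) * I)‖ = 1 := by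
  have : -((x:ℂ) * y) * I = ((-(x*y) : ℝ) : ℂ) * I := by push_cast; ring
  rw [this, Complex.norm_exp_ofReal_mul_I]

lemma Qw_le (P : ℕ) (ω : ℕ → ℂ) (hω : ∀ p, ‖ω p‖ = 1) (L : ℕ → ℕ) (τ : ℝ) :
    ‖Qw P ω L τ‖ ≤ 1 := by
  unfold Qw
  rw [norm_prod]
  refine Finset.prod_le_one (fun _ _ => norm_nonneg _) fun p _ => ?_
  rw [norm_pow]
  refine pow_le_one₀ (norm_nonneg _) ?_
  rw [norm_div, RCLike.norm_ofNat]
  have : ‖1 + ω p * cexp (-(Real.log p * τ) * I)‖ ≤ 2 := by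
    refine (norm_add_le _ _).trans ?_
    rw [norm_mul, hω, norm_expI]; norm_num
  linarith

lemma unit_par {u : ℂ} (hu : ‖u‖ = 1) : ‖u - 1‖^2 = 4 * (1 - ‖(1 + u)/2‖^2) := by
  rw [norm_div, div_pow]
  have := parallelogram_law_with_norm ℝ u 1
  rw [hu, norm_one] at this
  rw [add_comm 1 u]
  simp
  nlinarith

lemma exists_weight (P : ℕ) (ω : ℕ → ℂ) (hω : ∀ p, ‖ω p‖ = 1) {η : ℝ} (hη : 0 < η) :
    ∃ (Q : ℝ → ℂ) (w : ℝ), 0 < w ∧ SP P Q w ∧ (∀ τ, ‖Q τ‖ ≤ 1) ∧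
      ∃ T0 > 0, ∀ T ≥ T0, ∫ τ in (0:ℝ)..T, ‖Q τ‖^2 *
        ∑ p ∈ P.primesBelow, ‖cexp (-(Real.log p * τ) * I) - ω p‖^2 ≤ η * w * T := by
  have hω' : ∀ p, ‖(starRingEnd ℂ) (ω p)‖ = 1 := fun p => by rw [RCLike.norm_conj, hω]
  obtain ⟨L, hL⟩ := exists_nat_ge (4 * (P.primesBelow.card : ℝ) / η)
  set w : ℝ := ∏ p ∈ P.primesBelow, (L.centralBinom / 4^L : ℝ) with hw
  have hw0 : 0 < w := Finset.prod_pos fun p _ => by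
    have := Nat.centralBinom_pos L
    positivity
  set ω' := fun p => (starRingEnd ℂ) (ω p) with hω'd
  set Q := Qw P ω' (fun _ => L) with hQ
  have hSP : SP P Q w := Qw_SP P ω' hω' (fun _ => L)
  refine ⟨Q, w, hw0, hSP, Qw_le P ω' hω' _, ?_⟩
  -- the modified weights
  set L' : ℕ → ℕ → ℕ := fun p => Function.update (fun _ => L) p (L+1) with hL'
  set r : ℝ := (2*L+1)/(2*(L+1)) with hr
  have hSP' : ∀ p ∈ P.primesBelow, SP P (Qw P ω' (L' p)) (w * r) := by
    intro p hp
    have := Qw_SP P ω' hω' (L' p)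
    convert this using 1
    rw [hw, ← Finset.mul_prod_erase _ _ hp, ← Finset.mul_prod_erase _ (fun q => (((L' p q).centralBinom : ℝ) / 4^(L' p q))) hp]
    have e1 : ∏ q ∈ P.primesBelow.erase p, (((L' p q).centralBinom : ℝ) / 4^(L' p q)) =
      ∏ q ∈ P.primesBelow.erase p, (L.centralBinom / 4^L : ℝ) :=
      Finset.prod_congr rfl fun q hq => by
        rw [hL']; simp [Function.update_of_ne (Finset.ne_of_mem_erase hq)]
    rw [e1]
    have e2 : ((L' p p).centralBinom : ℝ) / 4^(L' p p) = (L.centralBinom / 4^L : ℝ) * r := by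
      simp only [hL', Function.update_self]
      have := Nat.succ_mul_centralBinom_succ L
      have h2 : ((L:ℝ)+1) * (L+1).centralBinom = 2 * (2 * L + 1) * L.centralBinom := by exact_mod_cast this
      rw [hr, pow_succ]
      field_simp
      linear_combination 2 * h2
    rw [e2]; ring
  set ε := η * w / (16 * (P.primesBelow.card + 1)) with hε
  have hε0 : 0 < ε := by positivity
  obtain ⟨T1, hT1, h1⟩ := hSP.mean hε0
  choose! T2 hT2 h2 using fun p hp => (hSP' p hp).mean hε0
  refine ⟨T1 + ∑ p ∈ P.primesBelow, T2 p, ?_, fun T hT => ?_⟩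
  · have : 0 ≤ ∑ p ∈ P.primesBelow, T2 p := Finset.sum_nonneg fun p hp => (hT2 p hp).le
    linarith
  have hTT1 : T1 ≤ T := by
    have : 0 ≤ ∑ p ∈ P.primesBelow, T2 p := Finset.sum_nonneg fun p hp => (hT2 p hp).le
    linarith
  have hTT2 : ∀ p ∈ P.primesBelow, T2 p ≤ T := fun p hp => by
    have := Finset.single_le_sum (f := T2) (fun p hp => (hT2 p hp).le) hp
    linarith
  have key : ∀ τ, ‖Q τ‖^2 * ∑ p ∈ P.primesBelow, ‖cexp (-(Real.log p * τ) * I) - ω p‖^2 =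
      ∑ p ∈ P.primesBelow, (4 * ‖Q τ‖^2 - 4 * ‖Qw P ω' (L' p) τ‖^2) := by
    intro τ
    rw [Finset.mul_sum]
    refine Finset.sum_congr rfl fun p hp => ?_
    set u := ω' p * cexp (-(Real.log p * τ) * I) with hu
    have e1 : ‖cexp (-(Real.log p * τ) * I) - ω p‖ = ‖u - 1‖ := by
      have h1 : ω' p * ω p = 1 := by
        rw [hω'd]; simp only; rw [mul_comm, Complex.mul_conj', hω]; simp
      have : u - 1 = ω' p * (cexp (-(Real.log p * τ) * I) - ω p) := by
        rw [mul_sub, h1]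
      rw [this, norm_mul, hω', one_mul]
    have e2 : Qw P ω' (L' p) τ = Q τ * ((1+u)/2) := by
      rw [hQ]
      unfold Qw
      rw [← Finset.mul_prod_erase _ _ hp, ← Finset.mul_prod_erase _ (fun q => ((1 + ω' q * cexp (-(Real.log q * τ) * I)) / 2)^L) hp]
      have e3 : ∏ q ∈ P.primesBelow.erase p, ((1 + ω' q * cexp (-(Real.log q * τ) * I)) / 2)^(L' p q) =
        ∏ q ∈ P.primesBelow.erase p, ((1 + ω' q * cexp (-(Real.log q * τ) * I)) / 2)^L :=
        Finset.prod_congr rfl fun q hq => by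
          rw [hL']; simp [Function.update_of_ne (Finset.ne_of_mem_erase hq)]
      rw [e3]
      simp only [hL', Function.update_self, hu]
      ring
    rw [e1, unit_par (by rw [hu, norm_mul, hω', norm_expI, one_mul]), e2, norm_mul]
    ring
  simp only [key]
  have c1 : Continuous (fun τ => ‖Q τ‖^2) := (hSP.cont.norm).pow 2
  have c2 : ∀ p ∈ P.primesBelow, Continuous (fun τ => ‖Qw P ω' (L' p) τ‖^2) :=
    fun p hp => ((hSP' p hp).cont.norm).pow 2
  have c3 : ∀ p ∈ P.primesBelow, IntervalIntegrable
      (fun τ => 4 * ‖Q τ‖^2 - 4 * ‖Qw P ω' (L' p) τ‖^2) volume 0 T := fun p hp =>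
    ((continuous_const.mul c1).sub (continuous_const.mul (c2 p hp))).intervalIntegrable _ _
  have hT0 : 0 < T := lt_of_lt_of_le hT1 hTT1
  rw [intervalIntegral.integral_finsetSum c3]
  have each : ∀ p ∈ P.primesBelow, (∫ τ in (0:ℝ)..T, (4 * ‖Q τ‖^2 - 4 * ‖Qw P ω' (L' p) τ‖^2)) ≤
      (4 * w * (1 - r) + 8 * ε) * T := by
    intro p hp
    have i1 : IntervalIntegrable (fun τ => 4 * ‖Q τ‖^2) volume 0 T :=
      (continuous_const.mul c1).intervalIntegrable _ _
    have i2 : IntervalIntegrable (fun τ => 4 * ‖Qw P ω' (L' p) τ‖^2) volume 0 T :=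
      (continuous_const.mul (c2 p hp)).intervalIntegrable _ _
    rw [intervalIntegral.integral_sub i1 i2, intervalIntegral.integral_const_mul,
      intervalIntegral.integral_const_mul]
    have a1 := (abs_le.mp (h1 T hTT1)).2
    have a2 := (abs_le.mp (h2 p hp T (hTT2 p hp))).1
    nlinarith
  refine (Finset.sum_le_sum each).trans ?_
  rw [Finset.sum_const, nsmul_eq_mul, ← mul_assoc]
  refine mul_le_mul_of_nonneg_right ?_ hT0.le
  have hL1 : 1 - r = 1 / (2*(L+1)) := by rw [hr]; field_simp; ring
  rw [hL1]
  have b1 : (P.primesBelow.card : ℝ) * (4 * w * (1 / (2*(L+1)))) ≤ η * w / 2 := by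
    rw [div_le_iff₀ hη] at hL
    have : (P.primesBelow.card : ℝ) * (4 * w * (1 / (2*(L+1)))) = (4 * P.primesBelow.card) * w / (2*(L+1)) := by
      ring
    rw [this, div_le_iff₀ (by positivity)]
    have := mul_le_mul_of_nonneg_right hL hw0.le
    nlinarith
  have b2 : (P.primesBelow.card : ℝ) * (8 * ε) ≤ η * w / 2 := by
    have : (P.primesBelow.card : ℝ) * (8 * ε) = (P.primesBelow.card / (P.primesBelow.card + 1) : ℝ) * (η * w / 2) := by
      rw [hε]; field_simp; ring
    rw [this]
    refine mul_le_of_le_one_left (by positivity) ?_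
    rw [div_le_one (by positivity)]; linarith
  rw [mul_add]
  linarith

lemma smooth_rough {P m n m' n' : ℕ} (hm : m ∈ P.smoothNumbers) (hm' : m' ∈ P.smoothNumbers)
    (hn : ∀ p, p.Prime → p ∣ n → P ≤ p) (hn' : ∀ p, p.Prime → p ∣ n' → P ≤ p)
    (h : m * n = m' * n') : m = m' ∧ n = n' := by
  have cop : ∀ m n, m ∈ P.smoothNumbers → (∀ p, p.Prime → p ∣ n → P ≤ p) → Nat.Coprime m n := by
    intro m n hm hn
    refine Nat.Coprime.symm (Nat.coprime_of_dvd fun p hp h1 h2 => ?_)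
    have := hn p hp h1
    have := Nat.mem_smoothNumbers'.mp hm p hp h2
    omega
  have d1 : m ∣ m' := (cop m n' hm hn').dvd_of_dvd_mul_right (h ▸ dvd_mul_right _ _)
  have d2 : m' ∣ m := (cop m' n hm' hn).dvd_of_dvd_mul_right (h ▸ dvd_mul_right _ _)
  have e := Nat.dvd_antisymm d1 d2
  subst e
  exact ⟨rfl, Nat.eq_of_mul_eq_mul_left (Nat.pos_of_ne_zero (Nat.ne_zero_of_mem_smoothNumbers hm)) h⟩

lemma msw {a b R : ℝ} (ha : 1/2 < a) (hb : b < 1) (hab : a ≤ b) (hR : 0 ≤ R) {P : ℕ} {Q : ℝ → ℂ}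
    {w : ℝ} (hQ : SP P Q w) (hQ1 : ∀ τ, ‖Q τ‖ ≤ 1) {t : ℝ}
    (ht : ∀ F : Finset ℕ, (∀ n ∈ F, P ≤ n) → ∑ n ∈ F, (n:ℝ)^(-(2*a)) ≤ t) {ε : ℝ} (hε : 0 < ε) :
    ∃ T0 > 0, ∀ T ≥ T0, ∀ s ∈ Sreg a b R, ∫ τ in (0:ℝ)..T,
      ‖Q τ‖^2 * ‖MP P (s + τ * I) * riemannZeta (s + τ * I) - 1‖^2 ≤ (2 * w * t + ε) * T := by
  classical
  obtain ⟨N0, h0⟩ := msa_sieve ha hb hab hR P (ε/4) (by positivity)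
  set N := max N0 2
  obtain ⟨T1, hT1, h1⟩ := h0 N (le_max_left _ _)
  have hN2 : 2 ≤ N := le_max_right _ _
  have hQc := hQ.cont
  obtain ⟨ι, A, f, q, hf, hs, hq, rfl⟩ := hQ
  set Rg := (Finset.Ico 2 N).filter (fun n => ∀ p, p.Prime → p ∣ n → P ≤ p) with hRg
  have hRgP : ∀ n ∈ Rg, P ≤ n := by
    intro n hn
    simp only [hRg, Finset.mem_filter, Finset.mem_Ico] at hn
    exact (hn.2 n.minFac (Nat.minFac_prime (by omega)) (Nat.minFac_dvd n)).trans
      (Nat.minFac_le (by omega))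
  have hRg1 : ∀ n ∈ Rg, 1 ≤ n := by
    intro n hn
    simp only [hRg, Finset.mem_filter, Finset.mem_Ico] at hn
    omega
  have hRgr : ∀ n ∈ Rg, ∀ p, p.Prime → p ∣ n → P ≤ p := fun n hn => (Finset.mem_filter.mp hn).2
  obtain ⟨T2, hT2, h2⟩ := ms_limit (A ×ˢ Rg) (fun x => Real.log ((f x.1 * x.2 : ℕ) : ℝ)) (by
    rintro ⟨i, m⟩ hi ⟨j, n⟩ hj e
    simp only [Finset.coe_product, Set.mem_prod, Finset.mem_coe] at hi hj e
    have h3 := log_inj (x₁ := f i * m) (x₂ := f j * n)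
      (Nat.mul_pos (Nat.pos_of_ne_zero (Nat.ne_zero_of_mem_smoothNumbers (hs i hi.1))) (hRg1 m hi.2))
      (Nat.mul_pos (Nat.pos_of_ne_zero (Nat.ne_zero_of_mem_smoothNumbers (hs j hj.1))) (hRg1 n hj.2)) e
    obtain ⟨e1, e2⟩ := smooth_rough (hs i hi.1) (hs j hj.1) (hRgr m hi.2) (hRgr n hj.2) h3
    rw [hf hi.1 hj.1 e1, e2]) (∑ i ∈ A, ‖q i‖) (show 0 < ε/4 by positivity)
  refine ⟨max T1 T2, lt_max_of_lt_left hT1, fun T hT s hsS => ?_⟩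
  have a1 := h1 T ((le_max_left _ _).trans hT) s hsS
  have hT0 : 0 ≤ T := (hT1.trans_le ((le_max_left _ _).trans hT)).le
  have hb1 : ∀ n ∈ Rg, ‖(n:ℂ)^(-s)‖ ≤ (n:ℝ)^(-a) := fun n hn => by
    rw [norm_npow (hRg1 n hn)]
    have : (1:ℝ) ≤ n := by exact_mod_cast hRg1 n hn
    exact Real.rpow_le_rpow_of_exponent_le this (by linarith [hsS.1])
  have a2 := h2 T ((le_max_right _ _).trans hT) (fun x => q x.1 * (x.2:ℂ)^(-s)) (by
    rintro ⟨i, n⟩ hx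
    obtain ⟨hi, hn⟩ := Finset.mem_product.mp hx
    rw [norm_mul]
    have h2 : ‖(n:ℂ)^(-s)‖ ≤ 1 := (hb1 n hn).trans (by
      have : (1:ℝ) ≤ n := by exact_mod_cast hRg1 n hn
      exact Real.rpow_le_one_of_one_le_of_nonpos this (by linarith))
    have h3 := Finset.single_le_sum (f := fun n => ‖q n‖) (fun i _ => norm_nonneg _) hi
    have h4 := norm_nonneg (q i)
    nlinarith)
  -- the polynomial product
  set D : ℝ → ℂ := fun τ => ∑ n ∈ Rg, (n:ℂ)^(-(s + τ * I)) with hD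
  have eD : ∀ τ : ℝ, ∑ n ∈ Finset.Ico 1 N, cr P n * (n:ℂ)^(-(s + τ * I)) = 1 + D τ := by
    intro τ
    rw [Finset.sum_eq_sum_Ico_succ_bot (by omega)]
    congr 1
    · have : cr P 1 = 1 := by
        unfold cr; rw [if_pos]; intro p hp hd
        exact absurd (Nat.dvd_one.mp hd) hp.one_lt.ne'
      rw [this]; simp
    · rw [hD, hRg]
      simp only
      rw [Finset.sum_filter]
      refine Finset.sum_congr rfl fun n _ => ?_
      unfold cr; split_ifs <;> simp
  have eQD : ∀ τ : ℝ, Q τ * D τ = ∑ x ∈ A ×ˢ Rg, q x.1 * (x.2:ℂ)^(-s) *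
      cexp (-(Real.log ((f x.1 * x.2 : ℕ) : ℝ) * τ) * I) := by
    intro τ
    rw [hq, hD, Finset.sum_mul_sum, Finset.sum_product]
    refine Finset.sum_congr rfl fun i hi => Finset.sum_congr rfl fun n hn => ?_
    rw [cpow_line (hRg1 n hn)]
    have hlog : Real.log ((f i * n : ℕ):ℝ) = Real.log (f i) + Real.log n := by
      push_cast
      rw [Real.log_mul (smooth_pos (hs i hi)).ne' (by
        have := hRg1 n hn
        exact_mod_cast (by omega))]
    simp only [hlog]
    have : cexp (-(((Real.log (f i) + Real.log n : ℝ) : ℂ) * τ) * I) =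
      cexp (-((Real.log (f i)) * τ) * I) * cexp (-((Real.log n) * τ) * I) := by
      rw [← Complex.exp_add]; congr 1; push_cast; ring
    rw [this]; ring
  have a3 : ∫ τ in (0:ℝ)..T, ‖Q τ * D τ‖^2 ≤ ((∑ i ∈ A, ‖q i‖^2) * t + ε/4) * T := by
    simp only [eQD]
    have h3 : ∑ x ∈ A ×ˢ Rg, ‖q x.1 * (x.2:ℂ)^(-s)‖^2 ≤ (∑ i ∈ A, ‖q i‖^2) * t := by
      rw [Finset.sum_product, Finset.sum_mul]
      refine Finset.sum_le_sum fun i _ => ?_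
      simp only [norm_mul, mul_pow]
      rw [← Finset.mul_sum]
      gcongr
      refine le_trans (Finset.sum_le_sum fun n hn => ?_) (ht Rg hRgP)
      have : (n:ℝ)^(-(2*a)) = ((n:ℝ)^(-a))^2 := by
        rw [← Real.rpow_natCast, ← Real.rpow_mul (by positivity)]; congr 1; push_cast; ring
      rw [this]
      have := hb1 n hn
      gcongr
    have h4 := (abs_le.mp a2).2
    have h5 := mul_le_mul_of_nonneg_left h3 hT0
    linarith
  have vZ : VC (Sreg a b R) (fun s => MP P s * riemannZeta s) := (VC.MP P).mul (VC.zeta hb)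
  have vX : VC (Sreg a b R) (fun s => MP P s * riemannZeta s -
      ∑ n ∈ Finset.Ico 1 N, cr P n * (n:ℂ)^(-s)) :=
    vZ.sub (VC.poly _ (fun n hn => (Finset.mem_Ico.mp hn).1) _)
  have cD : Continuous D := by
    have := VC.poly (S := Sreg a b R) Rg hRg1 (fun _ => 1) s hsS
    simp only [one_mul] at this
    exact this
  have i1 : IntervalIntegrable (fun τ : ℝ => ‖Q τ‖^2 * ‖MP P (s + τ * I) * riemannZeta (s + τ * I) - 1‖^2) volume 0 T := by
    apply Continuous.intervalIntegrable
    exact (hQc.norm.pow 2).mul ((((vZ s hsS).sub continuous_const).norm).pow 2)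
  have i2 : IntervalIntegrable (fun τ => 2 * ‖Q τ * D τ‖^2) volume 0 T :=
    (continuous_const.mul ((hQc.mul cD).norm.pow 2)).intervalIntegrable _ _
  have hmono := intervalIntegral.integral_mono_on hT0 i1 (((vX.ii hsS 0 T).const_mul 2).add i2)
    (fun τ hτ => by
      set Z := MP P (s + τ * I) * riemannZeta (s + τ * I)
      show _ ≤ 2 * ‖Z - ∑ n ∈ Finset.Ico 1 N, cr P n * (n:ℂ)^(-(s + τ * I))‖^2 + 2 * ‖Q τ * D τ‖^2
      rw [eD, norm_mul]
      have e : Z - 1 = (Z - (1 + D τ)) + D τ := by ring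
      have h1 := norm_add_le (Z - (1 + D τ)) (D τ)
      rw [← e] at h1
      have h3 := norm_nonneg (Z - 1)
      have h4 := sq_nonneg (‖Z - (1 + D τ)‖ - ‖D τ‖)
      have h5 : ‖Z - 1‖^2 ≤ 2 * ‖Z - (1 + D τ)‖^2 + 2 * ‖D τ‖^2 := by nlinarith
      have h6 : ‖Q τ‖^2 ≤ 1 := pow_le_one₀ (norm_nonneg _) (hQ1 τ)
      have h7 := sq_nonneg ‖Z - (1 + D τ)‖
      calc ‖Q τ‖^2 * ‖Z - 1‖^2 ≤ ‖Q τ‖^2 * (2 * ‖Z - (1 + D τ)‖^2 + 2 * ‖D τ‖^2) := by gcongr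
        _ ≤ _ := by nlinarith)
  refine hmono.trans ?_
  rw [intervalIntegral.integral_add ((vX.ii hsS 0 T).const_mul 2) i2,
    intervalIntegral.integral_const_mul, intervalIntegral.integral_const_mul]
  linarith

/-- area integral of the error -/
noncomputable def EE (P : ℕ) (K : Set ℂ) (τ : ℝ) : ℝ :=
  ∫ s in K, ‖MP P (s + τ * I) * riemannZeta (s + τ * I) - 1‖^2

lemma jc {a b R : ℝ} (hb : b < 1) (P : ℕ) : ContinuousOn
    (fun x : ℂ × ℝ => ‖MP P (x.1 + x.2 * I) * riemannZeta (x.1 + x.2 * I) - 1‖^2)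
    (Sreg a b R ×ˢ Set.univ) := by
  refine ((ContinuousOn.sub (ContinuousOn.mul ?_ ?_) continuousOn_const).norm).pow 2
  · unfold MP
    refine Continuous.continuousOn (continuous_finsetProd _ fun p hp => continuous_const.sub ?_)
    have : (p:ℂ) ≠ 0 := by exact_mod_cast (Nat.prime_of_mem_primesBelow hp).ne_zero
    have h : Continuous (fun s : ℂ => (p:ℂ)^(-s)) := continuous_iff_continuousAt.mpr fun s => (continuousAt_const_cpow this).comp continuous_neg.continuousAt
    exact h.comp (by fun_prop)
  · intro x hx
    apply ContinuousAt.continuousWithinAt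
    have : x.1 + x.2 * I ≠ 1 := by
      intro h
      have := congrArg Complex.re h
      simp at this
      linarith [hx.1.2.1]
    exact (differentiableAt_riemannZeta this).continuousAt.comp (f := fun x : ℂ × ℝ => x.1 + x.2 * I)
      (by fun_prop)

lemma EE_int {a b R : ℝ} (hb : b < 1) (P : ℕ) {K : Set ℂ} (hK : IsCompact K) (hKS : K ⊆ Sreg a b R)
    {Q : ℝ → ℂ} (hQ : Continuous Q) {T : ℝ} (hT : 0 ≤ T) :
    IntervalIntegrable (fun τ => ‖Q τ‖^2 * EE P K τ) volume 0 T ∧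
    ∫ τ in (0:ℝ)..T, ‖Q τ‖^2 * EE P K τ = ∫ s in K, ∫ τ in (0:ℝ)..T,
      ‖Q τ‖^2 * ‖MP P (s + τ * I) * riemannZeta (s + τ * I) - 1‖^2 := by
  have hint : Integrable (fun x : ℝ × ℂ => ‖Q x.1‖^2 * ‖MP P (x.2 + x.1 * I) *
      riemannZeta (x.2 + x.1 * I) - 1‖^2) ((volume.restrict (Set.Ioc 0 T)).prod (volume.restrict K)) := by
    rw [Measure.prod_restrict]
    have : IntegrableOn (fun x : ℝ × ℂ => ‖Q x.1‖^2 * ‖MP P (x.2 + x.1 * I) *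
      riemannZeta (x.2 + x.1 * I) - 1‖^2) (Set.Icc 0 T ×ˢ K) (volume.prod volume) := by
      refine ContinuousOn.integrableOn_compact (isCompact_Icc.prod hK) ?_
      refine ContinuousOn.mul (by fun_prop) ?_
      exact (jc (a := a) (R := R) hb P).comp (f := fun x : ℝ × ℂ => (x.2, x.1)) (by fun_prop) (fun x hx => ⟨hKS hx.2, trivial⟩)
    exact this.mono_set (Set.prod_mono Set.Ioc_subset_Icc_self le_rfl)
  constructor
  · rw [intervalIntegrable_iff_integrableOn_Ioc_of_le hT]
    have := hint.integral_prod_left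
    refine this.congr (ae_of_all _ fun τ => ?_)
    simp only [EE]
    rw [← integral_const_mul]
  · simp only [intervalIntegral.integral_of_le hT]
    rw [← integral_integral_swap hint]
    refine integral_congr_ae (ae_of_all _ fun τ => ?_)
    simp only [EE]
    rw [← integral_const_mul]

lemma EE_mean {a b R : ℝ} (ha : 1/2 < a) (hb : b < 1) (hab : a ≤ b) (hR : 0 ≤ R) {P : ℕ} {Q : ℝ → ℂ}
    {w : ℝ} (hQ : SP P Q w) (hQ1 : ∀ τ, ‖Q τ‖ ≤ 1) {t : ℝ}
    (ht : ∀ F : Finset ℕ, (∀ n ∈ F, P ≤ n) → ∑ n ∈ F, (n:ℝ)^(-(2*a)) ≤ t) {ε : ℝ} (hε : 0 < ε)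
    {K : Set ℂ} (hK : IsCompact K) (hKS : K ⊆ Sreg a b R) :
    ∃ T0 > 0, ∀ T ≥ T0, ∫ τ in (0:ℝ)..T, ‖Q τ‖^2 * EE P K τ ≤
      volume.real K * ((2 * w * t + ε) * T) := by
  obtain ⟨T0, h0, h⟩ := msw ha hb hab hR hQ hQ1 ht hε
  refine ⟨T0, h0, fun T hT => ?_⟩
  rw [(EE_int hb P hK hKS hQ.cont (h0.le.trans hT)).2]
  have := norm_setIntegral_le_of_norm_le_const (μ := volume) (s := K) (f := fun s => ∫ τ in (0:ℝ)..T,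
      ‖Q τ‖^2 * ‖MP P (s + τ * I) * riemannZeta (s + τ * I) - 1‖^2) (C := (2 * w * t + ε) * T)
    hK.measure_lt_top (fun s hs => by
      rw [Real.norm_of_nonneg]
      · exact h T hT s (hKS hs)
      · exact intervalIntegral.integral_nonneg (h0.le.trans hT) fun τ _ => by positivity)
  exact (le_abs_self _).trans (this.trans (le_of_eq (mul_comm _ _)))

lemma circ_le {f : ℂ → ℂ} {z : ℂ} {r : ℝ} (hr : 0 < r)
    (hf : ∀ w ∈ Metric.closedBall z r, DifferentiableAt ℂ f w) :
    ENNReal.ofReal (2 * Real.pi) * ‖f z‖ₑ ≤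
      ∫⁻ θ in Set.Ioo (-Real.pi) Real.pi, ‖f (circleMap z r θ)‖ₑ := by
  have hd : DiffContOnCl ℂ f (Metric.ball z |r|) := by
    rw [abs_of_pos hr]
    refine DifferentiableOn.diffContOnCl fun w hw => (hf w ?_).differentiableWithinAt
    exact Metric.closure_ball_subset_closedBall hw
  have h1 := hd.circleAverage
  rw [Real.circleAverage_def] at h1
  have hper : Function.Periodic (fun θ => f (circleMap z r θ)) (2 * Real.pi) := fun θ => by
    simp only [periodic_circleMap z r θ]
  have h2 := hper.intervalIntegral_add_eq 0 (-Real.pi)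
  rw [zero_add] at h2
  rw [h2] at h1
  have h3 : (-Real.pi + 2 * Real.pi) = Real.pi := by ring
  rw [h3, intervalIntegral.integral_of_le (by linarith [Real.pi_pos]), integral_Ioc_eq_integral_Ioo] at h1
  have h4 := enorm_integral_le_lintegral_enorm (μ := volume.restrict (Set.Ioo (-Real.pi) Real.pi)) (fun θ => f (circleMap z r θ))
  refine le_trans (le_of_eq ?_) h4
  rw [← h1, enorm_smul]
  rw [← mul_assoc]
  have : ENNReal.ofReal (2 * Real.pi) * ‖(2 * Real.pi)⁻¹‖ₑ = 1 := by
    rw [← ofReal_norm, ← ENNReal.ofReal_mul (by positivity), Real.norm_of_nonneg (by positivity),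
      mul_inv_cancel₀ (by positivity), ENNReal.ofReal_one]
  rw [this, one_mul]

lemma area_le {f : ℂ → ℂ} {z : ℂ} {r : ℝ} (hr : 0 < r)
    (hf : ∀ w ∈ Metric.closedBall z r, DifferentiableAt ℂ f w) :
    ENNReal.ofReal (r^2) * ‖f z‖ₑ ≤ ∫⁻ w in Metric.closedBall z r, ‖f w‖ₑ := by
  classical
  set F : ℂ → ℝ≥0∞ := (Metric.closedBall z r).piecewise (fun w => ‖f w‖ₑ) (fun _ => 0) with hF
  have hFm : Measurable F := by
    refine ContinuousOn.measurable_piecewise ?_ continuousOn_const measurableSet_closedBall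
    have : ContinuousOn f (Metric.closedBall z r) := fun w hw => (hf w hw).continuousAt.continuousWithinAt
    exact continuous_enorm.comp_continuousOn this
  have e1 : ∫⁻ w in Metric.closedBall z r, ‖f w‖ₑ = ∫⁻ w, F w := by
    rw [← lintegral_indicator measurableSet_closedBall]
    congr 1
  have e2 : ∫⁻ w, F w = ∫⁻ w, F (z + w) := (lintegral_add_left_eq_self F z).symm
  rw [e1, e2, ← Complex.lintegral_comp_polarCoord_symm, polarCoord_target]
  rw [Measure.volume_eq_prod, setLIntegral_prod]
  swap
  · apply Measurable.aemeasurable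
    simp only [Complex.polarCoord_symm_apply, smul_eq_mul]
    refine Measurable.mul (by fun_prop) (hFm.comp (by fun_prop))
  have e3 : ∀ ρ ∈ Set.Ioo (r/2) r, ENNReal.ofReal (r * Real.pi) * ‖f z‖ₑ ≤
      ∫⁻ θ in Set.Ioo (-Real.pi) Real.pi, ENNReal.ofReal ρ • F (z + Complex.polarCoord.symm (ρ, θ)) := by
    intro ρ hρ
    have hρ0 : 0 < ρ := by linarith [hρ.1]
    have h1 := circ_le (f := f) (z := z) hρ0 (fun w hw => hf w (Metric.closedBall_subset_closedBall hρ.2.le hw))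
    have h2 : ∀ θ, ENNReal.ofReal ρ • F (z + Complex.polarCoord.symm (ρ, θ)) =
        ENNReal.ofReal ρ * ‖f (circleMap z ρ θ)‖ₑ := by
      intro θ
      have e : z + Complex.polarCoord.symm (ρ, θ) = circleMap z ρ θ := by
        rw [Complex.polarCoord_symm_apply, circleMap, Complex.exp_mul_I]
        simp
      rw [e, hF, Set.piecewise_eq_of_mem, smul_eq_mul]
      rw [Metric.mem_closedBall, dist_eq_norm]
      simp [circleMap, abs_of_pos hρ0, hρ.2.le]
    simp only [h2]
    rw [lintegral_const_mul' _ _ ENNReal.ofReal_ne_top]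
    refine le_trans ?_ (mul_le_mul_right h1 _)
    rw [← mul_assoc, ← ENNReal.ofReal_mul hρ0.le]
    refine mul_le_mul_left (ENNReal.ofReal_le_ofReal (by nlinarith [Real.pi_pos, hρ.1])) _
  calc ENNReal.ofReal (r^2) * ‖f z‖ₑ ≤ ENNReal.ofReal (r * Real.pi) * ‖f z‖ₑ * volume (Set.Ioo (r/2) r) := by
        rw [Real.volume_Ioo, mul_right_comm, ← ENNReal.ofReal_mul (by positivity)]
        gcongr
        nlinarith [Real.pi_gt_three, sq_nonneg r]
    _ = ∫⁻ ρ in Set.Ioo (r/2) r, ENNReal.ofReal (r * Real.pi) * ‖f z‖ₑ := by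
        rw [setLIntegral_const]
    _ ≤ ∫⁻ ρ in Set.Ioo (r/2) r, ∫⁻ θ in Set.Ioo (-Real.pi) Real.pi,
          ENNReal.ofReal ρ • F (z + Complex.polarCoord.symm (ρ, θ)) := setLIntegral_mono' measurableSet_Ioo e3
    _ ≤ _ := lintegral_mono_set fun ρ hρ => by
        have : r/2 < ρ := hρ.1
        show 0 < ρ
        linarith

lemma sq_le_area {f : ℂ → ℂ} {z : ℂ} {r : ℝ} (hr : 0 < r) {K : Set ℂ} (hK : IsCompact K)
    (hz : Metric.closedBall z r ⊆ K) (hf : ∀ w ∈ K, DifferentiableAt ℂ f w) :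
    r^2 * ‖f z‖^2 ≤ ∫ w in K, ‖f w‖^2 := by
  have h1 := area_le (f := fun w => f w^2) hr (fun w hw => (hf w (hz hw)).pow 2)
  have hc : ContinuousOn (fun w => ‖f w‖^2) K := fun w hw =>
    ((hf w hw).continuousAt.norm.pow 2).continuousWithinAt
  have h2 := h1.trans (lintegral_mono_set hz)
  have e : ∀ w, ‖f w^2‖ₑ = ENNReal.ofReal (‖f w‖^2) := fun w => by
    rw [← ofReal_norm, norm_pow]
  simp only [e] at h2
  rw [← ofReal_integral_eq_lintegral_ofReal (hc.integrableOn_compact hK)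
    (ae_of_all _ fun _ => by positivity), ← ENNReal.ofReal_mul (by positivity)] at h2
  exact (ENNReal.ofReal_le_ofReal_iff (integral_nonneg fun _ => by positivity)).mp h2

lemma conn_compl (c : ℂ) {r : ℝ} (hr : 0 ≤ r) : IsConnected (Metric.closedBall c r)ᶜ := by
  have h := isConnected_compl_singleton_of_one_lt_rank (E := ℂ) (by simp) 0
  have h2 := h.image (fun w => c + ((r + ‖w‖) / ‖w‖ : ℝ) * w) (by
    refine continuousOn_const.add (ContinuousOn.mul ?_ continuousOn_id)
    refine Complex.continuous_ofReal.comp_continuousOn ?_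
    refine ContinuousOn.div (by fun_prop) (by fun_prop) fun w hw => by simpa using hw)
  convert h2
  ext z
  simp only [Set.mem_compl_iff, Metric.mem_closedBall, not_le, Set.mem_image, Set.mem_singleton_iff,
    dist_eq_norm]
  constructor
  · intro hz
    have hn : 0 < ‖z - c‖ := hr.trans_lt hz
    refine ⟨((‖z - c‖ - r) / ‖z - c‖ : ℝ) * (z - c), ?_, ?_⟩
    · refine mul_ne_zero ?_ (norm_pos_iff.mp hn)
      exact_mod_cast (div_pos (by linarith) hn).ne'
    · have : ‖(((‖z - c‖ - r) / ‖z - c‖ : ℝ) : ℂ) * (z - c)‖ = ‖z - c‖ - r := by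
        rw [norm_mul, Complex.norm_real, Real.norm_of_nonneg (div_nonneg (by linarith) hn.le)]
        field_simp
      rw [this, ← mul_assoc, ← Complex.ofReal_mul]
      have h3 : (r + (‖z - c‖ - r)) / (‖z - c‖ - r) * ((‖z - c‖ - r) / ‖z - c‖) = 1 := by
        have : ‖z - c‖ - r ≠ 0 := by linarith
        field_simp; ring
      rw [h3]; simp
  · rintro ⟨w, hw, rfl⟩
    have hn : 0 < ‖w‖ := norm_pos_iff.mpr hw
    rw [add_sub_cancel_left, norm_mul, Complex.norm_real, Real.norm_of_nonneg (by positivity)]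
    have : (r + ‖w‖) / ‖w‖ * ‖w‖ = r + ‖w‖ := by field_simp
    rw [this]; linarith

lemma supNorm_lt {K : Set ℂ} {f : ℂ → ℂ} {ε : ℝ} (h : supNorm K f < ENNReal.ofReal ε) :
    ∀ s ∈ K, ‖f s‖ < ε := by
  intro s hs
  have h1 : (‖f s‖₊ : ℝ≥0∞) ≤ supNorm K f := le_iSup₂ (f := fun s _ => (‖f s‖₊ : ℝ≥0∞)) s hs
  have h2 := h1.trans_lt h
  rw [← enorm_eq_nnnorm, ← ofReal_norm] at h2
  exact (ENNReal.ofReal_lt_ofReal_iff_of_nonneg (norm_nonneg _)).mp h2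

lemma lt_supNorm {K : Set ℂ} {f : ℂ → ℂ} {ε δ : ℝ} (hε : 0 < ε) (hδ : δ < ε) (h : ∀ s ∈ K, ‖f s‖ ≤ δ) :
    supNorm K f < ENNReal.ofReal ε := by
  refine lt_of_le_of_lt (iSup₂_le (a := ENNReal.ofReal δ) fun s hs => ?_) ((ENNReal.ofReal_lt_ofReal_iff hε).mpr hδ)
  rw [← enorm_eq_nnnorm, ← ofReal_norm]
  exact ENNReal.ofReal_le_ofReal (h s hs)

lemma MP_diff (P : ℕ) (z : ℂ) : DifferentiableAt ℂ (MP P) z := by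
  unfold MP
  refine DifferentiableAt.fun_finsetProd fun p hp => ?_
  have hp0 : (p:ℂ) ≠ 0 := by
    exact_mod_cast (Nat.prime_of_mem_primesBelow hp).ne_zero
  refine (differentiableAt_const _).sub ?_
  exact (differentiableAt_id.neg).const_cpow (Or.inl hp0)

lemma EE_diff (P : ℕ) (τ : ℝ) {s : ℂ} (hs : s.re < 1) : DifferentiableAt ℂ
    (fun s : ℂ => MP P (s + τ * I) * riemannZeta (s + τ * I) - 1) s := by
  have h1 : s + τ * I ≠ 1 := by
    intro h
    have := congrArg Complex.re h
    simp at this; linarith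
  have h2 : DifferentiableAt ℂ (fun s : ℂ => s + τ * I) s := by fun_prop
  refine DifferentiableAt.sub_const (DifferentiableAt.mul ?_ ?_) _
  · exact DifferentiableAt.comp s (f := fun s : ℂ => s + τ * I) (MP_diff P _) h2
  · exact DifferentiableAt.comp s (f := fun s : ℂ => s + τ * I) (differentiableAt_riemannZeta h1) h2

lemma isOpen_strip : IsOpen strip :=
  (isOpen_lt continuous_const Complex.continuous_re).inter (isOpen_lt Complex.continuous_re continuous_const)

lemma hurwitz {ρ : ℂ} {r m : ℝ} (hr : 0 < r) (hm : 0 < m) (h0 : riemannZeta ρ = 0)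
    (hs : ∀ s ∈ Metric.sphere ρ r, m ≤ ‖riemannZeta s‖) {f : ℂ → ℂ}
    (hd : ∀ s ∈ Metric.closedBall ρ r, DifferentiableAt ℂ f s)
    (hf : ∀ s ∈ Metric.closedBall ρ r, ‖f s - riemannZeta s‖ < m / 2) :
    ∃ z ∈ Metric.closedBall ρ r, f z = 0 := by
  by_contra! hne
  have hd1 : DiffContOnCl ℂ (fun s => (f s)⁻¹) (Metric.ball ρ r) :=
    DifferentiableOn.diffContOnCl fun w hw => by
      rw [closure_ball _ hr.ne'] at hw
      exact ((hd w hw).inv (hne w hw)).differentiableWithinAt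
  have h := norm_le_of_forall_mem_frontier_norm_le Metric.isBounded_ball hd1 (C := 2 / m) (fun z hz => by
    rw [frontier_ball _ hr.ne'] at hz
    have h1 := hs z hz
    have h2 := hf z (Metric.sphere_subset_closedBall hz)
    have h3 : m / 2 ≤ ‖f z‖ := by
      have := norm_sub_norm_le (riemannZeta z) (f z)
      rw [norm_sub_rev] at this; linarith
    rw [norm_inv, ← inv_div]
    exact inv_anti₀ (by positivity) h3) (subset_closure (Metric.mem_ball_self hr))
  have h4 := hf ρ (Metric.mem_closedBall_self hr.le)
  rw [h0, sub_zero] at h4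
  rw [norm_inv, ← inv_div] at h
  have hp : 0 < ‖f ρ‖ := norm_pos_iff.mpr (hne ρ (Metric.mem_closedBall_self hr.le))
  have := (inv_le_inv₀ hp (by positivity)).mp h
  linarith

lemma ball_Sreg {ρ : ℂ} {r : ℝ} (h : Metric.closedBall ρ r ⊆ strip) (hr : 0 ≤ r) :
    ∃ a b R, 1/2 < a ∧ b < 1 ∧ a ≤ b ∧ 0 ≤ R ∧ Metric.closedBall ρ r ⊆ Sreg a b R := by
  have h1 : ρ - r ∈ strip := h (by simp [abs_of_nonneg hr])
  have h2 : ρ + r ∈ strip := h (by simp [abs_of_nonneg hr])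
  simp only [strip, Set.mem_ofPred_eq, Complex.sub_re, Complex.add_re, Complex.ofReal_re] at h1 h2
  refine ⟨ρ.re - r, ρ.re + r, ‖ρ‖ + r, h1.1, h2.2, by linarith, by positivity, fun s hs => ?_⟩
  rw [Metric.mem_closedBall, dist_eq_norm] at hs
  have h3 := (Complex.abs_re_le_norm (s - ρ)).trans hs
  rw [abs_le, Complex.sub_re] at h3
  refine ⟨by linarith [h3.1], by linarith [h3.2], ?_⟩
  have := norm_add_le (s - ρ) ρ
  rw [sub_add_cancel] at this
  linarith

lemma markov {E : ℝ → ℝ} {S : Set ℝ} {c T : ℝ} (hT : 0 ≤ T) (hE : ∀ τ, 0 ≤ E τ)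
    (hi : IntervalIntegrable E volume 0 T) (hS : ∀ τ ∈ S, c ≤ E τ) (hc : 0 ≤ c) :
    c * (volume (S ∩ Set.Icc 0 T)).toReal ≤ ∫ τ in (0:ℝ)..T, E τ := by
  rw [intervalIntegral.integral_of_le hT, ← integral_Icc_eq_integral_Ioc]
  have hi' := ((intervalIntegrable_iff_integrableOn_Icc_of_le hT).mp hi)
  refine le_trans ?_ (mul_meas_ge_le_integral_of_nonneg (ae_of_all _ hE) hi' c)
  refine mul_le_mul_of_nonneg_left ?_ hc
  rw [Measure.real, Measure.restrict_apply' measurableSet_Icc]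
  refine ENNReal.toReal_mono ?_ (measure_mono fun x hx => ⟨hS x hx.1, hx.2⟩)
  exact ((measure_mono Set.inter_subset_right).trans_lt (by simp)).ne

theorem rh_of_approx (H : ∀ K : Set ℂ, IsCompact K → K ⊆ strip → IsConnected Kᶜ → ∀ ε : ℝ, 0 < ε →
    0 < lowerDens {τ : ℝ | supNorm K (fun s => riemannZeta (s + τ * Complex.I) - riemannZeta s) < ENNReal.ofReal ε}) :
    RiemannHypothesis := by
  by_contra hn
  obtain ⟨ρ, hρ, h0⟩ := exists_zero_of_not_RH hn
  obtain ⟨r1, hr1, hb⟩ := Metric.nhds_basis_closedBall.mem_iff.mp (isOpen_strip.mem_nhds hρ)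
  have hfin := (isCompact_closedBall ρ r1).inter_riemannZetaZeros_finite
  have hfin2 := hfin.image (fun z => dist z ρ)
  obtain ⟨r, hr, hrn⟩ : ∃ r ∈ Set.Ioo 0 (r1/2), r ∉ (fun z => dist z ρ) '' (Metric.closedBall ρ r1 ∩ riemannZetaZeros) := by
    have := (Set.Ioo_infinite (show (0:ℝ) < r1/2 by linarith)).sdiff hfin2
    obtain ⟨r, hr⟩ := this.nonempty
    exact ⟨r, hr.1, hr.2⟩
  have hr0 := hr.1
  have hsub : Metric.closedBall ρ (2 * r) ⊆ strip :=
    (Metric.closedBall_subset_closedBall (by linarith [hr.2])).trans hb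
  have hsub1 : Metric.closedBall ρ r ⊆ Metric.closedBall ρ (2*r) :=
    Metric.closedBall_subset_closedBall (by linarith)
  have hne1 : ∀ s ∈ strip, s ≠ 1 := fun s hs h => by rw [h] at hs; simp [strip] at hs
  have hsph : ∀ s ∈ Metric.sphere ρ r, riemannZeta s ≠ 0 := fun s hs h => hrn
    ⟨s, ⟨Metric.closedBall_subset_closedBall (by linarith [hr.2]) (Metric.sphere_subset_closedBall hs), h⟩, hs⟩
  obtain ⟨s0, hs0, hmin⟩ := (isCompact_sphere ρ r).exists_isMinOn (NormedSpace.sphere_nonempty.mpr hr0.le)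
    (f := fun s => ‖riemannZeta s‖) (fun s hs => (differentiableAt_riemannZeta (hne1 s (hsub (hsub1
      (Metric.sphere_subset_closedBall hs))))).continuousAt.norm.continuousWithinAt)
  set m := ‖riemannZeta s0‖ with hm
  have hm0 : 0 < m := norm_pos_iff.mpr (hsph s0 hs0)
  have hpos := H (Metric.closedBall ρ r) (isCompact_closedBall _ _) (hsub1.trans hsub) (conn_compl _ hr0.le) (m/2) (by positivity)
  set G := {τ : ℝ | supNorm (Metric.closedBall ρ r) (fun s => riemannZeta (s + τ * Complex.I) - riemannZeta s) < ENNReal.ofReal (m/2)} with hG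
  obtain ⟨a, b, R, ha, hb1, hab, hR, hS⟩ := ball_Sreg hsub (by positivity)
  have hE : ∀ P, ∀ τ ∈ G, r^2 ≤ EE P (Metric.closedBall ρ (2*r)) τ := by
    intro P τ hτ
    have h1 := supNorm_lt hτ
    obtain ⟨z, hz, hz0⟩ := hurwitz hr0 hm0 h0 (fun s hs => hmin hs) (f := fun s => riemannZeta (s + τ * I))
      (fun s hs => by
        have hs1 := (hsub (hsub1 hs)).2
        refine DifferentiableAt.comp s (f := fun s : ℂ => s + τ * I) (differentiableAt_riemannZeta ?_) (by fun_prop)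
        intro h
        have := congrArg Complex.re h
        simp at this; linarith) h1
    have h2 := sq_le_area hr0 (isCompact_closedBall ρ (2*r)) (z := z)
      (f := fun s : ℂ => MP P (s + τ * I) * riemannZeta (s + τ * I) - 1)
      (Metric.closedBall_subset_closedBall' (by rw [Metric.mem_closedBall] at hz; linarith))
      (fun w hw => EE_diff P τ (hsub hw).2)
    simpa [hz0, EE] using h2
  obtain ⟨c, hc0, hc⟩ := exists_between hpos
  set V := volume.real (Metric.closedBall ρ (2*r)) with hV
  have hV0 : 0 ≤ V := measureReal_nonneg
  set δ := c * r^2 / (4 * (V + 1)) with hδ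
  have hδ0 : 0 < δ := by positivity
  obtain ⟨P, hP1, hP⟩ := tail_small ha hδ0
  obtain ⟨T0, hT0, hT⟩ := EE_mean ha hb1 hab hR SP.one (by simp) hP hδ0 (isCompact_closedBall ρ (2*r)) hS
  have hev : ∀ᶠ T in atTop, c < (volume (G ∩ Set.Icc 0 T)).toReal / T :=
    eventually_lt_of_lt_liminf hc ⟨0, by
      rw [eventually_map]
      filter_upwards [eventually_ge_atTop (0:ℝ)] with T hT
      positivity⟩
  obtain ⟨T, hcT, hTT⟩ := (hev.and (eventually_ge_atTop T0)).exists
  have hTpos := hT0.trans_le hTT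
  have h5 := hT T hTT
  have hi := (EE_int hb1 P (isCompact_closedBall ρ (2*r)) hS (Q := fun _ => 1) continuous_const hTpos.le).1
  simp only [norm_one, one_pow, one_mul] at h5 hi
  have h6 := markov (E := EE P (Metric.closedBall ρ (2*r))) hTpos.le (fun τ => integral_nonneg fun _ => by positivity) hi (hE P) (by positivity)
  rw [lt_div_iff₀ hTpos] at hcT
  have h7 : r^2 * (c * T) < V * ((2 * 1 * δ + δ) * T) :=
    lt_of_lt_of_le (mul_lt_mul_of_pos_left hcT (by positivity)) (h6.trans (h5.trans_eq (by ring)))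
  have h8 : V * ((2 * 1 * δ + δ) * T) ≤ r^2 * (c * T) := by
    have : δ * (4 * (V + 1)) = c * r^2 := by rw [hδ]; field_simp
    have h9 : V * (3 * δ) ≤ c * r^2 := by nlinarith
    nlinarith
  linarith

lemma prod_close (S : Finset ℕ) (x y : ℕ → ℂ) (hx : ∀ p ∈ S, ‖x p‖ ≤ 2) (hy : ∀ p ∈ S, ‖y p‖ ≤ 2) :
    ‖∏ p ∈ S, x p - ∏ p ∈ S, y p‖ ≤ 2^S.card * ∑ p ∈ S, ‖x p - y p‖ := by
  induction S using Finset.induction_on with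
  | empty => simp
  | insert a S ha ih =>
    have ih := ih (fun p hp => hx p (Finset.mem_insert_of_mem hp)) (fun p hp => hy p (Finset.mem_insert_of_mem hp))
    have h1 := hx a (Finset.mem_insert_self _ _)
    have hY : ‖∏ p ∈ S, y p‖ ≤ 2^S.card := by
      rw [norm_prod]
      exact (Finset.prod_le_prod (fun _ _ => norm_nonneg _) fun p hp => hy p (Finset.mem_insert_of_mem hp)).trans
        (by simp)
    rw [Finset.prod_insert ha, Finset.prod_insert ha, Finset.sum_insert ha, Finset.card_insert_of_notMem ha]
    have e : x a * ∏ p ∈ S, x p - y a * ∏ p ∈ S, y p =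
      x a * (∏ p ∈ S, x p - ∏ p ∈ S, y p) + (x a - y a) * ∏ p ∈ S, y p := by ring
    rw [e]
    refine (norm_add_le _ _).trans ?_
    rw [norm_mul, norm_mul]
    have h2 : ‖x a‖ * ‖∏ p ∈ S, x p - ∏ p ∈ S, y p‖ ≤ 2 * (2^S.card * ∑ p ∈ S, ‖x p - y p‖) :=
      mul_le_mul h1 ih (norm_nonneg _) (by norm_num)
    have h3 : ‖x a - y a‖ * ‖∏ p ∈ S, y p‖ ≤ ‖x a - y a‖ * 2^S.card :=
      mul_le_mul_of_nonneg_left hY (norm_nonneg _)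
    have h4 : 0 ≤ ‖x a - y a‖ * 2^S.card := by positivity
    rw [pow_succ]; nlinarith

lemma good_pt {A A0 Z Z0 : ℂ} {M δ : ℝ} (hM : 1 ≤ M) (hδ : 0 < δ) (hδ1 : δ ≤ 1/4) (hZ0 : ‖Z0‖ ≤ M)
    (h1 : ‖A * Z - 1‖ ≤ δ) (h2 : ‖A0 * Z0 - 1‖ ≤ δ) (h3 : ‖A - A0‖ ≤ δ / (4 * M)) :
    ‖Z - Z0‖ ≤ 4 * M * δ := by
  have hM0 : 0 < M := by linarith
  have a1 : 3 / 4 ≤ ‖A0‖ * M := by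
    have := norm_sub_norm_le (1:ℂ) (A0 * Z0)
    rw [norm_sub_rev, norm_one, norm_mul] at this
    nlinarith [mul_le_mul_of_nonneg_left hZ0 (norm_nonneg A0)]
  have h3' : ‖A - A0‖ * (4 * M) ≤ δ := by rwa [le_div_iff₀ (by positivity)] at h3
  have a2 : 1 / 2 ≤ ‖A‖ * M := by
    have := norm_sub_norm_le A0 A
    rw [norm_sub_rev] at this
    nlinarith
  have a3 : ‖A‖ * ‖Z‖ ≤ 5/4 := by
    have := norm_sub_norm_le (A * Z) 1
    rw [norm_one, norm_mul] at this
    linarith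
  have a4 : ‖Z‖ ≤ 4 * M := by
    have : ‖A‖ * M * ‖Z‖ ≤ 5/4 * M := by nlinarith
    nlinarith [norm_nonneg Z]
  have a5 : ‖A0‖ * ‖Z - Z0‖ ≤ 3 * δ := by
    rw [← norm_mul]
    have e : A0 * (Z - Z0) = -((A - A0) * Z) + (A * Z - 1) - (A0 * Z0 - 1) := by ring
    rw [e]
    refine (norm_sub_le _ _).trans ?_
    have := norm_add_le (-((A - A0) * Z)) (A * Z - 1)
    rw [norm_neg, norm_mul] at this
    have h4 : ‖A - A0‖ * ‖Z‖ ≤ ‖A - A0‖ * (4 * M) := mul_le_mul_of_nonneg_left a4 (norm_nonneg _)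
    linarith
  have : ‖A0‖ * M * ‖Z - Z0‖ ≤ 3 * δ * M := by nlinarith
  nlinarith [norm_nonneg (Z - Z0)]

lemma int_le_meas {α : Type*} [MeasurableSpace α] {μ : Measure α} [IsFiniteMeasure μ] {h : α → ℝ} (hi : Integrable h μ)
    (h1 : ∀ x, h x ≤ 1) : ∫ x, h x ∂μ ≤ μ.real {x | 0 < h x} := by
  have hn : NullMeasurableSet {x | 0 < h x} μ := nullMeasurableSet_lt aemeasurable_const hi.aemeasurable
  have : μ.real {x | 0 < h x} = ∫ x, Set.indicator {x | 0 < h x} (fun _ => (1:ℝ)) x ∂μ := by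
    rw [integral_indicator₀ hn]; simp
  rw [this]
  refine integral_mono hi ((integrable_const _).indicator₀ hn) fun x => ?_
  by_cases hx : 0 < h x
  · rw [Set.indicator_of_mem (by exact hx)]; exact h1 x
  · rw [Set.indicator_of_notMem (by exact hx)]; linarith

lemma lowerDens_pos {G : Set ℝ} {c T0 : ℝ} (hc : 0 < c) (h0 : 0 < T0)
    (h : ∀ T ≥ T0, c * T ≤ (volume (G ∩ Set.Icc 0 T)).toReal) : 0 < lowerDens G := by
  refine hc.trans_le (le_liminf_of_le ?_ ?_)
  · refine IsBoundedUnder.isCoboundedUnder_ge ⟨1, ?_⟩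
    rw [eventually_map]
    filter_upwards [eventually_gt_atTop (0:ℝ)] with T hT
    rw [div_le_one hT]
    have : volume (G ∩ Set.Icc 0 T) ≤ ENNReal.ofReal T := by
      refine (measure_mono Set.inter_subset_right).trans (by simp)
    exact ENNReal.toReal_le_of_le_ofReal hT.le this
  · filter_upwards [eventually_ge_atTop T0] with T hT
    rw [le_div_iff₀ (h0.trans_le hT)]
    exact h T hT

lemma weight_final {G : Set ℝ} {Q : ℝ → ℂ} {P : ℕ} {w κ η V t : ℝ} {a b R : ℝ} {K' : Set ℂ} {ω : ℕ → ℂ}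
    (ha : 1/2 < a) (hb : b < 1) (hab : a ≤ b) (hR : 0 ≤ R) (hK : IsCompact K') (hKS : K' ⊆ Sreg a b R)
    (hV : V = volume.real K') (hκ : 0 < κ) (hη : 0 < η) (hw : 0 < w)
    (ht : ∀ F : Finset ℕ, (∀ n ∈ F, P ≤ n) → ∑ n ∈ F, (n:ℝ)^(-(2*a)) ≤ t) (htV : V * (2 * t) ≤ κ / 8)
    (hQ : SP P Q w) (hQ1 : ∀ τ, ‖Q τ‖ ≤ 1)
    (hQω : ∃ T0 > 0, ∀ T ≥ T0, ∫ τ in (0:ℝ)..T, ‖Q τ‖^2 * ∑ p ∈ P.primesBelow,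
      ‖cexp (-(Real.log p * τ) * I) - ω p‖^2 ≤ η / 8 * w * T)
    (hG : ∀ τ : ℝ, ∑ p ∈ P.primesBelow, ‖cexp (-(Real.log p * τ) * I) - ω p‖^2 ≤ η → EE P K' τ ≤ κ → τ ∈ G) :
    0 < lowerDens G := by
  have hV0 : 0 ≤ V := hV ▸ measureReal_nonneg
  obtain ⟨T1, hT1, h1⟩ := hQω
  obtain ⟨T2, hT2, h2⟩ := hQ.mean (ε := w / 8) (by positivity)
  obtain ⟨T3, hT3, h3⟩ := EE_mean ha hb hab hR hQ hQ1 ht (ε := w * κ / (8 * (V + 1))) (by positivity) hK hKS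
  refine lowerDens_pos (c := w / 4) (T0 := max T1 (max T2 T3)) (by positivity) (by positivity) fun T hT => ?_
  simp only [ge_iff_le, max_le_iff] at hT
  have h1 := h1 T hT.1
  have h2 := h2 T hT.2.1
  have h3 := h3 T hT.2.2
  have hTp : 0 < T := hT1.trans_le hT.1
  have hEi := (EE_int hb P hK hKS hQ.cont hTp.le).1
  set S : ℝ → ℝ := fun τ => ∑ p ∈ P.primesBelow, ‖cexp (-(Real.log p * τ) * I) - ω p‖^2 with hS
  have hSc : Continuous S := by rw [hS]; fun_prop
  have hSi : IntervalIntegrable (fun τ => ‖Q τ‖^2 * S τ) volume 0 T :=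
    ((hQ.cont.norm.pow 2).mul hSc).intervalIntegrable _ _
  have hQi : IntervalIntegrable (fun τ => ‖Q τ‖^2) volume 0 T := (hQ.cont.norm.pow 2).intervalIntegrable _ _
  set h : ℝ → ℝ := fun τ => ‖Q τ‖^2 - η⁻¹ * (‖Q τ‖^2 * S τ) - κ⁻¹ * (‖Q τ‖^2 * EE P K' τ) with hh
  have hhi : IntervalIntegrable h volume 0 T := (hQi.sub (hSi.const_mul _)).sub (hEi.const_mul _)
  have hI : ∫ τ in (0:ℝ)..T, h τ = (∫ τ in (0:ℝ)..T, ‖Q τ‖^2) - η⁻¹ * (∫ τ in (0:ℝ)..T, ‖Q τ‖^2 * S τ)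
      - κ⁻¹ * ∫ τ in (0:ℝ)..T, ‖Q τ‖^2 * EE P K' τ := by
    rw [hh, intervalIntegral.integral_sub (hQi.sub (hSi.const_mul _)) (hEi.const_mul _),
      intervalIntegral.integral_sub hQi (hSi.const_mul _), intervalIntegral.integral_const_mul,
      intervalIntegral.integral_const_mul]
  have hE0 : ∀ τ, 0 ≤ EE P K' τ := fun τ => integral_nonneg fun _ => by positivity
  have hS0 : ∀ τ, 0 ≤ S τ := fun τ => Finset.sum_nonneg fun _ _ => by positivity
  have hle : ∀ τ, h τ ≤ 1 := by
    intro τ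
    have e1 : 0 ≤ η⁻¹ * (‖Q τ‖^2 * S τ) := mul_nonneg (by positivity) (mul_nonneg (by positivity) (hS0 τ))
    have e2 : 0 ≤ κ⁻¹ * (‖Q τ‖^2 * EE P K' τ) := mul_nonneg (by positivity) (mul_nonneg (by positivity) (hE0 τ))
    have e3 : ‖Q τ‖^2 ≤ 1 := pow_le_one₀ (norm_nonneg _) (hQ1 τ)
    simp only [hh]; linarith
  have hsub : ∀ τ, 0 < h τ → τ ∈ G := by
    intro τ hτ
    have e : h τ = ‖Q τ‖^2 * (1 - η⁻¹ * S τ - κ⁻¹ * EE P K' τ) := by simp only [hh]; ring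
    rw [e] at hτ
    have hp : 0 < 1 - η⁻¹ * S τ - κ⁻¹ * EE P K' τ := by
      by_contra hn
      nlinarith [sq_nonneg ‖Q τ‖]
    have e1 : 0 ≤ η⁻¹ * S τ := mul_nonneg (by positivity) (hS0 τ)
    have e2 : 0 ≤ κ⁻¹ * EE P K' τ := mul_nonneg (by positivity) (hE0 τ)
    refine hG τ ?_ ?_
    · have : η⁻¹ * S τ ≤ 1 := by linarith
      rwa [inv_mul_le_iff₀ hη, mul_one] at this
    · have : κ⁻¹ * EE P K' τ ≤ 1 := by linarith
      rwa [inv_mul_le_iff₀ hκ, mul_one] at this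
  have hm : ∫ τ in (0:ℝ)..T, h τ ≤ (volume (G ∩ Set.Icc 0 T)).toReal := by
    rw [intervalIntegral.integral_of_le hTp.le, ← integral_Icc_eq_integral_Ioc]
    refine (int_le_meas ((intervalIntegrable_iff_integrableOn_Icc_of_le hTp.le).mp hhi) hle).trans ?_
    rw [Measure.real, Measure.restrict_apply' measurableSet_Icc]
    refine ENNReal.toReal_mono ?_ (measure_mono fun x hx => ⟨hsub x hx.1, hx.2⟩)
    exact ((measure_mono Set.inter_subset_right).trans_lt (by simp)).ne
  refine le_trans ?_ hm
  rw [hI]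
  have f1 : η⁻¹ * (∫ τ in (0:ℝ)..T, ‖Q τ‖^2 * S τ) ≤ w / 8 * T := by
    rw [inv_mul_le_iff₀ hη]; exact h1.trans_eq (by ring)
  have f2 : κ⁻¹ * (∫ τ in (0:ℝ)..T, ‖Q τ‖^2 * EE P K' τ) ≤ w / 4 * T := by
    rw [inv_mul_le_iff₀ hκ]
    refine h3.trans ?_
    rw [← hV]
    have g1 : V * (w * κ / (8 * (V + 1))) ≤ w * κ / 8 := by
      rw [mul_div_assoc', div_le_div_iff₀ (by positivity) (by positivity)]
      nlinarith [mul_pos hw hκ]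
    have : V * (2 * w * t + w * κ / (8 * (V + 1))) ≤ w * κ / 4 := by
      nlinarith
    nlinarith
  have f3 := (abs_le.mp h2).1
  nlinarith

def RR (a b d : ℝ) : Set ℂ := {s : ℂ | a ≤ s.re ∧ s.re ≤ b ∧ |s.im| ≤ d}

lemma RR_Sreg {a b d : ℝ} (ha : 0 < a) (hb : b < 1) : RR a b d ⊆ Sreg a b (1 + d) := by
  rintro s ⟨h1, h2, h3⟩
  refine ⟨h1, h2, (Complex.norm_le_abs_re_add_abs_im s).trans ?_⟩
  rw [abs_of_nonneg (by linarith)]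
  linarith

lemma RR_compact {a b d : ℝ} (ha : 0 < a) (hb : b < 1) : IsCompact (RR a b d) := by
  refine Metric.isCompact_of_isClosed_isBounded ?_ ?_
  · exact (isClosed_le continuous_const Complex.continuous_re).inter
      ((isClosed_le Complex.continuous_re continuous_const).inter
      (isClosed_le (Complex.continuous_im.abs) continuous_const))
  · exact (Metric.isBounded_closedBall (x := (0:ℂ)) (r := 1 + d)).subset fun s hs => by
      simpa using (RR_Sreg ha hb hs).2.2

lemma exists_RR {K : Set ℂ} (hK : IsCompact K) (hKs : K ⊆ strip) : ∃ a b d r M : ℝ, 1/2 < a ∧ a < b ∧ b < 1 ∧ 0 < d ∧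
    0 < r ∧ 1 ≤ M ∧ (∀ s ∈ K, Metric.closedBall s r ⊆ RR a b d) ∧ ∀ s ∈ K, ‖riemannZeta s‖ ≤ M := by
  rcases K.eq_empty_or_nonempty with rfl | hne
  · exact ⟨3/5, 4/5, 1, 1, 1, by norm_num, by norm_num, by norm_num, by norm_num, by norm_num, by norm_num,
      by simp, by simp⟩
  obtain ⟨s1, hs1, h1⟩ := hK.exists_isMinOn hne Complex.continuous_re.continuousOn
  obtain ⟨s2, hs2, h2⟩ := hK.exists_isMaxOn hne Complex.continuous_re.continuousOn
  obtain ⟨C, hC⟩ := hK.exists_bound_of_continuousOn continuousOn_id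
  obtain ⟨M, hM⟩ := hK.exists_bound_of_continuousOn (f := riemannZeta) (fun s hs =>
    (differentiableAt_riemannZeta (fun h => by have := (hKs hs).2; rw [h] at this; simp at this)).continuousAt.continuousWithinAt)
  have a1 := (hKs hs1).1
  have a2 := (hKs hs2).2
  have a3 : s1.re ≤ s2.re := h1 hs2
  set r := min ((s1.re - 1/2)/2) ((1 - s2.re)/2) with hr
  have r1 : r ≤ _ := min_le_left _ _
  have r2 : r ≤ _ := min_le_right _ _
  have hr0 : 0 < r := lt_min (by linarith) (by linarith)
  refine ⟨s1.re - r, s2.re + r, |C| + 1 + r, r, max M 1, by linarith, by linarith, by linarith, by positivity, hr0,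
    le_max_right _ _, fun s hs z hz => ?_, fun s hs => (hM s hs).trans (le_max_left _ _)⟩
  rw [Metric.mem_closedBall, dist_eq_norm] at hz
  have b1 := abs_le.mp ((Complex.abs_re_le_norm (z - s)).trans hz)
  have b2 := abs_le.mp ((Complex.abs_im_le_norm (z - s)).trans hz)
  have b3 := abs_le.mp ((Complex.abs_im_le_norm s).trans ((hC s hs).trans (le_abs_self C)))
  rw [Complex.sub_re] at b1
  rw [Complex.sub_im] at b2
  have b4 : s1.re ≤ s.re := h1 hs
  have b5 : s.re ≤ s2.re := h2 hs
  exact ⟨by linarith, by linarith, abs_le.mpr ⟨by linarith, by linarith⟩⟩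

theorem approx_of_phases (hPH : ∀ a b d : ℝ, 1/2 < a → a < b → b < 1 → 0 < d → ∀ (K : Set ℂ) (r : ℝ), 0 < r →
      (∀ s ∈ K, Metric.closedBall s r ⊆ RR a b d) → ∀ δ > 0, ∀ N : ℕ, ∃ P ≥ N, ∃ ω : ℕ → ℂ, (∀ p, ‖ω p‖ = 1) ∧
      ∀ s ∈ K, ‖(∏ p ∈ P.primesBelow, (1 - ω p * (p:ℂ)^(-s))) * riemannZeta s - 1‖ ≤ δ)
    {K : Set ℂ} (hK : IsCompact K) (hKs : K ⊆ strip) {ε : ℝ} (hε : 0 < ε) :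
    0 < lowerDens {τ : ℝ | supNorm K (fun s => riemannZeta (s + τ * Complex.I) - riemannZeta s) < ENNReal.ofReal ε} := by
  obtain ⟨a, b, d, r, M, ha, hab, hb, hd, hr, hM, hKR, hKM⟩ := exists_RR hK hKs
  have hM0 : 0 < M := by linarith
  set δ := min (1/4) (ε / (8 * M)) with hδ
  have hδ0 : 0 < δ := lt_min (by norm_num) (by positivity)
  have hδ1 : δ ≤ 1/4 := min_le_left _ _
  have hδ2 : 4 * M * δ < ε := by
    have : δ ≤ ε / (8 * M) := min_le_right _ _
    rw [le_div_iff₀ (by positivity)] at this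
    nlinarith
  set V := volume.real (RR a b d) with hV
  have hV0 : 0 ≤ V := measureReal_nonneg
  set κ := r^2 * δ^2 with hκ
  have hκ0 : 0 < κ := by positivity
  obtain ⟨N, hN1, hN⟩ := tail_small ha (δ := κ / (16 * (V + 1))) (by positivity)
  obtain ⟨P, hPN, ω, hω, hP⟩ := hPH a b d ha hab hb hd K r hr hKR δ hδ0 N
  set n := P.primesBelow.card with hn
  set η := δ / (4 * M) / (2^n * (n + 1)) with hη
  have hη0 : 0 < η := by positivity
  obtain ⟨Q, w, hw, hQ, hQ1, hQω⟩ := exists_weight P ω hω (η := η^2 / 8) (by positivity)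
  have hRc : IsCompact (RR a b d) := RR_compact (by linarith) hb
  refine weight_final ha hb hab.le (by positivity : 0 ≤ 1 + d) hRc (RR_Sreg (by linarith) hb) hV hκ0
    (by positivity : 0 < η^2) hw (t := κ / (16 * (V + 1))) (fun F hF => hN F fun k hk => hPN.trans (hF k hk)) ?_ hQ hQ1 hQω ?_
  · rw [mul_div_assoc', mul_div_assoc', div_le_div_iff₀ (by positivity) (by positivity)]
    nlinarith
  intro τ h1 h2
  refine lt_supNorm hε hδ2 fun s hs => ?_
  have hs0 : 0 < s.re := by linarith [(hKs hs).1]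
  refine good_pt hM hδ0 hδ1 (hKM s hs) (A := MP P (s + τ * I)) ?_ (hP s hs) ?_
  · have h3 := sq_le_area hr hRc (hKR s hs) (f := fun s : ℂ => MP P (s + τ * I) * riemannZeta (s + τ * I) - 1)
      (fun w hw => EE_diff P τ (hw.2.1.trans_lt hb))
    have h4 := h3.trans h2
    rw [hκ] at h4
    exact (pow_le_pow_iff_left₀ (norm_nonneg _) hδ0.le two_ne_zero).mp (le_of_mul_le_mul_left h4 (by positivity))
  · have hp1 : ∀ p ∈ P.primesBelow, ‖(p:ℂ)^(-s)‖ ≤ 1 := fun p hp => by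
      have h1 : 1 ≤ p := (Nat.prime_of_mem_primesBelow hp).one_le
      rw [norm_npow h1]
      exact Real.rpow_le_one_of_one_le_of_nonpos (by exact_mod_cast h1) (by linarith)
    have hle : ∀ p ∈ P.primesBelow, ∀ u : ℂ, ‖u‖ = 1 → ‖1 - u * (p:ℂ)^(-s)‖ ≤ 2 := fun p hp u hu => by
      refine (norm_sub_le _ _).trans ?_
      rw [norm_mul, hu, norm_one]; linarith [hp1 p hp]
    have e : MP P (s + τ * I) = ∏ p ∈ P.primesBelow, (1 - cexp (-(Real.log p * τ) * I) * (p:ℂ)^(-s)) := by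
      refine Finset.prod_congr rfl fun p hp => ?_
      rw [cpow_line (Nat.prime_of_mem_primesBelow hp).one_le, mul_comm]
    rw [e]
    refine (prod_close _ _ _ (fun p hp => hle p hp _ (by exact_mod_cast norm_expI _ _)) (fun p hp => hle p hp _ (hω p))).trans ?_
    have h5 : ∑ p ∈ P.primesBelow, ‖(1 - cexp (-(Real.log p * τ) * I) * (p:ℂ)^(-s)) - (1 - ω p * (p:ℂ)^(-s))‖ ≤ n * η := by
      rw [hn, ← nsmul_eq_mul]
      refine Finset.sum_le_card_nsmul _ _ _ fun p hp => ?_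
      have h6 := (Finset.single_le_sum (f := fun p : ℕ => ‖cexp (-(Real.log p * τ) * I) - ω p‖^2)
        (fun _ _ => by positivity) hp).trans h1
      have h7 := (pow_le_pow_iff_left₀ (norm_nonneg _) hη0.le two_ne_zero).mp h6
      rw [sub_sub_sub_cancel_left, ← sub_mul, norm_mul, norm_sub_rev]
      exact (mul_le_of_le_one_right (norm_nonneg _) (hp1 p hp)).trans h7
    refine (mul_le_mul_of_nonneg_left h5 (by positivity)).trans ?_
    have : η * (2^n * (n + 1)) = δ / (4 * M) := by rw [hη]; field_simp
    have h8 : (0:ℝ) ≤ 2^n * η := by positivity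
    nlinarith

open scoped ENNReal InnerProductSpace

lemma rnd_one {H : Type*} [NormedAddCommGroup H] [InnerProductSpace ℂ H] (E x : H) {b : ℂ} (hb : ‖b‖ ≤ 1) :
    ∃ ω : ℂ, ‖ω‖ = 1 ∧ ‖E + (ω - b) • x‖^2 ≤ ‖E‖^2 + ‖x‖^2 := by
  obtain ⟨c, hc, hbc⟩ : ∃ c : ℂ, ‖c‖ = 1 ∧ b = ‖b‖ * c := by
    by_cases h : b = 0
    · exact ⟨1, by simp, by simp [h]⟩
    · have : ‖b‖ ≠ 0 := norm_ne_zero_iff.mpr h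
      refine ⟨b / ‖b‖, by simp [this], ?_⟩
      rw [mul_div_cancel₀ _ (by exact_mod_cast this)]
  set t := Real.sqrt (1 - ‖b‖^2) with ht
  have ht2 : t^2 = 1 - ‖b‖^2 := Real.sq_sqrt (by nlinarith [norm_nonneg b])
  have key : ∀ σ : ℝ, σ^2 = 1 → ‖b + σ * (t * I * c)‖ = 1 ∧ ‖((σ * (t * I * c) : ℂ)) • x‖^2 ≤ ‖x‖^2 := by
    intro σ hσ
    constructor
    · have : b + σ * (t * I * c) = (‖b‖ + (σ * t : ℝ) * I) * c := by
        conv_lhs => rw [hbc]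
        push_cast; ring
      rw [this, norm_mul, hc, mul_one]
      rw [← pow_left_inj₀ (norm_nonneg _) zero_le_one two_ne_zero, Complex.sq_norm, Complex.normSq_add_mul_I]
      rw [mul_pow, hσ, ht2]; ring
    · have h1 : ‖((σ * (t * I * c) : ℂ))‖^2 ≤ 1 := by
        simp only [norm_mul, Complex.norm_real, norm_I, hc, mul_one, Real.norm_eq_abs, mul_pow, sq_abs, hσ, ht2]
        nlinarith [sq_nonneg ‖b‖]
      rw [norm_smul, mul_pow]
      nlinarith [sq_nonneg ‖x‖]
  set y := (t * I * c) • x with hy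
  have expand : ∀ σ : ℝ, ‖E + ((σ * (t * I * c) : ℂ)) • x‖^2 = ‖E‖^2 + 2 * (σ * (⟪E, y⟫_ℂ).re) + ‖((σ * (t * I * c) : ℂ)) • x‖^2 := by
    intro σ
    rw [norm_add_sq (𝕜 := ℂ), mul_smul, ← hy, inner_smul_right]
    simp
  rcases le_total (⟪E, y⟫_ℂ).re 0 with h | h
  · refine ⟨b + (1:ℝ) * (t * I * c), (key 1 (by norm_num)).1, ?_⟩
    rw [add_sub_cancel_left, expand]
    linarith [(key 1 (by norm_num)).2]
  · refine ⟨b + (-1:ℝ) * (t * I * c), (key (-1) (by norm_num)).1, ?_⟩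
    rw [add_sub_cancel_left, expand]
    linarith [(key (-1) (by norm_num)).2]

lemma round_all {H : Type*} [NormedAddCommGroup H] [InnerProductSpace ℂ H] (x : ℕ → H) (b : ℕ → ℂ)
    (hb : ∀ n, ‖b n‖ ≤ 1) (S : Finset ℕ) :
    ∃ ω : ℕ → ℂ, (∀ n, ‖ω n‖ = 1) ∧ ‖∑ n ∈ S, (ω n - b n) • x n‖^2 ≤ ∑ n ∈ S, ‖x n‖^2 := by
  induction S using Finset.induction_on with
  | empty => exact ⟨fun _ => 1, by simp, by simp⟩
  | insert a S ha ih =>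
    obtain ⟨ω, hω, h⟩ := ih
    obtain ⟨v, hv, h2⟩ := rnd_one (∑ n ∈ S, (ω n - b n) • x n) (x a) (hb a)
    refine ⟨Function.update ω a v, fun n => ?_, ?_⟩
    · by_cases hn : n = a
      · rw [hn, Function.update_self, hv]
      · rw [Function.update_of_ne hn, hω]
    · rw [Finset.sum_insert ha, Finset.sum_insert ha, Function.update_self]
      have : ∑ n ∈ S, (Function.update ω a v n - b n) • x n = ∑ n ∈ S, (ω n - b n) • x n :=
        Finset.sum_congr rfl fun n hn => by
          rw [Function.update_of_ne (ne_of_mem_of_not_mem hn ha)]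
      rw [this, add_comm]
      linarith

lemma hilbert_dense {H : Type*} [NormedAddCommGroup H] [InnerProductSpace ℂ H] [CompleteSpace H]
    (x : ℕ → H) (g : H) (N : ℕ)
    (hg : ∀ φ : H, Summable (fun n => ‖⟪φ, x n⟫_ℂ‖) → ⟪φ, g⟫_ℂ = 0) {ε : ℝ} (hε : 0 < ε)
    (hx : ∀ F : Finset ℕ, (∀ n ∈ F, N ≤ n) → ∑ n ∈ F, ‖x n‖^2 ≤ ε^2) :
    ∃ P ≥ N, ∃ ω : ℕ → ℂ, (∀ n, ‖ω n‖ = 1) ∧ ‖∑ n ∈ Finset.Ico N P, ω n • x n - g‖ ≤ 2 * ε := by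
  set C : Set H := {c | ∃ P ≥ N, ∃ b : ℕ → ℂ, (∀ n, ‖b n‖ ≤ 1) ∧ (∀ n, P ≤ n → b n = 0) ∧ c = ∑ n ∈ Finset.Ico N P, b n • x n} with hC
  have hext : ∀ (b : ℕ → ℂ) (P P' : ℕ), P ≤ P' → (∀ n, P ≤ n → b n = 0) →
      ∑ n ∈ Finset.Ico N P, b n • x n = ∑ n ∈ Finset.Ico N P', b n • x n := by
    intro b P P' hPP hb
    refine Finset.sum_subset (Finset.Ico_subset_Ico_right hPP) fun n hn hn' => ?_
    rw [hb n, zero_smul]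
    simp only [Finset.mem_Ico, not_and, not_lt] at hn hn'
    exact hn' hn.1
  have hconv : Convex ℝ C := by
    rintro _ ⟨P, hP, b, hb, hb0, rfl⟩ _ ⟨P', hP', b', hb', hb0', rfl⟩ u v hu hv huv
    refine ⟨max P P', hP.trans (le_max_left _ _), fun n => u * b n + v * b' n, fun n => ?_, fun n hn => ?_, ?_⟩
    · refine (norm_add_le _ _).trans ?_
      rw [norm_mul, norm_mul, Complex.norm_real, Complex.norm_real, Real.norm_of_nonneg hu, Real.norm_of_nonneg hv]
      nlinarith [hb n, hb' n]
    · show u * b n + v * b' n = 0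
      rw [hb0 n ((le_max_left _ _).trans hn), hb0' n ((le_max_right _ _).trans hn)]; simp
    · rw [hext b P _ (le_max_left P P') hb0, hext b' P' _ (le_max_right P P') hb0', Finset.smul_sum, Finset.smul_sum,
        ← Finset.sum_add_distrib]
      refine Finset.sum_congr rfl fun n _ => ?_
      rw [add_smul, mul_smul, mul_smul]
      simp
  have hmem : g ∈ closure C := by
    by_contra hn
    obtain ⟨f, u, hf, hu⟩ := RCLike.geometric_hahn_banach_closed_point (𝕜 := ℂ) hconv.closure isClosed_closure hn
    have hf' := fun c hc => hf c (subset_closure hc)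
    set φ := (InnerProductSpace.toDual ℂ H).symm f with hφ
    have hfφ : ∀ y, f y = ⟪φ, y⟫_ℂ := fun y => by rw [hφ, InnerProductSpace.toDual_symm_apply]
    have h0 : 0 < u := by
      have := hf' 0 ⟨N, le_rfl, fun _ => 0, by simp, by simp, by simp⟩
      simpa using this
    have hsum : Summable (fun n => ‖⟪φ, x (n + N)⟫_ℂ‖) := by
      refine summable_of_sum_range_le (c := u) (fun _ => norm_nonneg _) fun m => ?_
      have := hf' (∑ n ∈ Finset.Ico N (N + m), (if n < N + m then (starRingEnd ℂ (f (x n)) / ‖f (x n)‖) else 0) • x n)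
        ⟨N + m, by omega, _, fun n => ?_, fun n hn => if_neg (by omega), rfl⟩
      · refine le_of_eq_of_le ?_ this.le
        rw [map_sum, map_sum, Finset.sum_Ico_eq_sum_range, Nat.add_sub_cancel_left]
        refine Finset.sum_congr rfl fun n hn => ?_
        rw [if_pos (by simpa using hn), map_smul, ← hfφ, smul_eq_mul, add_comm n N, div_mul_eq_mul_div,
          Complex.conj_mul']
        by_cases h : ‖f (x (N + n))‖ = 0
        · simp [h]
        · have : ((‖f (x (N + n))‖:ℂ))^2 / ‖f (x (N + n))‖ = (‖f (x (N + n))‖ : ℝ) := by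
            rw [sq, mul_div_assoc, div_self (by exact_mod_cast h), mul_one]
          rw [this]; simp
      · split_ifs
        · rw [norm_div, RCLike.norm_conj, Complex.norm_real, norm_norm]
          exact div_self_le_one _
        · simp
    have := hg φ ((summable_nat_add_iff N).mp hsum)
    rw [← hfφ] at this
    rw [this] at hu
    simp at hu
    linarith
  obtain ⟨c, ⟨P, hP, b, hb, -, rfl⟩, hd⟩ := Metric.mem_closure_iff.mp hmem ε hε
  obtain ⟨ω, hω, h⟩ := round_all x b hb (Finset.Ico N P)
  refine ⟨P, hP, ω, hω, ?_⟩
  have h1 := h.trans (hx _ fun n hn => (Finset.mem_Ico.mp hn).1)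
  have h2 := (pow_le_pow_iff_left₀ (norm_nonneg _) hε.le two_ne_zero).mp h1
  have e : ∑ n ∈ Finset.Ico N P, ω n • x n - g = ∑ n ∈ Finset.Ico N P, (ω n - b n) • x n +
      (∑ n ∈ Finset.Ico N P, b n • x n - g) := by
    simp only [sub_smul, Finset.sum_sub_distrib]; abel
  rw [e]
  refine (norm_add_le _ _).trans ?_
  rw [dist_comm, dist_eq_norm] at hd
  linarith

noncomputable def Bt (p : Nat.Primes) (z : ℂ) : ℂ := Real.log p * ((p:ℂ)^(-z))^2 / (1 - (p:ℂ)^(-z))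

noncomputable def AA (z : ℂ) : ℂ := -(deriv zs z / zs z) - ∑' p, Bt p z

lemma pp_norm (p : Nat.Primes) (z : ℂ) : ‖(p:ℂ)^(-z)‖ = (p:ℝ)^(-z.re) := norm_npow p.2.one_le z

lemma pp_le {p : Nat.Primes} {z : ℂ} {σ : ℝ} (h : σ ≤ z.re) : ‖(p:ℂ)^(-z)‖ ≤ (p:ℝ)^(-σ) := by
  rw [pp_norm]
  exact Real.rpow_le_rpow_of_exponent_le (by exact_mod_cast p.2.one_le) (by linarith)

lemma pp_half {p : Nat.Primes} {z : ℂ} (h : 1/2 ≤ z.re) : ‖(p:ℂ)^(-z)‖ ≤ 3/4 := by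
  refine (pp_le h).trans ?_
  have h1 : (p:ℝ)^(-(1/2:ℝ)) ≤ (2:ℝ)^(-(1/2:ℝ)) :=
    Real.rpow_le_rpow_of_nonpos (by norm_num) (by exact_mod_cast p.2.two_le) (by norm_num)
  refine h1.trans ?_
  rw [Real.rpow_neg (by norm_num), ← Real.sqrt_eq_rpow]
  rw [inv_le_comm₀ (by positivity) (by norm_num)]
  exact Real.le_sqrt_of_sq_le (by norm_num)

lemma one_sub_pp {p : Nat.Primes} {z : ℂ} (h : 1/2 ≤ z.re) : 1/4 ≤ ‖1 - (p:ℂ)^(-z)‖ := by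
  have := norm_sub_norm_le (1:ℂ) ((p:ℂ)^(-z))
  rw [norm_one] at this
  linarith [pp_half (p := p) h]

lemma one_sub_ne {p : Nat.Primes} {z : ℂ} (h : 1/2 ≤ z.re) : 1 - (p:ℂ)^(-z) ≠ 0 := fun h0 => by
  have := one_sub_pp (p := p) h
  rw [h0, norm_zero] at this; linarith

lemma pp_diff (p : Nat.Primes) (z : ℂ) : HasDerivAt (fun z : ℂ => (p:ℂ)^(-z)) (-(Real.log p * (p:ℂ)^(-z))) z := by
  have hp0 : (p:ℂ) ≠ 0 := by exact_mod_cast p.2.ne_zero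
  have := (hasDerivAt_neg z).const_cpow (c := (p:ℂ)) (Or.inl hp0)
  refine this.congr_deriv ?_
  rw [← Complex.natCast_log]; ring

lemma Bt_le {σ : ℝ} (hσ : 1/2 < σ) (p : Nat.Primes) {z : ℂ} (hz : σ ≤ z.re) :
    ‖Bt p z‖ ≤ 4 / (σ - 1/2) * (p:ℝ)^(-(σ + 1/2)) := by
  have hp : (0:ℝ) < p := by exact_mod_cast p.2.pos
  have hl : 0 ≤ Real.log p := Real.log_natCast_nonneg _
  unfold Bt
  rw [norm_div, norm_mul, norm_pow, Complex.norm_real, Real.norm_of_nonneg hl,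
    div_le_iff₀ (lt_of_lt_of_le (by norm_num) (one_sub_pp (p := p) (by linarith)))]
  have h1 := one_sub_pp (p := p) (z := z) (by linarith)
  have h2 : ‖(p:ℂ)^(-z)‖^2 ≤ (p:ℝ)^(-(2*σ)) := by
    refine (pow_le_pow_left₀ (norm_nonneg _) (pp_le hz) 2).trans ?_
    rw [← Real.rpow_natCast, ← Real.rpow_mul hp.le]
    apply le_of_eq; congr 1; push_cast; ring
  have h3 : Real.log p ≤ (p:ℝ)^(σ - 1/2) / (σ - 1/2) := Real.log_le_rpow_div hp.le (by linarith)
  have h4 : Real.log p * ‖(p:ℂ)^(-z)‖^2 ≤ (p:ℝ)^(σ - 1/2) / (σ - 1/2) * (p:ℝ)^(-(2*σ)) :=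
    mul_le_mul h3 h2 (by positivity) (hl.trans h3)
  have h5 : (p:ℝ)^(σ - 1/2) / (σ - 1/2) * (p:ℝ)^(-(2*σ)) = 1 / (σ - 1/2) * (p:ℝ)^(-(σ + 1/2)) := by
    rw [div_mul_eq_mul_div, ← Real.rpow_add hp, div_mul_eq_mul_div, one_mul]; congr 2; ring
  rw [h5] at h4
  have h6 : 0 ≤ 1 / (σ - 1/2) * (p:ℝ)^(-(σ + 1/2)) :=
    mul_nonneg (one_div_nonneg.mpr (by linarith)) (by positivity)
  have e : 4 / (σ - 1/2) * (p:ℝ)^(-(σ + 1/2)) = 4 * (1 / (σ - 1/2) * (p:ℝ)^(-(σ + 1/2))) := by ring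
  rw [e]
  nlinarith

lemma Bt_summable {σ : ℝ} (hσ : 1/2 < σ) : Summable (fun p : Nat.Primes => 4 / (σ - 1/2) * (p:ℝ)^(-(σ + 1/2))) :=
  (Nat.Primes.summable_rpow.mpr (by linarith)).mul_left _

lemma AA_diff (h : RiemannHypothesis) {z : ℂ} (hz : 1/2 < z.re) : DifferentiableAt ℂ AA z := by
  have h1 : DifferentiableAt ℂ (fun z => deriv zs z / zs z) z :=
    ((zs_diff.differentiableOn.deriv isOpen_univ).differentiableAt univ_mem).div (zs_diff z) (zs_ne_zero_of_RH h hz)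
  set σ := (z.re + 1/2)/2 with hσ
  have hσ1 : 1/2 < σ := by rw [hσ]; linarith
  have hU : IsOpen {w : ℂ | σ < w.re} := isOpen_lt continuous_const Complex.continuous_re
  have h2 : DifferentiableOn ℂ (fun w => ∑' p, Bt p w) {w : ℂ | σ < w.re} := by
    refine differentiableOn_tsum_of_summable_norm (Bt_summable hσ1) (fun p w hw => ?_) hU
      (fun p w hw => Bt_le hσ1 p (le_of_lt hw))
    have hw' : σ < w.re := hw
    unfold Bt
    have := (pp_diff p w).differentiableAt
    exact (((this.pow 2).const_mul _).div ((differentiableAt_const _).sub this)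
      (one_sub_ne (by linarith))).differentiableWithinAt
  exact h1.neg.sub (h2.differentiableAt (hU.mem_nhds (show σ < z.re by rw [hσ]; linarith)))

lemma prime_sum {z : ℂ} (hz : 1 < z.re) :
    HasSum (fun p : Nat.Primes => Real.log p * (p:ℂ)^(-z)) (1 / (z - 1) + AA z) := by
  set σ := (z.re + 1)/2 with hσ
  have hσ1 : 1 < σ := by rw [hσ]; linarith
  have hU : IsOpen {w : ℂ | σ < w.re} := isOpen_lt continuous_const Complex.continuous_re
  have hzU : z ∈ {w : ℂ | σ < w.re} := (show σ < z.re by rw [hσ]; linarith)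
  have hd : ∀ (p : Nat.Primes) (w : ℂ), 1 < w.re → HasDerivAt (fun w => -Complex.log (1 - (p:ℂ)^(-w)))
      (-(Real.log p * (p:ℂ)^(-w) / (1 - (p:ℂ)^(-w)))) w := by
    intro p w hw
    have h1 := ((pp_diff p w).const_sub 1).clog (by
      rw [sub_eq_add_neg]
      refine Complex.mem_slitPlane_of_norm_lt_one ?_
      rw [norm_neg]
      exact (pp_half (by linarith)).trans_lt (by norm_num))
    refine h1.neg.congr_deriv ?_
    rw [neg_neg]
  have hf : ∀ p : Nat.Primes, DifferentiableOn ℂ (fun w => -Complex.log (1 - (p:ℂ)^(-w))) {w : ℂ | σ < w.re} :=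
    fun p w hw => (hd p w (hσ1.trans hw)).differentiableAt.differentiableWithinAt
  have hu : Summable (fun p : Nat.Primes => 3/2 * (p:ℝ)^(-σ)) :=
    (Nat.Primes.summable_rpow.mpr (by linarith)).mul_left _
  have hle : ∀ (p : Nat.Primes) (w : ℂ), w ∈ {w : ℂ | σ < w.re} →
      ‖-Complex.log (1 - (p:ℂ)^(-w))‖ ≤ 3/2 * (p:ℝ)^(-σ) := fun p w hw => by
    have hw : σ < w.re := hw
    have hle := pp_le (p := p) hw.le
    have hh : ‖-(p:ℂ)^(-w)‖ ≤ 1/2 := by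
      rw [norm_neg]
      refine (pp_le (show (1:ℝ) ≤ w.re by linarith)).trans ?_
      rw [Real.rpow_neg_one, one_div]
      exact inv_anti₀ (by norm_num) (by exact_mod_cast p.2.two_le)
    have := Complex.norm_log_one_add_half_le_self hh
    rw [norm_neg, sub_eq_add_neg]
    rw [norm_neg] at this
    linarith
  have h1 := hasSum_deriv_of_summable_norm hu hf hU hle hzU
  simp only [fun p => (hd p z hz).deriv] at h1
  set LL : ℂ → ℂ := fun w => ∑' p : Nat.Primes, -Complex.log (1 - (p:ℂ)^(-w)) with hLL
  have hB : HasSum (fun p => Bt p z) (∑' p, Bt p z) :=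
    (Summable.of_norm_bounded (Bt_summable (show (1/2:ℝ) < 1 by norm_num)) fun p => Bt_le (by norm_num) p hz.le).hasSum
  have hz1 : z - 1 ≠ 0 := fun h => by
    have := congrArg Complex.re h
    simp at this; linarith
  have hz1' : z ≠ 1 := sub_ne_zero.mp hz1
  have hzz : riemannZeta z ≠ 0 := riemannZeta_ne_zero_of_one_le_re hz.le
  have hLd : DifferentiableAt ℂ LL z := (differentiableOn_tsum_of_summable_norm hu hf hU hle).differentiableAt (hU.mem_nhds hzU)
  have hder : deriv LL z = deriv riemannZeta z / riemannZeta z := by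
    have e : riemannZeta =ᶠ[nhds z] fun w => cexp (LL w) := by
      filter_upwards [(isOpen_lt continuous_const Complex.continuous_re).mem_nhds (show (1:ℝ) < z.re from hz)] with w hw
      exact (riemannZeta_eulerProduct_exp_log hw).symm
    rw [e.deriv_eq, deriv_cexp hLd, e.eq_of_nhds]
    field_simp [Complex.exp_ne_zero]
  have hder2 : deriv zs z / zs z = 1 / (z - 1) + deriv riemannZeta z / riemannZeta z := by
    have e : zs =ᶠ[nhds z] fun w => (w - 1) * riemannZeta w := by
      filter_upwards [isOpen_ne.mem_nhds hz1'] with w hw using zs_of_ne hw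
    have hd : HasDerivAt (fun w => (w - 1) * riemannZeta w) (1 * riemannZeta z + (z - 1) * deriv riemannZeta z) z :=
      ((hasDerivAt_id z).sub_const 1).mul (differentiableAt_riemannZeta hz1').hasDerivAt
    rw [e.deriv_eq, hd.deriv, e.eq_of_nhds]
    field_simp
  have := h1.neg.sub hB
  have e1 : (fun p : Nat.Primes => Real.log p * (p:ℂ)^(-z)) =
      fun p : Nat.Primes => - -(Real.log p * (p:ℂ)^(-z) / (1 - (p:ℂ)^(-z))) - Bt p z := by
    funext p
    have := one_sub_ne (p := p) (z := z) (by linarith)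
    unfold Bt
    field_simp
  have e2 : 1 / (z - 1) + AA z = -deriv LL z - ∑' p, Bt p z := by
    rw [AA, hder2, hder]; ring
  rw [e1, e2]
  exact this

lemma mulH_int {R : Set ℂ} (hR : IsCompact R) {ψ H : ℂ → ℂ} (hψ : Integrable ψ (volume.restrict R))
    (hH : ContinuousOn H R) : Integrable (fun s => ψ s * H s) (volume.restrict R) := by
  obtain ⟨M, hM⟩ := hR.exists_bound_of_continuousOn hH
  exact hψ.mul_bdd (hH.aestronglyMeasurable hR.measurableSet) ((ae_restrict_mem hR.measurableSet).mono hM)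

lemma par_diff {R : Set ℂ} (hR : IsCompact R) {ψ H : ℂ → ℂ} (hψ : Integrable ψ (volume.restrict R))
    {U : Set ℂ} (hU : IsOpen U) (hH : ∀ z ∈ U, DifferentiableAt ℂ H z) {w0 : ℂ} (hw : ∀ s ∈ R, s - w0 ∈ U) :
    DifferentiableAt ℂ (fun w => ∫ s in R, ψ s * H (s - w)) w0 := by
  have hHo : DifferentiableOn ℂ H U := fun z hz => (hH z hz).differentiableWithinAt
  have hK : IsCompact ((fun s => s - w0) '' R) := hR.image (by fun_prop)
  obtain ⟨δ, hδ, hsub⟩ := hK.exists_cthickening_subset_open hU (by rintro _ ⟨s, hs, rfl⟩; exact hw s hs)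
  obtain ⟨M, hM⟩ := (hK.cthickening (r := δ)).exists_bound_of_continuousOn ((hHo.deriv hU).continuousOn.mono hsub)
  have hmem : ∀ s ∈ R, ∀ w ∈ Metric.ball w0 δ, s - w ∈ Metric.cthickening δ ((fun s => s - w0) '' R) := by
    intro s hs w hw
    refine Metric.mem_cthickening_of_dist_le _ (s - w0) _ _ ⟨s, hs, rfl⟩ ?_
    rw [dist_sub_left]
    exact (Metric.mem_ball.mp hw).le
  have hc : ∀ w ∈ Metric.ball w0 δ, ContinuousOn (fun s => H (s - w)) R := fun w hw s hs =>
    (ContinuousAt.comp (f := fun s : ℂ => s - w) (hH _ (hsub (hmem s hs w hw))).continuousAt (by fun_prop)).continuousWithinAt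
  have h0 := Metric.mem_ball_self (x := w0) hδ
  have hint : ∀ w ∈ Metric.ball w0 δ, Integrable (fun s => ψ s * H (s - w)) (volume.restrict R) :=
    fun w hw => mulH_int hR hψ (hc w hw)
  have hder : ContinuousOn (fun s => deriv H (s - w0)) R := by
    refine ContinuousOn.comp (hHo.deriv hU).continuousOn (by fun_prop) fun s hs => hw s hs
  refine (hasDerivAt_integral_of_dominated_loc_of_deriv_le (F := fun w s => ψ s * H (s - w)) (F' := fun w s => ψ s * -deriv H (s - w))
    (bound := fun s => ‖ψ s‖ * M) (Metric.ball_mem_nhds w0 hδ) ?_ (hint w0 h0) ?_ ?_ (hψ.norm.mul_const _) ?_).2.differentiableAt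
  · filter_upwards [Metric.ball_mem_nhds w0 hδ] with w hw using (hint w hw).aestronglyMeasurable
  · exact (mulH_int hR hψ hder.neg).aestronglyMeasurable
  · filter_upwards [ae_restrict_mem hR.measurableSet] with s hs w hw
    rw [norm_mul, norm_neg]
    exact mul_le_mul_of_nonneg_left (hM _ (hmem s hs w hw)) (norm_nonneg _)
  · filter_upwards [ae_restrict_mem hR.measurableSet] with s hs w hw
    have h1 := (hH _ (hsub (hmem s hs w hw))).hasDerivAt.comp_const_sub s w
    exact h1.const_mul _

noncomputable def CT (R : Set ℂ) (ψ : ℂ → ℂ) (w : ℂ) : ℂ := ∫ s in R, ψ s * (s - w)⁻¹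

lemma CT_diff {R : Set ℂ} (hR : IsCompact R) {ψ : ℂ → ℂ} (hψ : Integrable ψ (volume.restrict R)) {w : ℂ} (hw : w ∉ R) :
    DifferentiableAt ℂ (CT R ψ) w :=
  par_diff hR hψ (H := fun z => z⁻¹) (U := {0}ᶜ) isOpen_compl_singleton
    (fun z hz => differentiableAt_inv hz) fun s hs h => hw (by
      rw [Set.mem_singleton_iff, sub_eq_zero] at h; exact h ▸ hs)

lemma CT_lim {R : Set ℂ} (hR : IsCompact R) {ψ : ℂ → ℂ} (hψ : Integrable ψ (volume.restrict R)) :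
    Tendsto (CT R ψ) (cocompact ℂ) (nhds 0) := by
  obtain ⟨M, hM⟩ := hR.exists_bound_of_continuousOn continuousOn_id
  have h1 : Tendsto (fun w : ℂ => (∫ s in R, ‖ψ s‖) * (2 * ‖w‖⁻¹)) (cocompact ℂ) (nhds 0) := by
    have := (tendsto_inv_atTop_zero.comp (tendsto_norm_cocompact_atTop (E := ℂ))).const_mul 2
    simpa using this.const_mul (∫ s in R, ‖ψ s‖)
  refine squeeze_zero_norm' ?_ h1
  filter_upwards [(tendsto_norm_cocompact_atTop (E := ℂ)).eventually_ge_atTop (2 * |M| + 1)] with w hw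
  rw [← integral_mul_const]
  refine norm_integral_le_of_norm_le (hψ.norm.mul_const _) ?_
  filter_upwards [ae_restrict_mem hR.measurableSet] with s hs
  rw [norm_mul, norm_inv]
  refine mul_le_mul_of_nonneg_left ?_ (norm_nonneg _)
  have h2 : ‖s‖ ≤ |M| := (hM s hs).trans (le_abs_self M)
  have h3 := norm_sub_norm_le w s
  rw [norm_sub_rev] at h3
  have h4 : ‖w‖ / 2 ≤ ‖s - w‖ := by linarith
  have h5 : 0 < ‖w‖ := by linarith [abs_nonneg M]
  have := inv_anti₀ (by positivity) h4
  rwa [inv_div, div_eq_mul_inv] at this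

noncomputable def Del (R : Set ℂ) (ψ : ℂ → ℂ) (p : Nat.Primes) : ℂ := ∫ s in R, ψ s * (p:ℂ)^(-s)

noncomputable def GG (R : Set ℂ) (ψ : ℂ → ℂ) (w : ℂ) : ℂ :=
  ∑' p : Nat.Primes, Del R ψ p * (Real.log p * (p:ℂ)^(-(-w)))

lemma GG_diff {R : Set ℂ} {ψ : ℂ → ℂ} (hs : Summable fun p => ‖Del R ψ p‖) {w : ℂ} (hw : w.re < 0) :
    DifferentiableAt ℂ (GG R ψ) w := by
  set η := -w.re / 2 with hη
  have hη0 : 0 < η := by rw [hη]; linarith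
  have hU : IsOpen {z : ℂ | z.re < -η} := isOpen_lt Complex.continuous_re continuous_const
  refine (differentiableOn_tsum_of_summable_norm (u := fun p => ‖Del R ψ p‖ * η⁻¹) (hs.mul_right _) (fun p z hz => ?_) hU
    (fun p z hz => ?_)).differentiableAt (hU.mem_nhds (show w.re < -η by rw [hη]; linarith))
  · have : DifferentiableAt ℂ (fun z : ℂ => (p:ℂ)^(-(-z))) z :=
      DifferentiableAt.comp z (f := fun z : ℂ => -z) (pp_diff p (-z)).differentiableAt (by fun_prop)
    exact ((this.const_mul _).const_mul _).differentiableWithinAt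
  · have hp : (0:ℝ) < p := by exact_mod_cast p.2.pos
    have hl : 0 ≤ Real.log p := Real.log_natCast_nonneg _
    have hz : z.re < -η := hz
    rw [norm_mul, norm_mul, Complex.norm_real, Real.norm_of_nonneg hl]
    refine mul_le_mul_of_nonneg_left ?_ (norm_nonneg _)
    have h1 : ‖(p:ℂ)^(-(-z))‖ ≤ (p:ℝ)^(-η) := pp_le (by rw [Complex.neg_re]; linarith)
    have h3 : Real.log p ≤ (p:ℝ)^η / η := Real.log_le_rpow_div hp.le hη0
    refine (mul_le_mul h3 h1 (norm_nonneg _) (by positivity)).trans (le_of_eq ?_)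
    rw [div_mul_eq_mul_div, ← Real.rpow_add hp, add_neg_cancel, Real.rpow_zero, one_div]

lemma GG_eq {a b d : ℝ} (ha : 1/2 < a) (hb : b < 1) (h : RiemannHypothesis) {ψ : ℂ → ℂ} (hψ : Integrable ψ (volume.restrict (RR a b d)))
    {w : ℂ} (hw : w.re < -2) :
    GG (RR a b d) ψ w = CT (RR a b d) ψ (w + 1) + ∫ s in RR a b d, ψ s * AA (s - w) := by
  have hR : IsCompact (RR a b d) := RR_compact (by linarith) hb
  have hpc : ∀ p : Nat.Primes, Continuous (fun s : ℂ => (p:ℂ)^(-s)) := fun p =>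
    continuous_iff_continuousAt.mpr fun s => (pp_diff p s).differentiableAt.continuousAt
  have hre : ∀ s ∈ RR a b d, 5/2 < (s - w).re := fun s hs => by
    rw [Complex.sub_re]; linarith [hs.1]
  have hint : ∀ p : Nat.Primes, Integrable (fun s => ψ s * (Real.log p * (p:ℂ)^(-(s - w)))) (volume.restrict (RR a b d)) :=
    fun p => mulH_int hR hψ (((hpc p).comp (continuous_sub_right w)).const_smul (Real.log p : ℂ)).continuousOn
  have hsum := hasSum_integral_of_summable_integral_norm hint (by
    refine Summable.of_nonneg_of_le (fun p => integral_nonneg fun _ => norm_nonneg _) (fun p => ?_)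
      ((Nat.Primes.summable_rpow (r := -(3/2)).mpr (by norm_num)).mul_left (∫ s in RR a b d, ‖ψ s‖))
    rw [← integral_mul_const]
    refine integral_mono_ae (hint p).norm (hψ.norm.mul_const _) ?_
    filter_upwards [ae_restrict_mem hR.measurableSet] with s hs
    have hp : (0:ℝ) < p := by exact_mod_cast p.2.pos
    have hl : 0 ≤ Real.log p := Real.log_natCast_nonneg _
    rw [norm_mul, norm_mul, Complex.norm_real, Real.norm_of_nonneg hl]
    refine mul_le_mul_of_nonneg_left ?_ (norm_nonneg _)
    refine (mul_le_mul (Real.log_le_self hp.le) (pp_le (hre s hs).le) (norm_nonneg _) hp.le).trans (le_of_eq ?_)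
    nth_rw 1 [← Real.rpow_one (p:ℝ)]
    rw [← Real.rpow_add hp]; norm_num)
  have e1 : ∀ p : Nat.Primes, ∫ s in RR a b d, ψ s * (Real.log p * (p:ℂ)^(-(s - w))) =
      Del (RR a b d) ψ p * (Real.log p * (p:ℂ)^(-(-w))) := by
    intro p
    have hp0 : (p:ℂ) ≠ 0 := by exact_mod_cast p.2.ne_zero
    rw [Del, ← integral_mul_const]
    congr 1; ext s
    rw [show -(s - w) = -s + -(-w) by ring, Complex.cpow_add _ _ hp0]; ring
  have hA : ContinuousOn (fun s => AA (s - w)) (RR a b d) := fun s hs =>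
    (ContinuousAt.comp (f := fun s : ℂ => s - w) (AA_diff h (by linarith [hre s hs])).continuousAt (by fun_prop)).continuousWithinAt
  have hI : ContinuousOn (fun s => (s - (w + 1))⁻¹) (RR a b d) := by
    refine ContinuousOn.inv₀ (by fun_prop) fun s hs h => ?_
    have h1 := congrArg Complex.re h
    have h2 := hre s hs
    simp at h1 h2; linarith
  rw [GG, ← tsum_congr e1, hsum.tsum_eq, CT, ← integral_add (mulH_int hR hψ hI) (mulH_int hR hψ hA)]
  refine setIntegral_congr_fun hR.measurableSet fun s hs => ?_
  rw [tsum_mul_left, (prime_sum (by linarith [hre s hs])).tsum_eq, one_div, sub_sub, mul_add]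

lemma pre_V {a b d : ℝ} (hb : b < 1) (hd : 0 < d) : IsPreconnected {s : ℂ | s.re < 1 ∧ s ∉ RR a b d} := by
  by_cases hab : a < 1
  swap
  · have : {s : ℂ | s.re < 1 ∧ s ∉ RR a b d} = {s : ℂ | s.re < 1} := by
      ext s
      simp only [RR, Set.mem_setOf_eq, not_and, and_iff_left_iff_imp]
      intro h1 h2; linarith
    rw [this]
    exact (convex_halfSpace_re_lt 1).isPreconnected
  have c1 : IsPreconnected {s : ℂ | s.re < a} := (convex_halfSpace_re_lt a).isPreconnected
  have c2 : IsPreconnected {s : ℂ | s.re < 1 ∧ d < s.im} := ((convex_halfSpace_re_lt 1).inter (convex_halfSpace_im_gt d)).isPreconnected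
  have c3 : IsPreconnected {s : ℂ | s.re < 1 ∧ s.im < -d} := ((convex_halfSpace_re_lt 1).inter (convex_halfSpace_im_lt (-d))).isPreconnected
  have c4 : IsPreconnected {s : ℂ | s.re < 1 ∧ b < s.re} := ((convex_halfSpace_re_lt 1).inter (convex_halfSpace_re_gt b)).isPreconnected
  have d1 := c1.union (⟨a - 1, d + 1⟩ : ℂ) (by simp) (by simp; linarith) c2
  have d2 := d1.union (⟨a - 1, -(d + 1)⟩ : ℂ) (Or.inl (by simp)) (by constructor <;> simp <;> linarith) c3
  have d3 := d2.union (⟨(b + 1)/2, d + 1⟩ : ℂ) (Or.inl (Or.inr (by constructor <;> simp; linarith))) (by constructor <;> simp <;> linarith) c4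
  convert d3
  ext s
  simp only [RR, Set.mem_setOf_eq, Set.mem_union, abs_le]
  constructor
  · rintro ⟨h1, h2⟩
    by_contra hn
    push Not at hn
    obtain ⟨⟨⟨n1, n2⟩, n3⟩, n4⟩ := hn
    exact h2 ⟨n1, n4 h1, n3 h1, n2 h1⟩
  · rintro (((h | ⟨h, h'⟩) | ⟨h, h'⟩) | ⟨h, h'⟩)
    · exact ⟨by linarith, fun hh => by linarith [hh.1]⟩
    · exact ⟨by linarith, fun hh => by linarith [hh.2.2.2]⟩
    · exact ⟨by linarith, fun hh => by linarith [hh.2.2.1]⟩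
    · exact ⟨by linarith, fun hh => by linarith [hh.2.1]⟩

theorem CT_zero {a b d : ℝ} (ha : 1/2 < a) (hb : b < 1) (hd : 0 < d) (h : RiemannHypothesis) {ψ : ℂ → ℂ}
    (hψ : Integrable ψ (volume.restrict (RR a b d))) (hs : Summable fun p => ‖Del (RR a b d) ψ p‖) {w : ℂ} (hw : w ∉ RR a b d) :
    CT (RR a b d) ψ w = 0 := by
  have hR : IsCompact (RR a b d) := RR_compact (by linarith) hb
  set R := RR a b d with hRdef
  set L : ℂ → ℂ := fun v => GG R ψ (v - 1) - ∫ s in R, ψ s * AA (s - (v - 1)) with hL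
  have hLd : ∀ v : ℂ, v.re < 1 → DifferentiableAt ℂ L v := by
    intro v hv
    have h1 : DifferentiableAt ℂ (fun v : ℂ => v - 1) v := by fun_prop
    refine DifferentiableAt.sub ?_ ?_
    · exact DifferentiableAt.comp v (f := fun v : ℂ => v - 1) (GG_diff hs (by simp; linarith)) h1
    · refine DifferentiableAt.comp v (f := fun v : ℂ => v - 1) (g := fun w => ∫ s in R, ψ s * AA (s - w)) ?_ h1
      refine par_diff hR hψ (U := {z : ℂ | 1/2 < z.re}) (isOpen_lt continuous_const Complex.continuous_re)
        (fun z hz => AA_diff h hz) fun s hs => ?_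
      show 1/2 < (s - (v - 1)).re
      simp only [Complex.sub_re, Complex.one_re]
      linarith [hs.1]
  have hVo : IsOpen {s : ℂ | s.re < 1 ∧ s ∉ R} :=
    (isOpen_lt Complex.continuous_re continuous_const).inter hR.isClosed.isOpen_compl
  have heq : Set.EqOn L (CT R ψ) {s : ℂ | s.re < 1 ∧ s ∉ R} := by
    have hnot : ∀ z : ℂ, z.re < -1 → z ∉ R := fun z hz hh => by linarith [hh.1]
    refine AnalyticOnNhd.eqOn_of_preconnected_of_eventuallyEq (𝕜 := ℂ) (z₀ := (-2 : ℂ)) ?_ ?_ (pre_V hb hd) ?_ ?_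
    · exact DifferentiableOn.analyticOnNhd (fun z hz => (hLd z hz.1).differentiableWithinAt) hVo
    · exact DifferentiableOn.analyticOnNhd (fun z hz => (CT_diff hR hψ hz.2).differentiableWithinAt) hVo
    · exact ⟨by simp; norm_num, hnot _ (by simp)⟩
    · filter_upwards [(isOpen_lt Complex.continuous_re continuous_const).mem_nhds (show (-2:ℂ).re < -1 by simp)] with v hv
      have hv : v.re < -1 := hv
      simp only [hL, hRdef]
      rw [GG_eq ha hb h hψ (by simp; linarith)]
      simp
  classical
  set F : ℂ → ℂ := fun z => if z.re < 1 then L z else CT R ψ z with hF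
  have hFC : ∀ z, z ∉ R → F z = CT R ψ z := by
    intro z hz
    simp only [hF]
    split_ifs with h1
    · exact heq ⟨h1, hz⟩
    · rfl
  have hFd : Differentiable ℂ F := by
    intro z
    by_cases hz : z.re < 1
    · refine (hLd z hz).congr_of_eventuallyEq ?_
      filter_upwards [(isOpen_lt Complex.continuous_re continuous_const).mem_nhds (show z.re < 1 from hz)] with v hv
      exact if_pos hv
    · have hzR : z ∉ R := fun hh => by linarith [hh.2.1]
      refine (CT_diff hR hψ hzR).congr_of_eventuallyEq ?_
      filter_upwards [hR.isClosed.isOpen_compl.mem_nhds hzR] with v hv using hFC v hv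
  have hlim : Tendsto F (cocompact ℂ) (nhds 0) := by
    refine (CT_lim hR hψ).congr' ?_
    filter_upwards [hR.compl_mem_cocompact] with v hv using (hFC v hv).symm
  rw [← hFC w hw]
  exact hFd.apply_eq_of_tendsto_cocompact w hlim

lemma int_zero {R : Set ℂ} (hR : IsCompact R) {ψ : ℂ → ℂ} (hψ : Integrable ψ (volume.restrict R))
    (hC : ∀ w, w ∉ R → CT R ψ w = 0) {c : ℂ} {ρ0 : ℝ} (h0 : 0 < ρ0) (hRb : R ⊆ Metric.ball c ρ0) {g : ℂ → ℂ}
    (hg : DifferentiableOn ℂ g (Metric.ball c ρ0)) : ∫ s in R, ψ s * g s = 0 := by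
  obtain ⟨ρ, ⟨hρ, hρ0⟩, hsub⟩ := exists_pos_lt_subset_ball h0 hR.isClosed hRb
  have hcl : Metric.closedBall c ρ ⊆ Metric.ball c ρ0 := Metric.closedBall_subset_ball hρ0
  have hgd : DiffContOnCl ℂ g (Metric.ball c ρ) := by
    refine (hg.mono ?_).diffContOnCl
    rw [closure_ball _ hρ.ne']; exact hcl
  set k : ℂ → ℝ → ℂ := fun s θ => ψ s * ((2 * Real.pi * I)⁻¹ * (deriv (circleMap c ρ) θ * ((circleMap c ρ θ - s)⁻¹ * g (circleMap c ρ θ)))) with hk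
  have hs : ∀ θ, circleMap c ρ θ ∈ Metric.closedBall c ρ := fun θ => circleMap_mem_closedBall c hρ.le θ
  have hnot : ∀ θ, circleMap c ρ θ ∉ R := fun θ h => by
    have h1 := hsub h
    have h2 := circleMap_mem_sphere c hρ.le θ
    rw [Metric.mem_ball] at h1; rw [Metric.mem_sphere] at h2; linarith
  have e1 : ∀ s ∈ R, ψ s * g s = ∫ θ in Set.Ioc 0 (2 * Real.pi), k s θ := by
    intro s hs
    have := hgd.two_pi_i_inv_smul_circleIntegral_sub_inv_smul (hsub hs)
    rw [← this, circleIntegral, intervalIntegral.integral_of_le Real.two_pi_pos.le]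
    simp only [hk, smul_eq_mul, integral_const_mul]
  have hcont : ContinuousOn (fun x : ℂ × ℝ => (2 * Real.pi * I)⁻¹ * (deriv (circleMap c ρ) x.2 * ((circleMap c ρ x.2 - x.1)⁻¹ * g (circleMap c ρ x.2)))) (R ×ˢ Set.Icc 0 (2 * Real.pi)) := by
    have hcm : Continuous (circleMap c ρ) := continuous_circleMap c ρ
    refine continuousOn_const.mul (ContinuousOn.mul ?_ (ContinuousOn.mul ?_ ?_))
    · simp only [deriv_circleMap]
      have := continuous_circleMap 0 ρ
      fun_prop
    · refine ContinuousOn.inv₀ (by fun_prop) fun x hx h => hnot x.2 ?_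
      rw [sub_eq_zero] at h; rw [h]; exact hx.1
    · exact hg.continuousOn.comp (by fun_prop) fun x hx => hcl (hs x.2)
  have hint : Integrable (Function.uncurry k) ((volume.restrict R).prod (volume.restrict (Set.Ioc 0 (2 * Real.pi)))) := by
    have hKc := hR.prod (isCompact_Icc (a := (0:ℝ)) (b := 2 * Real.pi))
    obtain ⟨M, hM⟩ := hKc.exists_bound_of_continuousOn hcont
    have hms : MeasurableSet (R ×ˢ Set.Ioc 0 (2 * Real.pi)) := hR.measurableSet.prod measurableSet_Ioc
    have hss : R ×ˢ Set.Ioc 0 (2 * Real.pi) ⊆ R ×ˢ Set.Icc 0 (2 * Real.pi) := Set.prod_mono le_rfl Set.Ioc_subset_Icc_self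
    refine (hψ.comp_fst _).mul_bdd (c := M) ?_ ?_
    · rw [Measure.prod_restrict]
      exact (hcont.mono hss).aestronglyMeasurable hms
    · rw [Measure.prod_restrict]
      exact (ae_restrict_mem hms).mono fun x hx => hM x (hss hx)
  rw [setIntegral_congr_fun hR.measurableSet e1, integral_integral_swap hint]
  refine integral_eq_zero_of_ae (ae_of_all _ fun θ => ?_)
  have := hC _ (hnot θ)
  rw [CT] at this
  simp only [hk, Pi.zero_apply]
  calc _ = ∫ s in R, (ψ s * (s - circleMap c ρ θ)⁻¹) * (-((2 * Real.pi * I)⁻¹ * (deriv (circleMap c ρ) θ * g (circleMap c ρ θ)))) := by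
        congr 1; ext s
        rw [← neg_sub (circleMap c ρ θ) s, inv_neg]; ring
    _ = 0 := by rw [integral_mul_const, this, zero_mul]

lemma exists_log {c : ℂ} {r : ℝ} (hr : 0 < r) {h : ℂ → ℂ} (hd : DifferentiableOn ℂ h (Metric.ball c r))
    (h0 : ∀ z ∈ Metric.ball c r, h z ≠ 0) :
    ∃ g : ℂ → ℂ, DifferentiableOn ℂ g (Metric.ball c r) ∧ ∀ z ∈ Metric.ball c r, exp (g z) = h z := by
  have hdd : DifferentiableOn ℂ (fun z => deriv h z / h z) (Metric.ball c r) := (hd.deriv Metric.isOpen_ball).div hd h0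
  obtain ⟨G, hG⟩ := hdd.isExactOn_ball
  have hc := Metric.mem_ball_self (x := c) hr
  refine ⟨fun z => G z - G c + log (h c), fun z hz => (((hG z hz).differentiableAt.sub_const _).add_const _).differentiableWithinAt, fun z hz => ?_⟩
  have hh : ∀ z ∈ Metric.ball c r, HasDerivAt h (deriv h z) z := fun z hz => ((hd z hz).differentiableAt (Metric.isOpen_ball.mem_nhds hz)).hasDerivAt
  have hder : ∀ z ∈ Metric.ball c r, HasDerivAt (fun z => h z * exp (-(G z))) 0 z := by
    intro z hz
    refine ((hh z hz).mul (hG z hz).neg.cexp).congr_deriv ?_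
    have := h0 z hz
    simp only [Pi.neg_apply]
    field_simp
    ring
  have key := (convex_ball c r).is_const_of_fderivWithin_eq_zero (𝕜 := ℂ) (f := fun z => h z * exp (-(G z)))
    (fun z hz => (hder z hz).differentiableAt.differentiableWithinAt) (fun z hz => by
      rw [fderivWithin_of_isOpen Metric.isOpen_ball hz, (hder z hz).hasFDerivAt.fderiv]; ext; simp) hz hc
  rw [exp_add, exp_log (h0 c hc), exp_sub]
  rw [exp_neg, exp_neg] at key
  have h1 := exp_ne_zero (G z); have h2 := exp_ne_zero (G c)
  field_simp at key ⊢
  linear_combination -key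

lemma good_g (h : RiemannHypothesis) {a b d : ℝ} (ha : 1/2 < a) (hab : a < b) (hb : b < 1) (hd : 0 < d) (N : ℕ) :
    ∃ g : ℂ → ℂ, (∀ s ∈ RR a b d, DifferentiableAt ℂ g s) ∧ (∀ s ∈ RR a b d, exp (g s) = MP N s * riemannZeta s) ∧
      ∀ ψ : ℂ → ℂ, Integrable ψ (volume.restrict (RR a b d)) → (∀ w, w ∉ RR a b d → CT (RR a b d) ψ w = 0) →
        ∫ s in RR a b d, ψ s * g s = 0 := by
  have hR : IsCompact (RR a b d) := RR_compact (by linarith) hb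
  obtain ⟨X, hX1, hX⟩ : ∃ X : ℝ, 1 < X ∧ 1 + d^2 < X * (2 * a - 1) := by
    have h1 : 0 < 2 * a - 1 := by linarith
    refine ⟨(1 + d^2) / (2*a-1) + 2, by have : 0 < (1 + d^2) / (2*a-1) := by positivity
                                        linarith, ?_⟩
    rw [add_mul, div_mul_cancel₀ _ h1.ne']; linarith
  obtain ⟨Y, hY0, hY⟩ : ∃ Y : ℝ, 0 < Y ∧ d^2 ≤ Y * (1 - b) := by
    have h1 : 0 < 1 - b := by linarith
    refine ⟨d^2 / (1 - b), by positivity, ?_⟩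
    rw [div_mul_cancel₀ _ h1.ne']
  have hnorm : ∀ (z : ℂ) (u r : ℝ), 0 < r → (z ∈ Metric.ball (u:ℂ) r ↔ (z.re - u)^2 + z.im^2 < r^2) := by
    intro z u r hr
    rw [Metric.mem_ball, dist_eq_norm, ← sq_lt_sq₀ (norm_nonneg _) hr.le, Complex.sq_norm, Complex.normSq_apply]
    simp [sq]
  have him : ∀ s ∈ RR a b d, s.im^2 ≤ d^2 := fun s hs => sq_le_sq' (abs_le.mp hs.2.2).1 (abs_le.mp hs.2.2).2
  have hs1 : RR a b d ⊆ Metric.ball (X:ℂ) (X - 1/2) := by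
    intro s hs
    rw [hnorm _ _ _ (by linarith)]
    nlinarith [him s hs, hs.1, hs.2.1]
  have hs2 : RR a b d ⊆ Metric.ball ((-Y:ℝ):ℂ) (Y + 1) := by
    intro s hs
    rw [hnorm _ _ _ (by linarith)]
    nlinarith [him s hs, hs.1, hs.2.1]
  have hr1 : ∀ z ∈ Metric.ball (X:ℂ) (X - 1/2), 1/2 < z.re := by
    intro z hz
    rw [hnorm _ _ _ (by linarith)] at hz
    have := abs_lt_of_sq_lt_sq (show (z.re - X)^2 < (X-1/2)^2 by nlinarith [sq_nonneg z.im]) (by linarith)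
    linarith [(abs_lt.mp this).1]
  have hr2 : ∀ z ∈ Metric.ball ((-Y:ℝ):ℂ) (Y + 1), z.re < 1 := by
    intro z hz
    rw [hnorm _ _ _ (by linarith)] at hz
    have := abs_lt_of_sq_lt_sq (show (z.re - -Y)^2 < (Y+1)^2 by nlinarith [sq_nonneg z.im]) (by linarith)
    linarith [(abs_lt.mp this).2]
  obtain ⟨g1, hg1, he1⟩ := exists_log (c := (X:ℂ)) (r := X - 1/2) (by linarith) (h := fun z => zs z * MP N z)
    (fun z hz => ((zs_diff z).mul (MP_diff N z)).differentiableWithinAt) (fun z hz => by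
      refine mul_ne_zero (zs_ne_zero_of_RH h (hr1 z hz)) (Finset.prod_ne_zero_iff.mpr fun p hp => ?_)
      exact one_sub_ne (p := ⟨p, Nat.prime_of_mem_primesBelow hp⟩) (hr1 z hz).le)
  have hl : ∀ z ∈ Metric.ball ((-Y:ℝ):ℂ) (Y + 1), DifferentiableAt ℂ (fun z => log (1 - z) - Real.pi * I) z := by
    intro z hz
    refine DifferentiableAt.sub_const ?_ _
    refine DifferentiableAt.clog (by fun_prop) (Or.inl ?_)
    simp; exact hr2 z hz
  have hd1 : ∀ s ∈ RR a b d, DifferentiableAt ℂ g1 s := fun s hs =>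
    (hg1 s (hs1 hs)).differentiableAt (Metric.isOpen_ball.mem_nhds (hs1 hs))
  refine ⟨fun z => g1 z - (log (1 - z) - Real.pi * I), fun s hs => (hd1 s hs).sub (hl s (hs2 hs)), fun s hs => ?_, fun ψ hψ hC => ?_⟩
  · have h1 : s ≠ 1 := fun hh => by
      have := hs.2.1
      rw [hh] at this; simp at this; linarith
    have h2 : 1 - s ≠ 0 := sub_ne_zero.mpr h1.symm
    rw [exp_sub, he1 s (hs1 hs), exp_sub, exp_log h2, exp_pi_mul_I, zs_of_ne h1]
    field_simp
    ring
  · simp only [mul_sub (ψ _) (g1 _)]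
    rw [integral_sub (mulH_int hR hψ fun s hs => (hd1 s hs).continuousAt.continuousWithinAt)
      (mulH_int hR hψ fun s hs => (hl s (hs2 hs)).continuousAt.continuousWithinAt)]
    rw [int_zero hR hψ hC (by linarith) hs1 hg1, int_zero hR hψ hC (by linarith) hs2
      fun s hs => (hl s hs).differentiableWithinAt, sub_zero]

open scoped ENNReal InnerProductSpace

lemma memLp_cont {R : Set ℂ} (hR : IsCompact R) {f : ℂ → ℂ} (hf : ContinuousOn f R) : MemLp f 2 (volume.restrict R) := by
  obtain ⟨M, hM⟩ := hR.exists_bound_of_continuousOn hf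
  have : IsFiniteMeasure (volume.restrict R) := isFiniteMeasure_restrict.mpr hR.measure_ne_top
  exact MemLp.of_bound (hf.aestronglyMeasurable hR.measurableSet) M ((ae_restrict_mem hR.measurableSet).mono hM)

lemma inner_toLp {μ : Measure ℂ} (φ : Lp ℂ 2 μ) {f : ℂ → ℂ} (hf : MemLp f 2 μ) :
    ⟪φ, hf.toLp f⟫_ℂ = ∫ s, (starRingEnd ℂ) (φ s) * f s ∂μ := by
  rw [L2.inner_def]
  refine integral_congr_ae ?_
  filter_upwards [hf.coeFn_toLp] with s hs
  rw [hs, RCLike.inner_apply, mul_comm]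

lemma norm_toLp_sq {μ : Measure ℂ} {f : ℂ → ℂ} (hf : MemLp f 2 μ) : ‖hf.toLp f‖^2 = ∫ s, ‖f s‖^2 ∂μ := by
  have h1 := inner_toLp (hf.toLp f) hf
  rw [inner_self_eq_norm_sq_to_K] at h1
  have h2 : ∫ s, (starRingEnd ℂ) (hf.toLp f s) * f s ∂μ = ((∫ s, ‖f s‖^2 ∂μ : ℝ) : ℂ) := by
    rw [← integral_complex_ofReal]
    refine integral_congr_ae ?_
    filter_upwards [hf.coeFn_toLp] with s hs
    rw [hs, Complex.conj_mul']; push_cast; rfl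
  rw [h2] at h1
  exact Complex.ofReal_injective (by simpa using h1)

lemma L2_phases (h : RiemannHypothesis) {a b d : ℝ} (ha : 1/2 < a) (hb : b < 1) (hd : 0 < d) {g : ℂ → ℂ}
    (hg : ∀ s ∈ RR a b d, DifferentiableAt ℂ g s)
    (hg0 : ∀ ψ : ℂ → ℂ, Integrable ψ (volume.restrict (RR a b d)) → (∀ w, w ∉ RR a b d → CT (RR a b d) ψ w = 0) →
        ∫ s in RR a b d, ψ s * g s = 0) {N : ℕ} (hN : 1 ≤ N) {ε : ℝ} (hε : 0 < ε)
    (hx : ∀ F : Finset ℕ, (∀ n ∈ F, N ≤ n) → ∑ n ∈ F, volume.real (RR a b d) * (n:ℝ)^(-(2*a)) ≤ ε^2) :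
    ∃ P ≥ N, ∃ ω : ℕ → ℂ, (∀ n, ‖ω n‖ = 1) ∧
      ∫ s in RR a b d, ‖∑ n ∈ (Finset.Ico N P).filter Nat.Prime, ω n * (n:ℂ)^(-s) - g s‖^2 ≤ (2 * ε)^2 := by
  classical
  have hR : IsCompact (RR a b d) := RR_compact (by linarith) hb
  set R := RR a b d with hRdef
  have hfin : IsFiniteMeasure (volume.restrict R) := isFiniteMeasure_restrict.mpr hR.measure_ne_top
  set f : ℕ → ℂ → ℂ := fun n s => if n.Prime then (n:ℂ)^(-s) else 0 with hf
  have hfc : ∀ n, ContinuousOn (f n) R := by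
    intro n
    by_cases hn : n.Prime
    · simp only [hf, if_pos hn]
      have : Continuous fun s : ℂ => (n:ℂ)^(-s) := by
        refine Continuous.const_cpow (by fun_prop) (Or.inl ?_)
        exact_mod_cast hn.ne_zero
      exact this.continuousOn
    · simp only [hf, if_neg hn]; fun_prop
  have hgc : ContinuousOn g R := fun s hs => (hg s hs).continuousAt.continuousWithinAt
  have hfm := fun n => memLp_cont hR (hfc n)
  have hgm := memLp_cont hR hgc
  have hA : ∀ φ : Lp ℂ 2 (volume.restrict R), Summable (fun n => ‖⟪φ, (hfm n).toLp (f n)⟫_ℂ‖) → ⟪φ, hgm.toLp g⟫_ℂ = 0 := by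
    intro φ hφ
    rw [inner_toLp]
    have hφi : Integrable (fun s => (starRingEnd ℂ) (φ s)) (volume.restrict R) :=
      ((Lp.memLp φ).star).integrable (by norm_num)
    refine hg0 _ hφi fun w hw => CT_zero ha hb hd h hφi ?_ hw
    refine (hφ.comp_injective (i := fun p : Nat.Primes => (p:ℕ)) Subtype.val_injective).congr fun p => ?_
    simp only [Function.comp, inner_toLp, Del, hf, if_pos p.2]
    rfl
  have hB : ∀ F : Finset ℕ, (∀ n ∈ F, N ≤ n) → ∑ n ∈ F, ‖(hfm n).toLp (f n)‖^2 ≤ ε^2 := by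
    intro F hF
    refine (Finset.sum_le_sum fun n hn => ?_).trans (hx F hF)
    rw [norm_toLp_sq]
    refine (integral_mono_of_nonneg (ae_of_all _ fun s => by positivity) (integrable_const ((n:ℝ)^(-(2*a)))) ?_).trans ?_
    · filter_upwards [ae_restrict_mem hR.measurableSet] with s hs
      simp only [hf]
      split_ifs with hp
      · rw [norm_npow hp.one_le, ← Real.rpow_natCast, ← Real.rpow_mul (by positivity)]
        refine Real.rpow_le_rpow_of_exponent_le (by exact_mod_cast hp.one_le) ?_
        have := hs.1
        push_cast; linarith
      · simp; positivity
    · simp [measureReal_def]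
  obtain ⟨P, hP, ω, hω, hb⟩ := hilbert_dense (H := Lp ℂ 2 (volume.restrict R)) (fun n => (hfm n).toLp (f n)) (hgm.toLp g) N
    hA hε hB
  refine ⟨P, hP, ω, hω, ?_⟩
  have hSc : ContinuousOn (fun s => ∑ n ∈ (Finset.Ico N P).filter Nat.Prime, ω n * (n:ℂ)^(-s) - g s) R := by
    refine ContinuousOn.sub (continuousOn_finsetSum _ fun n hn => ?_) hgc
    have := hfc n
    simp only [hf, if_pos (Finset.mem_filter.mp hn).2] at this
    exact continuousOn_const.mul this
  have e : (memLp_cont hR hSc).toLp _ = ∑ n ∈ Finset.Ico N P, ω n • (hfm n).toLp (f n) - hgm.toLp g := by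
    apply Lp.ext
    have h1 : ∀ᵐ s ∂(volume.restrict R), ∀ n, ((hfm n).toLp (f n) : ℂ → ℂ) s = f n s := ae_all_iff.mpr fun n => (hfm n).coeFn_toLp
    have h2 : ∀ᵐ s ∂(volume.restrict R), ∀ n, ((ω n • (hfm n).toLp (f n) : Lp ℂ 2 (volume.restrict R)) : ℂ → ℂ) s = ω n * ((hfm n).toLp (f n) : ℂ → ℂ) s :=
      ae_all_iff.mpr fun n => Lp.coeFn_smul _ _
    filter_upwards [(memLp_cont hR hSc).coeFn_toLp, hgm.coeFn_toLp, h1, h2,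
      Lp.coeFn_sub (∑ n ∈ Finset.Ico N P, ω n • (hfm n).toLp (f n)) (hgm.toLp g),
      Lp.coeFn_finsetSum (Finset.Ico N P) (fun n => ω n • (hfm n).toLp (f n))] with s h3 h4 h5 h6 h7 h8
    rw [h3, h7, Pi.sub_apply, h4, h8, Finset.sum_apply, Finset.sum_filter]
    congr 1
    refine Finset.sum_congr rfl fun n _ => ?_
    rw [h6, h5]; simp only [hf]; split_ifs <;> simp
  rw [← norm_toLp_sq (memLp_cont hR hSc), e]
  exact pow_le_pow_left₀ (norm_nonneg _) hb 2

lemma factor_le {x : ℂ} (hx : ‖x‖ ≤ 1) : ‖(1 - x) * exp x - 1‖ ≤ 3 * ‖x‖^2 := by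
  have h1 := Complex.norm_exp_sub_one_sub_id_le hx
  have h2 : ‖1 - x‖ ≤ 2 := (norm_sub_le _ _).trans (by rw [norm_one]; linarith)
  calc _ = ‖-(x^2) + (1 - x) * (exp x - 1 - x)‖ := by ring_nf
    _ ≤ ‖x‖^2 + 2 * ‖x‖^2 := by
      refine (norm_add_le _ _).trans ?_
      rw [norm_neg, norm_pow, norm_mul]
      gcongr
    _ = _ := by ring

lemma PH (h : RiemannHypothesis) (a b d : ℝ) (ha : 1/2 < a) (hab : a < b) (hb : b < 1) (hd : 0 < d) (K : Set ℂ) (r : ℝ) (hr : 0 < r)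
    (hK : ∀ s ∈ K, Metric.closedBall s r ⊆ RR a b d) (δ : ℝ) (hδ : δ > 0) (N : ℕ) :
    ∃ P ≥ N, ∃ ω : ℕ → ℂ, (∀ p, ‖ω p‖ = 1) ∧ ∀ s ∈ K, ‖(∏ p ∈ P.primesBelow, (1 - ω p * (p:ℂ)^(-s))) * riemannZeta s - 1‖ ≤ δ := by
  have hR : IsCompact (RR a b d) := RR_compact (by linarith) hb
  obtain ⟨η, hη, hη1, hηδ⟩ : ∃ η : ℝ, 0 < η ∧ η ≤ 1 ∧ 3 * η ≤ δ :=
    ⟨min 1 (δ/3), by positivity, min_le_left _ _, by linarith [min_le_right 1 (δ/3)]⟩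
  set ε := r * η / 4 with hε
  have hε0 : 0 < ε := by positivity
  set V := volume.real (RR a b d) with hV
  have hV0 : 0 ≤ V := measureReal_nonneg
  obtain ⟨N0, hN0, hF⟩ := tail_small ha (show 0 < min (η/6) (ε^2/(V+1)) by positivity)
  set M := max N N0 with hM
  have hNM : N ≤ M := le_max_left _ _
  have hN0M : N0 ≤ M := le_max_right _ _
  obtain ⟨g, hg, hge, hg0⟩ := good_g h ha hab hb hd M
  obtain ⟨P, hP, ω, hω, hint⟩ := L2_phases h ha hb hd hg hg0 (hN0.trans hN0M) hε0 (fun F hFM => by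
    rw [← Finset.mul_sum]
    refine (mul_le_mul_of_nonneg_left ((hF F fun n hn => hN0M.trans (hFM n hn)).trans (min_le_right _ _)) hV0).trans ?_
    rw [mul_div_assoc', div_le_iff₀ (by positivity)]
    nlinarith [sq_nonneg ε])
  refine ⟨P, hNM.trans hP, fun p => if p < M then 1 else ω p, fun p => by
    simp only; split_ifs
    · simp
    · exact hω p, fun s hs => ?_⟩
  have hsR : s ∈ RR a b d := hK s hs (Metric.mem_closedBall_self hr.le)
  set S := (Finset.Ico M P).filter Nat.Prime with hS
  have hSm : ∀ p ∈ S, M ≤ p ∧ p.Prime := fun p hp => by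
    rw [hS, Finset.mem_filter, Finset.mem_Ico] at hp; exact ⟨hp.1.1, hp.2⟩
  set x : ℕ → ℂ := fun p => ω p * (p:ℂ)^(-s) with hx
  have hsplit : ∏ p ∈ P.primesBelow, (1 - (if p < M then 1 else ω p) * (p:ℂ)^(-s)) = MP M s * ∏ p ∈ S, (1 - x p) := by
    rw [MP, hS, Nat.primesBelow, Nat.primesBelow, Finset.prod_filter, Finset.prod_filter, Finset.prod_filter,
      ← Finset.prod_range_mul_prod_Ico _ hP]
    congr 1
    · refine Finset.prod_congr rfl fun p hp => ?_
      rw [if_pos (Finset.mem_range.mp hp), one_mul]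
    · refine Finset.prod_congr rfl fun p hp => ?_
      rw [if_neg (Finset.mem_Ico.mp hp).1.not_gt]
  have hxn : ∀ p ∈ S, ‖x p‖ ≤ 1 ∧ ‖x p‖^2 ≤ (p:ℝ)^(-(2*a)) := by
    intro p hp
    have hp1 := (hSm p hp).2.one_le
    have hp1' : (1:ℝ) ≤ p := by exact_mod_cast hp1
    have e : ‖x p‖ = (p:ℝ)^(-s.re) := by rw [hx]; simp only; rw [norm_mul, hω, one_mul, norm_npow hp1]
    have := hsR.1
    rw [e]
    refine ⟨Real.rpow_le_one_of_one_le_of_nonpos hp1' (by linarith), ?_⟩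
    rw [← Real.rpow_natCast, ← Real.rpow_mul (by positivity)]
    refine Real.rpow_le_rpow_of_exponent_le hp1' ?_
    push_cast; linarith
  have hA : ‖∏ p ∈ S, ((1 - x p) * exp (x p)) - 1‖ ≤ η := by
    have h1 := Finset.norm_prod_one_add_sub_one_le S (fun p => (1 - x p) * exp (x p) - 1)
    have h2 : ∑ p ∈ S, ‖(1 - x p) * exp (x p) - 1‖ ≤ η / 2 := by
      calc _ ≤ ∑ p ∈ S, 3 * (p:ℝ)^(-(2*a)) := Finset.sum_le_sum fun p hp =>
            (factor_le (hxn p hp).1).trans (by linarith [(hxn p hp).2])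
        _ ≤ 3 * (η / 6) := by
          rw [← Finset.mul_sum]
          exact mul_le_mul_of_nonneg_left ((hF S fun p hp => hN0M.trans (hSm p hp).1).trans (min_le_left _ _)) (by norm_num)
        _ = _ := by ring
    simp only [add_sub_cancel] at h1
    have h3 : 0 ≤ ∑ p ∈ S, ‖(1 - x p) * exp (x p) - 1‖ := Finset.sum_nonneg fun _ _ => norm_nonneg _
    have h4 := (abs_le.mp (Real.abs_exp_sub_one_le (x := ∑ p ∈ S, ‖(1 - x p) * exp (x p) - 1‖) (by rw [abs_of_nonneg h3]; linarith))).2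
    rw [abs_of_nonneg h3] at h4
    linarith
  have hv : ‖g s - ∑ p ∈ S, x p‖ ≤ η / 2 := by
    have h1 := sq_le_area hr hR (hK s hs) (f := fun s => ∑ n ∈ S, ω n * (n:ℂ)^(-s) - g s) (fun w hw => by
      refine DifferentiableAt.sub (DifferentiableAt.fun_sum fun n hn => ?_) (hg w hw)
      exact ((pp_diff ⟨n, (hSm n hn).2⟩ w).differentiableAt).const_mul _)
    have h2 := h1.trans hint
    rw [norm_sub_rev]
    rw [← mul_pow] at h2
    have h3 := le_of_sq_le_sq h2 (by positivity)
    rw [hε] at h3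
    have h4 : r * ‖∑ n ∈ S, ω n * (n:ℂ)^(-s) - g s‖ ≤ r * (η / 2) := by linarith
    exact le_of_mul_le_mul_left h4 hr
  have hB : ‖exp (g s - ∑ p ∈ S, x p) - 1‖ ≤ η := by
    have := Complex.norm_exp_sub_one_le (x := g s - ∑ p ∈ S, x p) (by linarith)
    linarith
  set A := ∏ p ∈ S, ((1 - x p) * exp (x p)) with hAd
  set B := exp (g s - ∑ p ∈ S, x p) with hBd
  have hAB : (∏ p ∈ P.primesBelow, (1 - (if p < M then 1 else ω p) * (p:ℂ)^(-s))) * riemannZeta s = A * B := by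
    rw [hsplit, mul_right_comm, ← hge s hsR, hAd, hBd, Finset.prod_mul_distrib, ← exp_sum, mul_assoc, ← exp_add]
    rw [add_sub_cancel, mul_comm]
  rw [hAB, show A * B - 1 = (A - 1) * (B - 1) + (A - 1) + (B - 1) by ring]
  have h1 := norm_add₃_le (a := (A - 1) * (B - 1)) (b := A - 1) (c := B - 1)
  have h2 : ‖(A - 1) * (B - 1)‖ ≤ η * 1 := by
    rw [norm_mul]
    exact mul_le_mul hA (hB.trans hη1) (norm_nonneg _) hη.le
  linarith

theorem rh_iff_self_approx_zeta :
    RiemannHypothesis ↔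
      ∀ K : Set ℂ, IsCompact K → K ⊆ strip → IsConnected Kᶜ → ∀ ε : ℝ, 0 < ε →
        0 < lowerDens {τ : ℝ |
          supNorm K (fun s => riemannZeta (s + τ * Complex.I) - riemannZeta s)
            < ENNReal.ofReal ε} := by
  exact ⟨fun h K hK hKs _ ε hε => approx_of_phases (PH h) hK hKs hε, rh_of_approx⟩
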